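/- Let f, h ∈ O_n with μ_X(f) < ∞ and μ_Y(h) < ∞, where X = h^{-1}(0) and Y = f^{-1}(0) are hypersurface germs with isolated singularities (h and f each have an isolated singularity at the origin). Then μ_X(f) − τ_X(f) = μ_Y(h) − τ_Y(h). -/

import Mathlib

open Filter Topology Polynomial

set_option maxHeartbeats 1000000
set_option synthInstance.maxHeartbeats 1000000

noncomputable section

/-- The algebra structure on germs of complex valued functions. -/
instance Filter.Germ.instAlgebraComplex {α : Type*} (l : Filter α) :
    Algebra ℂ (Filter.Germ l ℂ) where
  algebraMap := (Filter.Germ.coeRingHom l).comp (algebraMap ℂ (α → ℂ))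
  commutes' := fun c g => mul_comm _ _
  smul_def' := fun c g => Filter.Germ.inductionOn g fun f => rfl

/-- The local algebra `𝒪ₙ` of germs at `0 ∈ ℂⁿ` of holomorphic functions,
realized as the subalgebra of germs at `0` admitting an analytic representative. -/
def On (n : ℕ) : Subalgebra ℂ (Filter.Germ (𝓝 (0 : Fin n → ℂ)) ℂ) where
  carrier := {g | ∃ f : (Fin n → ℂ) → ℂ,
    AnalyticAt ℂ f 0 ∧ (f : Filter.Germ (𝓝 (0 : Fin n → ℂ)) ℂ) = g}
  mul_mem' := by
    rintro a b ⟨f, hf, rfl⟩ ⟨g, hg, rfl⟩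
    exact ⟨f * g, hf.mul hg, rfl⟩
  add_mem' := by
    rintro a b ⟨f, hf, rfl⟩ ⟨g, hg, rfl⟩
    exact ⟨f + g, hf.add hg, rfl⟩
  algebraMap_mem' := fun c => ⟨fun _ => c, analyticAt_const, rfl⟩

variable {n : ℕ}

/-- Existence of an analytic representative for an element of `𝒪ₙ`. -/
lemma On.exists_rep (g : On n) : ∃ f : (Fin n → ℂ) → ℂ,
    AnalyticAt ℂ f 0 ∧ (f : Filter.Germ (𝓝 (0 : Fin n → ℂ)) ℂ) = (g : Filter.Germ _ ℂ) :=
  g.2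

/-- A chosen analytic representative of a germ in `𝒪ₙ`. -/
def On.rep (g : On n) : (Fin n → ℂ) → ℂ := (On.exists_rep g).choose

lemma On.rep_analyticAt (g : On n) : AnalyticAt ℂ (On.rep g) 0 :=
  (On.exists_rep g).choose_spec.1

lemma On.rep_spec (g : On n) :
    (On.rep g : Filter.Germ (𝓝 (0 : Fin n → ℂ)) ℂ) = (g : Filter.Germ _ ℂ) :=
  (On.exists_rep g).choose_spec.2

/-- Build an element of `𝒪ₙ` from an analytic function. -/
def mkOn {n : ℕ} (f : (Fin n → ℂ) → ℂ) (hf : AnalyticAt ℂ f 0) : On n :=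
  ⟨(f : Filter.Germ (𝓝 (0 : Fin n → ℂ)) ℂ), ⟨f, hf, rfl⟩⟩

/-- The `i`-th partial derivative, as an operation on `𝒪ₙ`. -/
def pd (i : Fin n) (g : On n) : On n :=
  mkOn (fun x => fderiv ℂ (On.rep g) x (Pi.single i 1)) (by
    have h := ((ContinuousLinearMap.apply ℂ ℂ (Pi.single i 1)).analyticAt
      (fderiv ℂ (On.rep g) 0)).comp (On.rep_analyticAt g).fderiv
    exact h)

/-- Restriction of germs at `0` to germs along a finer filter. -/
def restrictGerm {l : Filter (Fin n → ℂ)} (hl : l ≤ 𝓝 (0 : Fin n → ℂ)) :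
    Filter.Germ (𝓝 (0 : Fin n → ℂ)) ℂ →+* Filter.Germ l ℂ where
  toFun g := g.compTendsto id (Filter.tendsto_id'.2 hl)
  map_one' := rfl
  map_mul' a b := Filter.Germ.inductionOn₂ a b fun f g => rfl
  map_zero' := rfl
  map_add' a b := Filter.Germ.inductionOn₂ a b fun f g => rfl

/-- Evaluation of germs restricted along `l ≤ 𝓝 0`, as a ring homomorphism on `𝒪ₙ`. -/
def restrictOn (n : ℕ) {l : Filter (Fin n → ℂ)} (hl : l ≤ 𝓝 (0 : Fin n → ℂ)) :
    On n →+* Filter.Germ l ℂ :=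
  (restrictGerm hl).comp (On n).val.toRingHom

/-- The ideal `I_X ⊆ 𝒪ₙ` of germs vanishing on a set `X` near `0`. -/
def IX (n : ℕ) (X : Set (Fin n → ℂ)) : Ideal (On n) :=
  RingHom.ker (restrictOn n (nhdsWithin_le_nhds (s := X)))

/-- The maximal ideal `𝔪 ⊂ 𝒪ₙ` of germs vanishing at the origin. -/
def mId (n : ℕ) : Ideal (On n) :=
  RingHom.ker (restrictOn n (pure_le_nhds (0 : Fin n → ℂ)))

/-- `X` is the germ at `0` of an analytic variety: `0 ∈ X` and, near `0`, `X` coincides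
with the common zero locus of finitely many holomorphic functions. -/
def IsAnalyticGermAt0 (n : ℕ) (X : Set (Fin n → ℂ)) : Prop :=
  (0 : Fin n → ℂ) ∈ X ∧
    ∃ (m : ℕ) (g : Fin m → (Fin n → ℂ) → ℂ),
      (∀ j, AnalyticAt ℂ (g j) 0) ∧
      ∀ᶠ x in 𝓝 (0 : Fin n → ℂ), (x ∈ X ↔ ∀ j, g j x = 0)

/-- The action `δ(g) = Σ δᵢ ∂g/∂xᵢ` of a vector field `δ ∈ Θ ≅ 𝒪ₙⁿ` on `g ∈ 𝒪ₙ`. -/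
def applyVF (δ : Fin n → On n) (g : On n) : On n := ∑ i, δ i * pd i g

lemma applyVF_add (a b : Fin n → On n) (g : On n) :
    applyVF (a + b) g = applyVF a g + applyVF b g := by
  simp [applyVF, add_mul, Finset.sum_add_distrib]

lemma applyVF_smul (c : On n) (a : Fin n → On n) (g : On n) :
    applyVF (c • a) g = c * applyVF a g := by
  simp [applyVF, Finset.mul_sum, smul_eq_mul, mul_assoc]

/-- For fixed `f`, the map `δ ↦ δ(f)` as an `𝒪ₙ`-linear map `Θ → 𝒪ₙ`. -/
def gradMap (n : ℕ) (f : On n) : (Fin n → On n) →ₗ[On n] On n where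
  toFun δ := applyVF δ f
  map_add' a b := applyVF_add a b f
  map_smul' c a := applyVF_smul c a f

/-- The module `Θ_X` of logarithmic vector fields of `X`, i.e. vector fields
preserving the ideal `I_X`. -/
def ThetaX (n : ℕ) (X : Set (Fin n → ℂ)) : Submodule (On n) (Fin n → On n) where
  carrier := {δ | ∀ g ∈ IX n X, applyVF δ g ∈ IX n X}
  add_mem' := by
    intro a b ha hb g hg
    rw [applyVF_add]
    exact Ideal.add_mem _ (ha g hg) (hb g hg)
  zero_mem' := by
    intro g hg
    have h0 : applyVF (0 : Fin n → On n) g = 0 := by simp [applyVF]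
    rw [h0]; exact Ideal.zero_mem _
  smul_mem' := by
    intro c a ha g hg
    rw [applyVF_smul]
    exact Ideal.mul_mem_left _ _ (ha g hg)

/-- The module `Θ_Y` of vector fields tangent to the hypersurface `Y = f⁻¹(0)`,
i.e. `δ(f) ∈ ⟨f⟩`. -/
def ThetaF (n : ℕ) (f : On n) : Submodule (On n) (Fin n → On n) :=
  Submodule.comap (gradMap n f) (Ideal.span {f})

/-- The module `H_Y` of Hamiltonian vector fields of `f`, i.e. `δ(f) = 0`. -/
def HamF (n : ℕ) (f : On n) : Submodule (On n) (Fin n → On n) :=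
  LinearMap.ker (gradMap n f)

/-- The Bruce–Roberts ideal `df(Θ_X) ⊆ 𝒪ₙ`. -/
def BRIdeal (n : ℕ) (X : Set (Fin n → ℂ)) (f : On n) : Ideal (On n) :=
  Submodule.map (gradMap n f) (ThetaX n X)

/-- The Jacobian ideal `J(f) = ⟨∂f/∂x₁, …, ∂f/∂xₙ⟩`. -/
def Jac (n : ℕ) (f : On n) : Ideal (On n) :=
  Ideal.span (Set.range fun i => pd i f)

/-- The ideal `J(f,h)` generated by the `2×2` minors of the Jacobian matrix of `(f,h)`. -/
def Jmin (n : ℕ) (f h : On n) : Ideal (On n) :=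
  Ideal.span (Set.range fun p : Fin n × Fin n => pd p.1 f * pd p.2 h - pd p.2 f * pd p.1 h)

/-- The Milnor number `μ(f)`. -/
def mu (n : ℕ) (f : On n) : ℕ := Module.finrank ℂ (On n ⧸ Jac n f)

/-- The Tjurina number `τ(f)`. -/
def tau (n : ℕ) (f : On n) : ℕ :=
  Module.finrank ℂ (On n ⧸ (Jac n f + Ideal.span {f}))

/-- The Bruce–Roberts Milnor number `μ_X(f)`. -/
def muX (n : ℕ) (X : Set (Fin n → ℂ)) (f : On n) : ℕ :=
  Module.finrank ℂ (On n ⧸ BRIdeal n X f)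

/-- The Bruce–Roberts Tjurina number `τ_X(f)`. -/
def tauX (n : ℕ) (X : Set (Fin n → ℂ)) (f : On n) : ℕ :=
  Module.finrank ℂ (On n ⧸ (BRIdeal n X f + Ideal.span {f}))

/-- The value at the origin of a germ in `𝒪ₙ`. -/
def ev0 (g : On n) : ℂ := On.rep g 0

/-- The linear part `j¹δ` of a vector field `δ`, as the matrix `(∂δⱼ/∂xᵢ)(0)`. -/
def linPart (δ : Fin n → On n) : Matrix (Fin n) (Fin n) ℂ :=
  Matrix.of fun i j => ev0 (pd i (δ j))

/-- The eigenvalues (with multiplicities) of the linear part of `δ` are given by `w`. -/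
def EigsEq (δ : Fin n → On n) (w : Fin n → ℚ) : Prop :=
  (linPart δ).charpoly = ∏ i, (Polynomial.X - Polynomial.C ((w i : ℂ)))

/-- The germ at `0` of the coordinate function `xᵢ`. -/
def coordG (i : Fin n) : On n :=
  mkOn (fun x : Fin n → ℂ => x i)
    ((ContinuousLinearMap.proj (R := ℂ) (φ := fun _ : Fin n => ℂ) i).analyticAt _)

/-- `g` is quasihomogeneous of degree `d` with respect to the weights `w` (in the given
coordinates): the Euler identity `Σ wᵢ xᵢ ∂g/∂xᵢ = d g` holds. -/
def IsQH (n : ℕ) (w : Fin n → ℚ) (d : ℚ) (g : On n) : Prop :=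
  ∑ i, (w i : ℂ) • (coordG i * pd i g) = (d : ℂ) • g

/-- A germ of a biholomorphic change of coordinates at `0 ∈ ℂⁿ`. -/
structure CoordChange (n : ℕ) where
  toFun : (Fin n → ℂ) → (Fin n → ℂ)
  invFun : (Fin n → ℂ) → (Fin n → ℂ)
  analyticAt : AnalyticAt ℂ toFun 0
  inv_analyticAt : AnalyticAt ℂ invFun 0
  map_zero : toFun 0 = 0
  inv_map_zero : invFun 0 = 0
  left_inv : ∀ᶠ x in 𝓝 (0 : Fin n → ℂ), invFun (toFun x) = x
  right_inv : ∀ᶠ x in 𝓝 (0 : Fin n → ℂ), toFun (invFun x) = x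

lemma CoordChange.tendsto (φ : CoordChange n) :
    Filter.Tendsto φ.toFun (𝓝 (0 : Fin n → ℂ)) (𝓝 (0 : Fin n → ℂ)) := by
  have h := φ.analyticAt.continuousAt
  rwa [ContinuousAt, φ.map_zero] at h

/-- The pullback (composition) of a germ `g ∈ 𝒪ₙ` under a change of coordinates. -/
def pullback (φ : CoordChange n) (g : On n) : On n :=
  ⟨(g : Filter.Germ (𝓝 (0 : Fin n → ℂ)) ℂ).compTendsto φ.toFun φ.tendsto, by
    refine ⟨On.rep g ∘ φ.toFun, ?_, ?_⟩
    · have h := On.rep_analyticAt g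
      rw [← φ.map_zero] at h
      exact h.comp φ.analyticAt
    · rw [← On.rep_spec g]
      exact (Filter.Germ.coe_compTendsto _ φ.tendsto).symm⟩

/-- Definition 1.1: the pair `(f, X)` is relatively quasihomogeneous with respect to the
weights `w`: in suitable coordinates, `f` is quasihomogeneous of degree `1` and `I_X` admits
a system of quasihomogeneous generators of positive degrees, all with respect to `w`. -/
def RelQH (n : ℕ) (X : Set (Fin n → ℂ)) (f : On n) (w : Fin n → ℚ) : Prop :=
  ∃ φ : CoordChange n,
    IsQH n w 1 (pullback φ f) ∧
    ∃ (m : ℕ) (h : Fin m → On n) (d : Fin m → ℚ),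
      Ideal.span (Set.range h) = IX n X ∧ (∀ j, 0 < d j) ∧
      ∀ j, IsQH n w (d j) (pullback φ (h j))

/-- The variety `X` is quasihomogeneous with respect to the weights `w`: in suitable
coordinates, `I_X` admits a system of quasihomogeneous generators of positive degrees. -/
def VarQH (n : ℕ) (X : Set (Fin n → ℂ)) (w : Fin n → ℚ) : Prop :=
  ∃ φ : CoordChange n,
    ∃ (m : ℕ) (h : Fin m → On n) (d : Fin m → ℚ),
      Ideal.span (Set.range h) = IX n X ∧ (∀ j, 0 < d j) ∧
      ∀ j, IsQH n w (d j) (pullback φ (h j))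

instance (f : On n) : HasQuotient (↥(ThetaF n f)) (Submodule ↥(On n) ↥(ThetaF n f)) :=
  Submodule.hasQuotient (R := ↥(On n)) (M := ↥(ThetaF n f))



noncomputable section
/-! Part 1 -/
section Forms
variable {R : Type*} [CommRing R] {n : ℕ}

/-- Koszul sign. -/
def sgK (R : Type*) [CommRing R] {n : ℕ} (i : Fin n) (I : Finset (Fin n)) : R :=
  (-1) ^ (I.filter (fun j => j < i)).card

/-- Contraction. -/
def ctr (v : Fin n → R) (w : Finset (Fin n) → R) : Finset (Fin n) → R :=
  fun I => ∑ i, if i ∈ I then 0 else sgK R i I * v i * w (insert i I)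

/-- Exterior multiplication by a basis vector. -/
def extM (k : Fin n) (w : Finset (Fin n) → R) : Finset (Fin n) → R :=
  fun I => if k ∈ I then sgK R k (I.erase k) * w (I.erase k) else 0

lemma sgK_sq (i : Fin n) (I : Finset (Fin n)) : sgK R i I * sgK R i I = 1 := by
  unfold sgK; rw [← pow_add, ← two_mul, pow_mul]; simp

lemma sgK_insert (i k : Fin n) (I : Finset (Fin n)) (hk : k ∉ I) :
    sgK R i (insert k I) = sgK R i I * (if k < i then -1 else 1) := by
  unfold sgK
  rw [Finset.filter_insert]
  split_ifs with h
  · rw [Finset.card_insert_of_notMem (by simp [hk]), pow_succ]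
  · simp

lemma sgK_swap (i k : Fin n) (I : Finset (Fin n)) (hi : i ∉ I) (hk : k ∉ I) (h : i ≠ k) :
    sgK R i I * sgK R k (insert i I) = - (sgK R k I * sgK R i (insert k I)) := by
  rw [sgK_insert k i I hi, sgK_insert i k I hk]
  rcases lt_or_gt_of_ne h with h | h
  · simp [h, h.not_gt, mul_comm]
  · simp [h, h.not_gt, mul_comm]

lemma sgK_swap2 (i k : Fin n) (I : Finset (Fin n)) (hi : i ∉ I) (hk : k ∉ I) (h : i ≠ k) :
    sgK R i (insert k I) * sgK R k (insert i I) = - (sgK R k I * sgK R i I) := by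
  rw [sgK_insert k i I hi, sgK_insert i k I hk]
  rcases lt_or_gt_of_ne h with h | h
  · simp [h, h.not_gt, mul_comm]
  · simp [h, h.not_gt, mul_comm]

lemma ctr_add (v : Fin n → R) (a b : Finset (Fin n) → R) : ctr v (a + b) = ctr v a + ctr v b := by
  funext I; simp only [ctr, Pi.add_apply, ← Finset.sum_add_distrib]
  refine Finset.sum_congr rfl fun i _ => ?_
  split_ifs <;> ring

lemma ctr_smul (v : Fin n → R) (c : R) (b : Finset (Fin n) → R) : ctr v (c • b) = c • ctr v b := by
  funext I; simp only [ctr, Pi.smul_apply, smul_eq_mul, Finset.mul_sum]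
  refine Finset.sum_congr rfl fun i _ => ?_
  split_ifs <;> ring

lemma ctr_neg (v : Fin n → R) (b : Finset (Fin n) → R) : ctr v (-b) = - ctr v b := by
  have := ctr_smul v (-1) b
  simpa using this

lemma ctr_sub (v : Fin n → R) (a b : Finset (Fin n) → R) : ctr v (a - b) = ctr v a - ctr v b := by
  rw [sub_eq_add_neg, ctr_add, ctr_neg, sub_eq_add_neg]

lemma ctr_anti (v w : Fin n → R) (a : Finset (Fin n) → R) :
    ctr v (ctr w a) = - ctr w (ctr v a) := by
  funext I
  simp only [ctr, Pi.neg_apply]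
  have key : ∀ (v w : Fin n → R), (∑ i, if i ∈ I then 0 else sgK R i I * v i *
      ∑ k, if k ∈ insert i I then 0 else sgK R k (insert i I) * w k * a (insert k (insert i I)))
      = ∑ i, ∑ k, if i ∈ I ∨ k ∈ I ∨ i = k then 0 else
        (sgK R i I * sgK R k (insert i I)) * (v i * w k * a (insert k (insert i I))) := by
    intro v w
    refine Finset.sum_congr rfl fun i _ => ?_
    by_cases hi : i ∈ I
    · simp [hi]
    · rw [if_neg hi, Finset.mul_sum]
      refine Finset.sum_congr rfl fun k _ => ?_
      by_cases hk : k ∈ I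
      · simp [hk]
      · by_cases hik : k = i
        · simp [hik]
        · have : i ≠ k := fun h => hik h.symm
          simp only [Finset.mem_insert, hik, hk, hi, this, or_self, if_false]
          ring
  rw [key, key, Finset.sum_comm, ← Finset.sum_neg_distrib]
  refine Finset.sum_congr rfl fun i _ => ?_
  rw [← Finset.sum_neg_distrib]
  refine Finset.sum_congr rfl fun k _ => ?_
  by_cases hi : i ∈ I
  · simp [hi]
  by_cases hk : k ∈ I
  · simp [hk]
  by_cases hik : i = k
  · simp [hik]
  have : k ≠ i := fun h => hik h.symm
  simp only [hi, hk, hik, this, or_self, if_false]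
  rw [sgK_swap k i I hk hi this, Finset.insert_comm]
  ring

lemma ctr_self (v : Fin n → R) (a : Finset (Fin n) → R) : ctr v (ctr v a) = 0 := by
  funext I
  simp only [ctr, Pi.zero_apply]
  have key : (∑ i, if i ∈ I then 0 else sgK R i I * v i *
      ∑ k, if k ∈ insert i I then 0 else sgK R k (insert i I) * v k * a (insert k (insert i I)))
      = ∑ p : Fin n × Fin n, if p.1 ∈ I ∨ p.2 ∈ I ∨ p.1 = p.2 then 0 else
        (sgK R p.1 I * sgK R p.2 (insert p.1 I)) *
          (v p.1 * v p.2 * a (insert p.2 (insert p.1 I))) := by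
    rw [Fintype.sum_prod_type]
    refine Finset.sum_congr rfl fun i _ => ?_
    by_cases hi : i ∈ I
    · simp [hi]
    · rw [if_neg hi, Finset.mul_sum]
      refine Finset.sum_congr rfl fun k _ => ?_
      by_cases hk : k ∈ I
      · simp [hk]
      · by_cases hik : k = i
        · simp [hik]
        · have : i ≠ k := fun h => hik h.symm
          simp only [Finset.mem_insert, hik, hk, hi, this, or_self, if_false]
          ring
  rw [key]
  refine Finset.sum_involution (fun p _ => (p.2, p.1)) ?_ ?_ (by simp) (by simp)
  · rintro ⟨i, k⟩ -
    by_cases hi : i ∈ I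
    · simp [hi]
    by_cases hk : k ∈ I
    · simp [hk]
    by_cases hik : i = k
    · simp [hik]
    have : k ≠ i := fun h => hik h.symm
    simp only [hi, hk, hik, this, or_self, if_false]
    rw [sgK_swap k i I hk hi this, Finset.insert_comm]
    ring
  · rintro ⟨i, k⟩ - h h2
    simp only [Prod.mk.injEq] at h2
    exact h (by simp [h2.1])

lemma ctr_extM (v : Fin n → R) (k : Fin n) (a : Finset (Fin n) → R) :
    ctr v (extM k a) = v k • a - extM k (ctr v a) := by
  funext I
  simp only [ctr, extM, Pi.sub_apply, Pi.smul_apply, smul_eq_mul]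
  by_cases hk : k ∈ I
  · rw [if_pos hk]
    obtain ⟨I', hI', rfl⟩ : ∃ I', k ∉ I' ∧ insert k I' = I :=
      ⟨I.erase k, by simp, Finset.insert_erase hk⟩
    rw [Finset.erase_insert hI', Finset.mul_sum, eq_sub_iff_add_eq, ← Finset.sum_add_distrib]
    rw [Finset.sum_eq_single k]
    · simp only [Finset.mem_insert, true_or, if_true, hI', if_false, zero_add]
      rw [← mul_assoc, ← mul_assoc, sgK_sq, one_mul]
    · intro i _ hik
      by_cases hi : i ∈ I'
      · simp [hi]
      · have h1 : (insert i (insert k I')).erase k = insert i I' := by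
          rw [Finset.insert_comm, Finset.erase_insert]
          simp [hI', Ne.symm hik]
        simp only [Finset.mem_insert, hik, hi, or_self, if_false, true_or, or_true, if_true, h1]
        have := sgK_swap2 (R := R) i k I' hi hI' hik
        linear_combination (v i * a (insert i I')) * this
    · simp
  · rw [if_neg hk, sub_zero, Finset.sum_eq_single k]
    · rw [if_neg hk, if_pos (Finset.mem_insert_self _ _), Finset.erase_insert hk]
      linear_combination (v k * a I) * sgK_sq (R := R) k I
    · intro i _ hik
      simp [hk, Ne.symm hik]
    · simp

/-- Support in degrees at least `q`. -/
def SuppGe (q : ℕ) (a : Finset (Fin n) → R) : Prop := ∀ I, I.card < q → a I = 0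

lemma SuppGe.add {q : ℕ} {a b : Finset (Fin n) → R} (ha : SuppGe q a) (hb : SuppGe q b) :
    SuppGe q (a + b) := fun I hI => by simp [ha I hI, hb I hI]
lemma SuppGe.sub {q : ℕ} {a b : Finset (Fin n) → R} (ha : SuppGe q a) (hb : SuppGe q b) :
    SuppGe q (a - b) := fun I hI => by simp [ha I hI, hb I hI]
lemma SuppGe.smul {q : ℕ} {a : Finset (Fin n) → R} (c : R) (ha : SuppGe q a) :
    SuppGe q (c • a) := fun I hI => by simp [ha I hI]
lemma SuppGe.ctr {q : ℕ} {a : Finset (Fin n) → R} (v : Fin n → R) (ha : SuppGe (q + 1) a) :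
    SuppGe q (ctr v a) := fun I hI => by
  unfold _root_.ctr
  refine Finset.sum_eq_zero fun i _ => ?_
  split_ifs with h
  · rfl
  · rw [ha _ (by rw [Finset.card_insert_of_notMem h]; omega), mul_zero]
lemma SuppGe.extM {q : ℕ} {a : Finset (Fin n) → R} (k : Fin n) (ha : SuppGe q a) :
    SuppGe (q + 1) (extM k a) := fun I hI => by
  unfold _root_.extM
  split_ifs with h
  · rw [ha _ (by rw [Finset.card_erase_of_mem h]; have := Finset.card_pos.2 ⟨k, h⟩; omega), mul_zero]
  · rfl
end Forms
end

noncomputable section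
section Forms2
variable {R : Type*} [CommRing R] {n : ℕ}

/-- Pointwise membership in an ideal. -/
def Pz (𝔞 : Ideal R) (a : Finset (Fin n) → R) : Prop := ∀ I, a I ∈ 𝔞

lemma Pz.add {𝔞 : Ideal R} {a b : Finset (Fin n) → R} (ha : Pz 𝔞 a) (hb : Pz 𝔞 b) :
    Pz 𝔞 (a + b) := fun I => 𝔞.add_mem (ha I) (hb I)
lemma Pz.sub {𝔞 : Ideal R} {a b : Finset (Fin n) → R} (ha : Pz 𝔞 a) (hb : Pz 𝔞 b) :
    Pz 𝔞 (a - b) := fun I => 𝔞.sub_mem (ha I) (hb I)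
lemma Pz.neg {𝔞 : Ideal R} {a : Finset (Fin n) → R} (ha : Pz 𝔞 a) :
    Pz 𝔞 (-a) := fun I => 𝔞.neg_mem (ha I)
lemma Pz.zero {𝔞 : Ideal R} : Pz 𝔞 (0 : Finset (Fin n) → R) := fun I => 𝔞.zero_mem
lemma Pz.smul {𝔞 : Ideal R} {a : Finset (Fin n) → R} (c : R) (ha : Pz 𝔞 a) :
    Pz 𝔞 (c • a) := fun I => 𝔞.mul_mem_left _ (ha I)
lemma Pz.mono {𝔞 𝔟 : Ideal R} (h : 𝔞 ≤ 𝔟) {a : Finset (Fin n) → R} (ha : Pz 𝔞 a) :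
    Pz 𝔟 a := fun I => h (ha I)
lemma Pz.ctr {𝔞 : Ideal R} {a : Finset (Fin n) → R} (v : Fin n → R) (ha : Pz 𝔞 a) :
    Pz 𝔞 (ctr v a) := fun I => by
  unfold _root_.ctr
  refine 𝔞.sum_mem fun i _ => ?_
  split_ifs
  · exact 𝔞.zero_mem
  · exact 𝔞.mul_mem_left _ (ha _)
lemma Pz.extM {𝔞 : Ideal R} {a : Finset (Fin n) → R} (k : Fin n) (ha : Pz 𝔞 a) :
    Pz 𝔞 (extM k a) := fun I => by
  unfold _root_.extM
  split_ifs
  · exact 𝔞.mul_mem_left _ (ha _)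
  · exact 𝔞.zero_mem

lemma extM_smul (k : Fin n) (c : R) (a : Finset (Fin n) → R) :
    extM k (c • a) = c • extM k a := by
  funext I; simp only [extM, Pi.smul_apply, smul_eq_mul]; split_ifs <;> ring
lemma extM_sub (k : Fin n) (a b : Finset (Fin n) → R) :
    extM k (a - b) = extM k a - extM k b := by
  funext I; simp only [extM, Pi.sub_apply]; split_ifs <;> ring

/-- Elements congruent to `ι_v α + ι_w β`. -/
def ImA (v w : Fin n → R) (𝔞 : Ideal R) (q : ℕ) : Submodule R (Finset (Fin n) → R) where
  carrier := {ω | ∃ α β ζ, SuppGe (q + 1) α ∧ SuppGe (q + 1) β ∧ Pz 𝔞 ζ ∧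
    ω = ctr v α + ctr w β + ζ}
  add_mem' := by
    rintro _ _ ⟨a, b, c, ha, hb, hc, rfl⟩ ⟨a', b', c', ha', hb', hc', rfl⟩
    exact ⟨a + a', b + b', c + c', ha.add ha', hb.add hb', hc.add hc', by
      rw [ctr_add, ctr_add]; abel⟩
  zero_mem' := ⟨0, 0, 0, fun _ _ => rfl, fun _ _ => rfl, fun _ => 𝔞.zero_mem, by
    have := fun v : Fin n → R => ctr_smul v 0 0
    simp at this; simp [this]⟩
  smul_mem' := by
    rintro r _ ⟨a, b, c, ha, hb, hc, rfl⟩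
    exact ⟨r • a, r • b, r • c, ha.smul r, hb.smul r, hc.smul r, by
      rw [ctr_smul, ctr_smul, smul_add, smul_add]⟩

/-- Elements congruent to `ι_v ι_w η`. -/
def ImB (v w : Fin n → R) (𝔞 : Ideal R) (q : ℕ) : Submodule R (Finset (Fin n) → R) where
  carrier := {ω | ∃ η ζ, SuppGe (q + 2) η ∧ Pz 𝔞 ζ ∧ ω = ctr v (ctr w η) + ζ}
  add_mem' := by
    rintro _ _ ⟨a, c, ha, hc, rfl⟩ ⟨a', c', ha', hc', rfl⟩
    exact ⟨a + a', c + c', ha.add ha', hc.add hc', by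
      rw [ctr_add, ctr_add]; abel⟩
  zero_mem' := ⟨0, 0, fun _ _ => rfl, fun _ => 𝔞.zero_mem, by
    have := fun v : Fin n → R => ctr_smul v 0 0
    simp at this; simp [this]⟩
  smul_mem' := by
    rintro r _ ⟨a, c, ha, hc, rfl⟩
    exact ⟨r • a, r • c, ha.smul r, hc.smul r, by
      rw [ctr_smul, ctr_smul, smul_add]⟩

/-- Ideal of minors. -/
def Jm (v w : Fin n → R) : Ideal R :=
  Ideal.span (Set.range fun p : Fin n × Fin n => v p.1 * w p.2 - v p.2 * w p.1)

lemma ctr2_ext2 (v w : Fin n → R) (i j : Fin n) (a : Finset (Fin n) → R) :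
    ctr v (ctr w (extM i (extM j a))) =
      (w i * v j - w j * v i) • a - w i • extM j (ctr v a) + w j • extM i (ctr v a)
      + v i • extM j (ctr w a) - v j • extM i (ctr w a)
      + extM i (extM j (ctr v (ctr w a))) := by
  simp only [ctr_extM, ctr_sub, ctr_smul, extM_sub, extM_smul]
  module

lemma Jm_smul_A (v w : Fin n → R) (𝔞 : Ideal R) (q : ℕ) (ω : Finset (Fin n) → R)
    (hω : SuppGe q ω) (h : Pz 𝔞 (ctr v (ctr w ω))) (r : R) (hr : r ∈ Jm v w ⊔ 𝔞) :
    r • ω ∈ ImA v w 𝔞 q := by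
  have : Jm v w ⊔ 𝔞 ≤ (ImA v w 𝔞 q).comap (LinearMap.toSpanSingleton R _ ω) := by
    refine sup_le (Ideal.span_le.2 ?_) ?_
    · rintro _ ⟨⟨i, j⟩, rfl⟩
      refine ⟨ctr w (extM i (extM j ω)) - w i • extM j ω + w j • extM i ω,
        v i • extM j ω - v j • extM i ω, - extM i (extM j (ctr v (ctr w ω))), ?_, ?_, ?_, ?_⟩
      · exact (((hω.extM j).extM i).ctr w |>.sub ((hω.extM j).smul _)).add ((hω.extM i).smul _)
      · exact ((hω.extM j).smul _).sub ((hω.extM i).smul _)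
      · exact ((h.extM j).extM i).neg
      · rw [LinearMap.toSpanSingleton_apply]
        simp only [ctr_add, ctr_sub, ctr_smul, ctr2_ext2]
        simp only [ctr_extM]
        module
    · intro x hx
      refine ⟨0, 0, x • ω, fun _ _ => rfl, fun _ _ => rfl, fun I => 𝔞.mul_mem_right _ hx, ?_⟩
      have := fun v : Fin n → R => ctr_smul v 0 0
      simp at this; simp [this]
  exact this hr

lemma Jm_smul_B (v w : Fin n → R) (𝔞 : Ideal R) (q : ℕ) (ω : Finset (Fin n) → R)
    (hω : SuppGe q ω) (h1 : Pz 𝔞 (ctr v ω)) (h2 : Pz 𝔞 (ctr w ω)) (r : R)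
    (hr : r ∈ Jm v w ⊔ 𝔞) :
    r • ω ∈ ImB v w 𝔞 q := by
  have : Jm v w ⊔ 𝔞 ≤ (ImB v w 𝔞 q).comap (LinearMap.toSpanSingleton R _ ω) := by
    refine sup_le (Ideal.span_le.2 ?_) ?_
    · rintro _ ⟨⟨i, j⟩, rfl⟩
      refine ⟨- extM i (extM j ω), - w i • extM j (ctr v ω) + w j • extM i (ctr v ω)
      + v i • extM j (ctr w ω) - v j • extM i (ctr w ω)
      + extM i (extM j (ctr v (ctr w ω))), ?_, ?_, ?_⟩
      · simpa using ((hω.extM j).extM i).smul (-1)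
      · exact (((((h1.extM j).smul _).add ((h1.extM i).smul _)).add ((h2.extM j).smul _)).sub
          ((h2.extM i).smul _)).add (((h2.ctr v).extM j).extM i)
      · rw [LinearMap.toSpanSingleton_apply]
        simp only [ctr_neg, ctr2_ext2]
        module
    · intro x hx
      refine ⟨0, x • ω, fun _ _ => rfl, fun I => 𝔞.mul_mem_right _ hx, ?_⟩
      have := fun v : Fin n → R => ctr_smul v 0 0
      simp at this; simp [this]
  exact this hr

/-- Statement A. -/
def StA (v w : Fin n → R) (𝔞 : Ideal R) (q : ℕ) : Prop :=
  ∀ ω : Finset (Fin n) → R, SuppGe q ω → Pz 𝔞 (ctr v (ctr w ω)) → ω ∈ ImA v w 𝔞 q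

lemma Pz.split {𝔞 : Ideal R} {x : R} {q : ℕ} {a : Finset (Fin n) → R}
    (ha : Pz (𝔞 ⊔ Ideal.span {x}) a) (hs : SuppGe q a) :
    ∃ b c, Pz 𝔞 b ∧ SuppGe q c ∧ a = b + x • c := by
  have : ∀ I, ∃ b c, b ∈ 𝔞 ∧ (I.card < q → c = 0) ∧ a I = b + x * c := by
    intro I
    by_cases hI : I.card < q
    · exact ⟨0, 0, 𝔞.zero_mem, fun _ => rfl, by simp [hs I hI]⟩
    · obtain ⟨b, hb, c, hc, h⟩ := Submodule.mem_sup.1 (ha I)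
      obtain ⟨d, rfl⟩ := Ideal.mem_span_singleton'.1 hc
      exact ⟨b, d, hb, fun h => absurd h hI, by rw [← h, mul_comm]⟩
  choose b c hb hc h using this
  exact ⟨b, c, hb, hc, funext h⟩

lemma SuppGe.mono {q r : ℕ} (h : q ≤ r) {a : Finset (Fin n) → R} (ha : SuppGe r a) : SuppGe q a :=
  fun I hI => ha I (by omega)

/-- splitted form of A modulo `x` -/
lemma StA.split {v w : Fin n → R} {𝔞 : Ideal R} {x : R} {q : ℕ}
    (hA : StA v w (𝔞 ⊔ Ideal.span {x}) q) (ω : Finset (Fin n) → R) (hω : SuppGe q ω)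
    (h : Pz (𝔞 ⊔ Ideal.span {x}) (ctr v (ctr w ω))) :
    ∃ α β γ ζ, SuppGe (q + 1) α ∧ SuppGe (q + 1) β ∧ SuppGe q γ ∧ Pz 𝔞 ζ ∧
      ω = ctr v α + ctr w β + x • γ + ζ := by
  obtain ⟨α, β, ζ, ha, hb, hz, e⟩ := hA ω hω h
  have hs : SuppGe q ζ := by
    have : ζ = ω - ctr v α - ctr w β := by rw [e]; abel
    rw [this]; exact (hω.sub (ha.ctr v)).sub (hb.ctr w)
  obtain ⟨b, c, hb', hc, e2⟩ := hz.split hs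
  exact ⟨α, β, c, b, ha, hb, hc, hb', by rw [e, e2]; abel⟩

lemma nzd_Pz {𝔞 : Ideal R} {x : R} (hx : ∀ g, x * g ∈ 𝔞 → g ∈ 𝔞) {a : Finset (Fin n) → R}
    (h : Pz 𝔞 (x • a)) : Pz 𝔞 a := fun I => hx _ (h I)

lemma StA_step1 {v w : Fin n → R} {𝔞 : Ideal R} {x : R} {q : ℕ}
    (hx : ∀ g, x * g ∈ 𝔞 → g ∈ 𝔞)
    (h1 : StA v w (𝔞 ⊔ Ideal.span {x}) (q + 1)) (h2 : StA v w (𝔞 ⊔ Ideal.span {x}) (q + 2))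
    (ω : Finset (Fin n) → R) (h : x • ω ∈ ImA v w 𝔞 q) : ω ∈ ImA v w 𝔞 q := by
  obtain ⟨α, β, ζ, ha, hb, hz, e⟩ := h
  have hxs : ∀ a : Finset (Fin n) → R, Pz (𝔞 ⊔ Ideal.span {x}) (x • a) := fun a I =>
    (le_sup_right : _ ≤ 𝔞 ⊔ Ideal.span {x})
      (Ideal.mem_span_singleton'.2 ⟨a I, by simp [mul_comm]⟩)
  have hz' := hz.mono (le_sup_left : _ ≤ 𝔞 ⊔ Ideal.span {x})
  have eb : ctr v (ctr w β) = x • ctr v ω - ctr v ζ := by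
    have := congrArg (ctr v) e
    rw [ctr_add, ctr_add, ctr_self, ctr_smul] at this
    rw [this]; abel
  have ea : ctr v (ctr w α) = ctr w ζ - x • ctr w ω := by
    have := congrArg (ctr w) e
    rw [ctr_add, ctr_add, ctr_self, ctr_smul, ctr_anti w v] at this
    rw [this]; abel
  obtain ⟨b1, b2, b3, zb, hb1, hb2, hb3, hzb, ebb⟩ := h1.split β hb (by
    rw [eb]; exact (hxs _).sub (hz'.ctr v))
  obtain ⟨a1, a2, a3, za, ha1, ha2, ha3, hza, eaa⟩ := h1.split α ha (by
    rw [ea]; exact (hz'.ctr w).sub (hxs _))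
  -- xω = ι_vι_w(a2-b1) + x(ι_v a3 + ι_w b3) + ...
  have e3 : x • (ω - ctr v a3 - ctr w b3) = ctr v (ctr w (a2 - b1)) +
      (ctr v za + ctr w zb + ζ) := by
    have t : x • ω = ctr v α + ctr w β + ζ := e
    rw [smul_sub, smul_sub, t, eaa, ebb]
    simp only [ctr_add, ctr_sub, ctr_smul, ctr_self]
    rw [ctr_anti w v]
    abel
  have hzz : Pz 𝔞 (ctr v za + ctr w zb + ζ) := ((hza.ctr v).add (hzb.ctr w)).add hz
  obtain ⟨g1, g2, g3, zg, hg1, hg2, hg3, hzg, eg⟩ := h2.split (a2 - b1) (ha2.sub hb1) (by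
    have : ctr v (ctr w (a2 - b1)) = x • (ω - ctr v a3 - ctr w b3)
       - (ctr v za + ctr w zb + ζ) := by rw [e3]; abel
    rw [this]
    exact (hxs _).sub (hzz.mono le_sup_left))
  have e4 : ctr v (ctr w (a2 - b1)) = x • ctr v (ctr w g3) + ctr v (ctr w zg) := by
    rw [eg]
    simp only [ctr_add, ctr_smul, ctr_self]
    rw [ctr_anti w v, ctr_neg, ctr_self]
    have : ctr v (0 : Finset (Fin n) → R) = 0 := by
      have := ctr_smul v 0 0
      simpa using this
    rw [this]; abel
  refine ⟨a3 + ctr w g3, b3, ω - ctr v a3 - ctr w b3 - ctr v (ctr w g3), ha3.add (hg3.ctr w), hb3,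
    nzd_Pz hx ?_, by rw [ctr_add]; abel⟩
  rw [smul_sub, e3, e4]
  have : x • ctr v (ctr w g3) + ctr v (ctr w zg) + (ctr v za + ctr w zb + ζ) - x • ctr v (ctr w g3)
    = ctr v (ctr w zg) + (ctr v za + ctr w zb + ζ) := by abel
  rw [this]
  exact ((hzg.ctr w).ctr v).add hzz

/-- depth condition -/
def Dp (J : Ideal R) : ℕ → Ideal R → Prop
  | 0, _ => True
  | d + 1, 𝔞 => ∃ x k, x ^ k ∈ J ⊔ 𝔞 ∧ (∀ g, x * g ∈ 𝔞 → g ∈ 𝔞) ∧ Dp J d (𝔞 ⊔ Ideal.span {x})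

lemma Dp_StA (v w : Fin n → R) : ∀ (d : ℕ) (𝔞 : Ideal R), Dp (Jm v w) d 𝔞 →
    ∀ q, n + 1 ≤ q + d → StA v w 𝔞 q
  | 0, 𝔞, _, q, hq => fun ω hω _ => by
    have : ω = 0 := funext fun I => hω I (by
      have := Finset.card_le_univ I
      simp at this; omega)
    rw [this]; exact zero_mem _
  | d + 1, 𝔞, ⟨x, k, hk, hx, hD⟩, q, hq => fun ω hω h => by
    have h1 := Dp_StA v w d _ hD (q + 1) (by omega)
    have h2 := Dp_StA v w d _ hD (q + 2) (by omega)
    have h3 := Jm_smul_A v w 𝔞 q ω hω h _ hk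
    clear hk
    induction k with
    | zero => simpa using h3
    | succ k ih =>
      apply ih
      rw [pow_succ', mul_smul] at h3
      exact StA_step1 hx h1 h2 _ h3

lemma Dp_B (v w : Fin n → R) (d : ℕ) (𝔞 : Ideal R) (hD : Dp (Jm v w) (d + 1) 𝔞) (q : ℕ)
    (hq : n + 1 ≤ q + 2 + d) (ω : Finset (Fin n) → R) (hω : SuppGe q ω)
    (hv : Pz 𝔞 (ctr v ω)) (hw : Pz 𝔞 (ctr w ω)) : ω ∈ ImB v w 𝔞 q := by
  obtain ⟨x, k, hk, hx, hD⟩ := hD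
  have h2 := Dp_StA v w d _ hD (q + 2) (by omega)
  have h3 := Jm_smul_B v w 𝔞 q ω hω hv hw _ hk
  clear hk
  have hxs : ∀ a : Finset (Fin n) → R, Pz (𝔞 ⊔ Ideal.span {x}) (x • a) := fun a I =>
    (le_sup_right : _ ≤ 𝔞 ⊔ Ideal.span {x})
      (Ideal.mem_span_singleton'.2 ⟨a I, by simp [mul_comm]⟩)
  have c0 : ctr v (0 : Finset (Fin n) → R) = 0 := by
      have := ctr_smul v 0 0
      simpa using this
  induction k with
  | zero => simpa using h3
  | succ k ih =>
    apply ih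
    rw [pow_succ', mul_smul] at h3
    obtain ⟨η, ζ, hη, hζ, e⟩ := h3
    obtain ⟨g1, g2, g3, zg, hg1, hg2, hg3, hzg, eg⟩ := h2.split η hη (by
      have : ctr v (ctr w η) = x • (x ^ k • ω) - ζ := by rw [e]; abel
      rw [this]
      exact (hxs _).sub (hζ.mono le_sup_left))
    have e4 : ctr v (ctr w η) = x • ctr v (ctr w g3) + ctr v (ctr w zg) := by
      rw [eg]
      simp only [ctr_add, ctr_smul, ctr_self]
      rw [ctr_anti w v, ctr_neg, ctr_self, c0]
      abel
    refine ⟨g3, x ^ k • ω - ctr v (ctr w g3), hg3, nzd_Pz hx ?_, by abel⟩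
    rw [smul_sub, e, e4]
    have : x • ctr v (ctr w g3) + ctr v (ctr w zg) + ζ - x • ctr v (ctr w g3)
      = ctr v (ctr w zg) + ζ := by abel
    rw [this]
    exact ((hzg.ctr w).ctr v).add hζ

lemma ctr_empty (v : Fin n → R) (ω : Finset (Fin n) → R) :
    ctr v ω ∅ = ∑ i, v i * ω {i} := by
  simp [ctr, sgK]

/-- The nonzerodivisor lemma. -/
lemma NZ_lemma (v w : Fin n → R) (f : R) (hf : ∀ g, f * g = 0 → g = 0)
    (d : ℕ) (hD : Dp (Jm v w) (d + 1) (Ideal.span {f})) (hd : n ≤ d + 2)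
    (δ : Fin n → R) (a b : R) (ha : f * a = ∑ i, δ i * v i) (hb : f * b = ∑ i, δ i * w i) :
    ∃ ε : Fin n → R, a = ∑ i, ε i * v i ∧ b = ∑ i, ε i * w i := by
  set ω : Finset (Fin n) → R := fun I => ∑ i, if I = {i} then δ i else 0 with hω
  have hω1 : ∀ i, ω {i} = δ i := fun i => by
    simp [hω, Finset.singleton_inj]
  have hω0 : ∀ I, (∀ i, I ≠ {i}) → ω I = 0 := fun I h => by
    simp [hω, h]
  have hs : SuppGe 1 ω := fun I hI => by
    apply hω0
    rintro i rfl
    simp at hI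
  have hne : ∀ (v : Fin n → R) I, I ≠ ∅ → ctr v ω I = 0 := fun v I hI => by
    unfold ctr
    refine Finset.sum_eq_zero fun i _ => ?_
    split_ifs with h
    · rfl
    · rw [hω0, mul_zero]
      intro j hj
      have := congrArg Finset.card hj
      rw [Finset.card_insert_of_notMem h, Finset.card_singleton] at this
      exact hI (Finset.card_eq_zero.1 (by omega))
  have he : ∀ v : Fin n → R, ctr v ω ∅ = ∑ i, δ i * v i := fun v => by
    rw [ctr_empty]; simp [hω1, mul_comm]
  obtain ⟨η, ζ, hη, hζ, e⟩ := Dp_B v w d _ hD 1 (by omega) ω hs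
    (fun I => by
      by_cases h : I = ∅
      · rw [h, he, ← ha]; exact Ideal.mul_mem_right _ _ (Ideal.mem_span_singleton_self f)
      · rw [hne v I h]; exact zero_mem _)
    (fun I => by
      by_cases h : I = ∅
      · rw [h, he, ← hb]; exact Ideal.mul_mem_right _ _ (Ideal.mem_span_singleton_self f)
      · rw [hne w I h]; exact zero_mem _)
  choose ε hε using fun I => Ideal.mem_span_singleton'.1 (hζ I)
  have ez : ζ = f • ε := funext fun I => by simp [← hε I, mul_comm]
  have c0 : ∀ v, ctr v (0 : Finset (Fin n) → R) = 0 := fun v => by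
      have := ctr_smul v 0 0
      simpa using this
  have k1 : ctr v ω = f • ctr v ε := by
    rw [e, ez, ctr_add, ctr_self, ctr_smul, zero_add]
  have k2 : ctr w ω = f • ctr w ε := by
    rw [e, ez, ctr_add, ctr_smul, ctr_anti v w, ctr_neg, ctr_self, neg_zero, zero_add]
  refine ⟨fun i => ε {i}, ?_, ?_⟩
  · have := congrFun k1 ∅
    rw [he, ← ha, Pi.smul_apply, smul_eq_mul, ctr_empty] at this
    have := hf (a - ∑ i, v i * ε {i}) (by rw [mul_sub, this, sub_self])
    rw [sub_eq_zero.1 this]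
    exact Finset.sum_congr rfl fun i _ => mul_comm _ _
  · have := congrFun k2 ∅
    rw [he, ← hb, Pi.smul_apply, smul_eq_mul, ctr_empty] at this
    have := hf (b - ∑ i, w i * ε {i}) (by rw [mul_sub, this, sub_self])
    rw [sub_eq_zero.1 this]
    exact Finset.sum_congr rfl fun i _ => mul_comm _ _
end Forms2
end

noncomputable section
section RegPrime
lemma Dp_of_primes {R : Type*} [CommRing R] (J : Ideal R) (f : R) (N : ℕ) (p : ℕ → Ideal R)
    (y : ℕ → R) (hp0 : p 0 = ⊥) (hps : ∀ i < N, p (i + 1) = p i ⊔ Ideal.span {y i})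
    (hpr : ∀ i ≤ N, (p i).IsPrime) (hy : ∀ i < N, y i ∉ p i) (hf : f ∉ p N)
    (hJ : ∀ i < N, ∃ k, y i ^ k ∈ J ⊔ Ideal.span {f}) : Dp J N (Ideal.span {f}) := by
  have hmono : ∀ j i, i + j = N → f ∉ p i := by
    intro j
    induction j with
    | zero => rintro i rfl; exact hf
    | succ j ih =>
      intro i hi h
      refine ih (i + 1) (by omega) ?_
      rw [hps i (by omega)]
      exact Submodule.mem_sup_left h
  have main : ∀ j i, i + j = N → Dp J j (Ideal.span {f} ⊔ p i) := by
    intro j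
    induction j with
    | zero => intro i _; trivial
    | succ j ih =>
      intro i hi
      have hiN : i < N := by omega
      obtain ⟨k, hk⟩ := hJ i hiN
      refine ⟨y i, k, ?_, ?_, ?_⟩
      · rw [← sup_assoc]; exact Submodule.mem_sup_left hk
      · intro g hg
        obtain ⟨a, ha, s, hs, has⟩ := Submodule.mem_sup.1 hg
        obtain ⟨g', rfl⟩ := Ideal.mem_span_singleton'.1 ha
        have h1 : g' * f ∈ p (i + 1) := by
          rw [hps i hiN]
          have : g' * f = -s + g * y i := by rw [← add_right_inj s]; linear_combination has
          rw [this]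
          exact Submodule.add_mem_sup (neg_mem hs) (Ideal.mem_span_singleton'.2 ⟨g, rfl⟩)
        have h2 : g' ∈ p (i + 1) :=
          ((hpr (i + 1) (by omega)).mem_or_mem h1).resolve_right (hmono j (i + 1) (by omega))
        rw [hps i hiN] at h2
        obtain ⟨s', hs', b, hb, hsb⟩ := Submodule.mem_sup.1 h2
        obtain ⟨q, rfl⟩ := Ideal.mem_span_singleton'.1 hb
        have h3 : y i * (g - f * q) ∈ p i := by
          have : y i * (g - f * q) = f * s' + s := by
            rw [← hsb] at has; linear_combination -has
          rw [this]
          exact Ideal.add_mem _ (Ideal.mul_mem_left _ _ hs') hs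
        have h4 := ((hpr i (by omega)).mem_or_mem h3).resolve_left (hy i hiN)
        have : g = q * f + (g - f * q) := by ring
        rw [this]
        exact Submodule.add_mem_sup (Ideal.mem_span_singleton'.2 ⟨q, rfl⟩) h4
      · rw [sup_assoc, ← hps i hiN]
        exact ih (i + 1) (by omega)
  have := main N 0 (by omega)
  rwa [hp0, sup_bot_eq] at this
end RegPrime
end

noncomputable section
section RegSeq
variable {R : Type*} [CommRing R]
end RegSeq

section Index
variable {O : Type*} [CommRing O] [Algebra ℂ O]
variable {M : Type*} [AddCommGroup M] [Module O M] [Module ℂ M] [IsScalarTower ℂ O M]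

/-- Codimension of a submodule. -/
def idx (U : Submodule O M) : ℕ∞ := Module.length ℂ (M ⧸ U)

lemma len_add {A B C : Type*} [AddCommGroup A] [AddCommGroup B] [AddCommGroup C]
    [Module O A] [Module O B] [Module O C] [Module ℂ A] [Module ℂ B] [Module ℂ C]
    [IsScalarTower ℂ O A] [IsScalarTower ℂ O B] [IsScalarTower ℂ O C]
    (f : A →ₗ[O] B) (g : B →ₗ[O] C) (hf : Function.Injective f) (hg : Function.Surjective g)
    (h : Function.Exact f g) : Module.length ℂ B = Module.length ℂ A + Module.length ℂ C :=
  Module.length_eq_add_of_exact (f.restrictScalars ℂ) (g.restrictScalars ℂ) hf hg h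

lemma ker_factor_aux {U W : Submodule O M} (h : U ≤ W) :
    LinearMap.ker (Submodule.factor h) = W.map U.mkQ := by
  unfold Submodule.factor
  rw [Submodule.ker_mapQ, Submodule.comap_id]

lemma idx_sup_span (U : Submodule O M) (e : M) :
    idx U = idx (U ⊔ Submodule.span O {e}) +
      idx (U.comap (LinearMap.toSpanSingleton O M e) : Ideal O) := by
  unfold idx
  rw [add_comm]
  refine len_add (O := O) (Submodule.mapQ _ U (LinearMap.toSpanSingleton O M e) le_rfl)
    (Submodule.factor (le_sup_left)) ?_ ?_ ?_
  · rw [← LinearMap.ker_eq_bot, Submodule.ker_mapQ]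
    simp
  · exact Submodule.factor_surjective _
  · rw [LinearMap.exact_iff, Submodule.range_mapQ, ker_factor_aux]
    rw [Submodule.map_sup, LinearMap.range_toSpanSingleton]
    simp

/-- multiply a submodule by a scalar. -/
def scl (a : O) (U : Submodule O M) : Submodule O M := U.map (LinearMap.lsmul O M a)

lemma le_comap_scl (a : O) (U : Submodule O M) : U ≤ (scl a U).comap (LinearMap.lsmul O M a) :=
  Submodule.le_comap_map _ _

lemma idx_scl (a : O) (ha : ∀ x : M, a • x = 0 → x = 0) (U : Submodule O M) :
    idx (scl a U) = idx (scl a (⊤ : Submodule O M)) + idx U := by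
  unfold idx
  rw [add_comm]
  have hle : scl a U ≤ scl a ⊤ := Submodule.map_mono le_top
  refine len_add (O := O) (Submodule.mapQ U (scl a U) (LinearMap.lsmul O M a)
    (le_comap_scl a U)) (Submodule.factor hle) ?_ ?_ ?_
  · rw [← LinearMap.ker_eq_bot, Submodule.ker_mapQ, scl, Submodule.comap_map_eq_of_injective]
    · simp
    · intro x y hxy
      have : a • (x - y) = 0 := by
        rw [smul_sub, sub_eq_zero]; exact hxy
      exact sub_eq_zero.1 (ha _ this)
  · exact Submodule.factor_surjective _
  · rw [LinearMap.exact_iff, Submodule.range_mapQ, ker_factor_aux]; rw [show scl a (⊤ : Submodule O M) = LinearMap.range (LinearMap.lsmul O M a) from Submodule.map_top _]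

lemma idx_mono {U W : Submodule O M} (h : U ≤ W) : idx W ≤ idx U := by
  unfold idx
  have := Module.length_le_of_surjective (R := ℂ) ((Submodule.factor h).restrictScalars ℂ)
    (Submodule.factor_surjective h)
  exact this

lemma mem_scl {a : O} {U : Submodule O M} {x : M} : x ∈ scl a U ↔ ∃ y ∈ U, a • y = x := Iff.rfl

lemma scl_scl (a b : O) (U : Submodule O M) : scl a (scl b U) = scl (a * b) U := by
  ext x; simp only [mem_scl]
  constructor
  · rintro ⟨_, ⟨y, hy, rfl⟩, rfl⟩; exact ⟨y, hy, mul_smul _ _ _⟩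
  · rintro ⟨y, hy, rfl⟩; exact ⟨_, ⟨y, hy, rfl⟩, (mul_smul _ _ _).symm⟩

lemma idx_scl_pow (a : O) (ha : ∀ x : M, a • x = 0 → x = 0) (U : Submodule O M) (k : ℕ) :
    idx (scl (a ^ k) U) = k * idx (scl a (⊤ : Submodule O M)) + idx U := by
  induction k with
  | zero =>
    have : scl (a ^ 0) U = U := by ext x; simp [mem_scl]
    rw [this]; simp
  | succ k ih =>
    rw [pow_succ', ← scl_scl, idx_scl a ha, ih]
    push_cast; ring

/-- Step 7. -/
lemma idx_le_of_integral (p q : O) (hp : ∀ x : M, p • x = 0 → x = 0)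
    (hq : ∀ x : M, q • x = 0 → x = 0) (hfin : idx (scl q (⊤ : Submodule O M)) ≠ ⊤)
    (d : ℕ) (hd : 0 < d) (a : ℕ → O)
    (heq : ∀ x : M, p ^ d • x = (∑ i ∈ Finset.range d, a i * p ^ i * q ^ (d - i)) • x) :
    idx (scl q (⊤ : Submodule O M)) ≤ idx (scl p (⊤ : Submodule O M)) := by
  let X : Submodule O M := ⨆ i : Fin d, scl (p ^ (i : ℕ) * q ^ (d - 1 - i)) ⊤
  have hX : idx X ≠ ⊤ := by
    have h1 : scl (q ^ (d - 1)) ⊤ ≤ X := by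
      have := le_iSup (fun i : Fin d => scl (M := M) (p ^ (i : ℕ) * q ^ (d - 1 - i)) ⊤) ⟨0, hd⟩
      simpa using this
    have h2 := idx_mono h1
    rw [idx_scl_pow q hq] at h2
    have h3 : idx (⊤ : Submodule O M) = 0 := by
      unfold idx; exact Module.length_eq_zero
    rw [h3, add_zero] at h2
    intro h
    rw [h, top_le_iff] at h2
    exact (WithTop.mul_ne_top (ENat.coe_ne_top _) hfin) h2
  have hmem : ∀ (i : ℕ) (_ : i < d) (x : M), (p ^ i * q ^ (d - 1 - i)) • x ∈ X := fun i hi x =>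
    (le_iSup (fun i : Fin d => scl (M := M) (p ^ (i : ℕ) * q ^ (d - 1 - i)) ⊤) ⟨i, hi⟩)
      ⟨x, trivial, rfl⟩
  have hpq : scl p X ≤ scl q X := by
    rw [scl, Submodule.map_le_iff_le_comap]
    refine iSup_le fun ⟨i, hi⟩ => ?_
    rintro _ ⟨x, -, rfl⟩
    show p • ((p ^ i * q ^ (d - 1 - i)) • x) ∈ scl q X
    by_cases h : i + 1 < d
    · refine ⟨_, hmem (i + 1) h x, ?_⟩
      rw [LinearMap.lsmul_apply, smul_smul, smul_smul]
      congr 1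
      have : d - 1 - i = (d - 1 - (i + 1)) + 1 := by omega
      rw [this]; ring
    · have hi' : i = d - 1 := by omega
      have e : p • ((p ^ i * q ^ (d - 1 - i)) • x) = p ^ d • x := by
        rw [smul_smul]; congr 1
        subst hi'
        rw [Nat.sub_self, pow_zero, mul_one, ← pow_succ']
        congr 1; omega
      rw [e, heq, Finset.sum_smul]
      refine Submodule.sum_mem _ fun j hj => ?_
      rw [Finset.mem_range] at hj
      refine ⟨_, X.smul_mem (a j) (hmem j hj x), ?_⟩
      rw [LinearMap.lsmul_apply, smul_smul, smul_smul]
      congr 1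
      have : d - j = (d - 1 - j) + 1 := by omega
      rw [this]; ring
  have := idx_mono hpq
  rw [idx_scl p hp, idx_scl q hq] at this
  exact (ENat.add_le_add_iff_right hX).1 this

lemma idx_ne_top_iff (U : Submodule O M) : idx U ≠ ⊤ ↔ FiniteDimensional ℂ (M ⧸ U) := by
  unfold idx
  rw [Module.length_ne_top_iff, isFiniteLength_iff_isNoetherian_isArtinian]
  constructor
  · rintro ⟨h, -⟩; exact Module.IsNoetherian.finite ℂ _
  · intro h; exact ⟨inferInstance, inferInstance⟩

lemma idx_eq_finrank (U : Submodule O M) (h : FiniteDimensional ℂ (M ⧸ U)) :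
    idx U = Module.finrank ℂ (M ⧸ U) := Module.length_eq_finrank ℂ _

end Index
end

noncomputable section
section KLem
variable {A : Type*} [CommRing A] [Algebra ℂ A]
variable {M : Type*} [AddCommGroup M] [Module A M] [Module ℂ M] [IsScalarTower ℂ A M]

lemma idx_top_eq : idx (⊤ : Submodule A M) = 0 := by
  unfold idx; exact Module.length_eq_zero

lemma idx_le_sup_finset (I : Ideal A) (W : Submodule A M) (hW : ∀ r ∈ I, ∀ m : M, r • m ∈ W)
    (s : Finset M) : idx W ≤ idx (W ⊔ Submodule.span A (s : Set M)) + s.card * idx I := by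
  classical
  induction s using Finset.induction_on with
  | empty => simp
  | insert e s hes ih =>
    refine ih.trans ?_
    have h1 := idx_sup_span (W ⊔ Submodule.span A (s : Set M)) e
    have h2 : idx ((W ⊔ Submodule.span A (s : Set M)).comap
        (LinearMap.toSpanSingleton A M e) : Ideal A) ≤ idx I := by
      refine idx_mono (O := A) (M := A) fun r hr => ?_
      exact (le_sup_left : W ≤ _) (hW r hr e)
    have h3 : W ⊔ Submodule.span A (s : Set M) ⊔ Submodule.span A {e} =
        W ⊔ Submodule.span A ((insert e s : Finset M) : Set M) := by
      rw [Finset.coe_insert, Submodule.span_insert, sup_assoc,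
        sup_comm (Submodule.span A (s : Set M))]
    rw [h1, h3, Finset.card_insert_of_notMem hes]
    push_cast
    calc _ ≤ idx (W ⊔ Submodule.span A (insert e (s : Set M))) + idx I + s.card * idx I := by
          gcongr
      _ = _ := by ring

lemma idx_fg_ne_top (I : Ideal A) (hI : idx I ≠ ⊤) (hM : (⊤ : Submodule A M).FG)
    (W : Submodule A M) (hW : ∀ r ∈ I, ∀ m : M, r • m ∈ W) : idx W ≠ ⊤ := by
  obtain ⟨s, hs⟩ := hM
  have := idx_le_sup_finset I W hW s
  rw [hs, sup_top_eq, idx_top_eq, zero_add] at this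
  intro h
  rw [h, top_le_iff] at this
  exact (WithTop.mul_ne_top (ENat.coe_ne_top _) hI) this

lemma K1_fg (f : A) (hf : ∀ m : M, f • m = 0 → m = 0) (hM : (⊤ : Submodule A M).FG)
    (hI : idx (Ideal.span {f}) ≠ ⊤) (e : M)
    (he : ∀ m : M, ∃ c : ℕ, f ^ c • m ∈ Submodule.span A {e}) :
    idx (scl f (⊤ : Submodule A M)) ≤ idx (Ideal.span {f}) := by
  set U := Submodule.span A {e} with hU
  have h0 : idx (scl f (⊤ : Submodule A M)) ≠ ⊤ := by
    refine idx_fg_ne_top _ hI hM _ ?_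
    intro r hr m
    obtain ⟨a, rfl⟩ := Ideal.mem_span_singleton'.1 hr
    exact ⟨a • m, trivial, by rw [LinearMap.lsmul_apply, smul_smul, mul_comm]⟩
  have h1 : idx U ≠ ⊤ := by
    obtain ⟨c, hc⟩ : ∃ c : ℕ, ∀ m : M, f ^ c • m ∈ U := by
      obtain ⟨s, hs⟩ := hM
      choose c hc using he
      refine ⟨s.sup c, fun m => ?_⟩
      have : (⊤ : Submodule A M) ≤ U.comap (LinearMap.lsmul A M (f ^ (s.sup c))) := by
        rw [← hs, Submodule.span_le]
        intro x hx
        show f ^ (s.sup c) • x ∈ U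
        obtain ⟨k, hk⟩ := Nat.exists_eq_add_of_le (Finset.le_sup (f := c) hx)
        rw [hk, add_comm, pow_add, mul_smul]
        exact U.smul_mem _ (hc x)
      exact this trivial
    have h2 : scl (f ^ c) (⊤ : Submodule A M) ≤ U := by
      rintro _ ⟨x, -, rfl⟩; exact hc x
    have h3 := idx_mono h2
    rw [idx_scl_pow f hf, idx_top_eq, add_zero] at h3
    intro h
    rw [h, top_le_iff] at h3
    exact (WithTop.mul_ne_top (ENat.coe_ne_top _) h0) h3
  have h4 := idx_scl f hf U
  have h5 := idx_sup_span (scl f U) e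
  have h6 : scl f U ⊔ Submodule.span A {e} = U := by
    rw [← hU]
    refine sup_eq_right.2 ?_
    rintro _ ⟨x, hx, rfl⟩; exact U.smul_mem _ hx
  have h7 : idx ((scl f U).comap (LinearMap.toSpanSingleton A M e) : Ideal A)
      ≤ idx (Ideal.span {f}) := by
    refine idx_mono (O := A) (M := A) fun r hr => ?_
    obtain ⟨a, rfl⟩ := Ideal.mem_span_singleton'.1 hr
    exact ⟨a • e, U.smul_mem _ (Submodule.mem_span_singleton_self e), by
      rw [LinearMap.lsmul_apply, smul_smul, LinearMap.toSpanSingleton_apply, mul_comm]⟩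
  rw [h6] at h5
  rw [h4] at h5
  have h8 : idx (scl f (⊤ : Submodule A M)) + idx U ≤ idx (Ideal.span {f}) + idx U := by
    rw [h5, add_comm]; gcongr
  exact (ENat.add_le_add_iff_right h1).1 h8

lemma K1_gen (f : A) (hf : ∀ m : M, f • m = 0 → m = 0)
    (hI : FiniteDimensional ℂ (A ⧸ Ideal.span {f})) (e : M)
    (he : ∀ m : M, ∃ c : ℕ, f ^ c • m ∈ Submodule.span A {e}) :
    FiniteDimensional ℂ (M ⧸ scl f (⊤ : Submodule A M)) := by
  classical
  have hI' := (idx_ne_top_iff (O := A) (M := A) (Ideal.span {f})).2 hI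
  have key : Module.rank ℂ (M ⧸ scl f (⊤ : Submodule A M)) ≤
      (Module.finrank ℂ (A ⧸ Ideal.span {f}) : ℕ) := by
    refine rank_le fun s hs => ?_
    choose l hl using (Submodule.mkQ_surjective (scl f (⊤ : Submodule A M)))
    let X : Submodule A M := Submodule.span A (insert e (s.image l : Finset M) : Set M)
    have heX : e ∈ X := Submodule.subset_span (Set.mem_insert _ _)
    have hlX : ∀ x ∈ s, l x ∈ X := fun x hx => Submodule.subset_span
      (Set.mem_insert_of_mem _ (by exact_mod_cast Finset.mem_image_of_mem l hx))
    have hfg : (⊤ : Submodule A X).FG := by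
      rw [Submodule.fg_top]
      exact ⟨insert e (s.image l), by rw [Finset.coe_insert]⟩
    have h1 := K1_fg (M := X) f (fun m hm => Subtype.ext (hf m (congrArg Subtype.val hm))) hfg hI'
      ⟨e, heX⟩ (fun m => by
        obtain ⟨c, hc⟩ := he m
        obtain ⟨a, ha⟩ := Submodule.mem_span_singleton.1 hc
        exact ⟨c, Submodule.mem_span_singleton.2 ⟨a, Subtype.ext ha⟩⟩)
    have hfd : FiniteDimensional ℂ (X ⧸ scl f (⊤ : Submodule A X)) := by
      rw [← idx_ne_top_iff]; exact ne_top_of_le_ne_top hI' h1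
    rw [idx_eq_finrank _ hfd, idx_eq_finrank _ hI] at h1
    have h1' : Module.finrank ℂ (X ⧸ scl f (⊤ : Submodule A X)) ≤
      Module.finrank ℂ (A ⧸ Ideal.span {f}) := by exact_mod_cast h1
    refine le_trans ?_ h1'
    let φ : (X ⧸ scl f (⊤ : Submodule A X)) →ₗ[A] (M ⧸ scl f (⊤ : Submodule A M)) :=
      Submodule.mapQ _ _ X.subtype (by
        rintro _ ⟨x, -, rfl⟩
        exact ⟨x, trivial, rfl⟩)
    let g : s → (X ⧸ scl f (⊤ : Submodule A X)) := fun x => Submodule.mkQ _ ⟨l x, hlX x x.2⟩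
    have hg : LinearIndependent ℂ g := by
      refine LinearIndependent.of_comp (φ.restrictScalars ℂ) ?_
      have : (φ.restrictScalars ℂ) ∘ g = fun i : s => (i : M ⧸ scl f (⊤ : Submodule A M)) := by
        funext x
        exact hl x
      rw [this]; exact hs
    simpa using hg.fintype_card_le_finrank
  exact Module.rank_lt_aleph0_iff.1 (lt_of_le_of_lt key (Cardinal.natCast_lt_aleph0))
end KLem

section KLem2
variable {A V : Type*} [CommRing A] [Algebra ℂ A] [CommRing V] [Algebra A V] [Algebra ℂ V]
  [IsScalarTower ℂ A V]

/-- The `f`-saturation of the image of `A`. -/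
def satA (f : A) (V : Type*) [CommRing V] [Algebra A V] : Subalgebra A V where
  carrier := {v | ∃ (c : ℕ) (a : A), f ^ c • v = algebraMap A V a}
  mul_mem' := by
    rintro v w ⟨c, a, h⟩ ⟨c', a', h'⟩
    refine ⟨c + c', a * a', ?_⟩
    rw [map_mul, ← h, ← h', pow_add, smul_mul_smul_comm]
  add_mem' := by
    rintro v w ⟨c, a, h⟩ ⟨c', a', h'⟩
    refine ⟨c + c', f ^ c' * a + f ^ c * a', ?_⟩
    rw [map_add, map_mul, map_mul, ← h, ← h', ← Algebra.smul_def, ← Algebra.smul_def, smul_smul,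
      smul_smul, ← pow_add, ← pow_add, smul_add, add_comm c' c]
  algebraMap_mem' := fun a => ⟨0, a, by simp⟩

lemma exists_pow_of_fin {B : Type*} [CommRing B] [Algebra ℂ B] (I : Ideal B)
    (hI : FiniteDimensional ℂ (B ⧸ I)) (t : B) : ∃ (N : ℕ) (e : B), t ^ N - t ^ (N + 1) * e ∈ I := by
  have : IsArtinianRing (B ⧸ I) := IsArtinianRing.of_finite ℂ _
  obtain ⟨N, y, hy⟩ := IsArtinian.exists_pow_succ_smul_dvd (R := B ⧸ I) (M := B ⧸ I)
    (Ideal.Quotient.mk I t) 1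
  obtain ⟨e, rfl⟩ := Ideal.Quotient.mk_surjective y
  refine ⟨N, e, ?_⟩
  rw [← Ideal.Quotient.mk_eq_mk_iff_sub_mem]
  simp only [smul_eq_mul, mul_one, Nat.succ_eq_add_one] at hy
  rw [map_mul, map_pow, map_pow, hy]

lemma fin_of_liftQ {M : Type*} [AddCommGroup M] [Module A M] [Module ℂ M] [IsScalarTower ℂ A M]
    {Q : Type*} [AddCommGroup Q] [Module A Q] [Module ℂ Q] [IsScalarTower ℂ A Q]
    (U : Submodule A M) (φ : M →ₗ[A] Q) (h : U ≤ LinearMap.ker φ) (hU : FiniteDimensional ℂ (M ⧸ U))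
    (hs : Function.Surjective φ) : FiniteDimensional ℂ Q :=
  Module.Finite.of_surjective ((U.liftQ φ h).restrictScalars ℂ) (by
    intro y
    obtain ⟨x, rfl⟩ := hs y
    exact ⟨U.mkQ x, rfl⟩)

lemma K2 (f : A) (hf : ∀ v : V, f • v = 0 → v = 0)
    (hI : FiniteDimensional ℂ (A ⧸ Ideal.span {f}))
    (hs : ∀ v : V, ∃ t ∈ satA f V, IsUnit t ∧ t * v ∈ satA f V) :
    FiniteDimensional ℂ (V ⧸ Ideal.span {algebraMap A V f}) := by
  have h1 : FiniteDimensional ℂ (satA f V ⧸ scl f (⊤ : Submodule A (satA f V))) := by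
    refine K1_gen (M := satA f V) f (fun m hm => Subtype.ext (hf m (congrArg Subtype.val hm))) hI 1
      (fun m => ?_)
    obtain ⟨c, a, h⟩ := m.2
    refine ⟨c, Submodule.mem_span_singleton.2 ⟨a, Subtype.ext ?_⟩⟩
    simp only [SetLike.val_smul, OneMemClass.coe_one]
    rw [h, Algebra.smul_def, mul_one]
  have h2 : FiniteDimensional ℂ (satA f V ⧸ Ideal.span {algebraMap A (satA f V) f}) := by
    refine fin_of_liftQ (A := A) (scl f (⊤ : Submodule A (satA f V)))
      (Ideal.Quotient.mkₐ A (Ideal.span {algebraMap A (satA f V) f})).toLinearMap ?_ h1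
      (Ideal.Quotient.mkₐ_surjective A _)
    rintro _ ⟨x, -, rfl⟩
    refine Ideal.Quotient.eq_zero_iff_mem.2 (Ideal.mem_span_singleton'.2 ⟨x, ?_⟩)
    rw [LinearMap.lsmul_apply, Algebra.smul_def, mul_comm]
  refine fin_of_liftQ (A := A) (scl f (⊤ : Submodule A (satA f V)))
      ((Ideal.Quotient.mkₐ A (Ideal.span {algebraMap A V f})).toLinearMap.comp
      (satA f V).val.toLinearMap) ?_ h1 ?_
  · rintro _ ⟨x, -, rfl⟩
    refine Ideal.Quotient.eq_zero_iff_mem.2 (Ideal.mem_span_singleton'.2 ⟨x, ?_⟩)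
    simp [Algebra.smul_def, mul_comm]
  · intro y
    obtain ⟨v, rfl⟩ := Ideal.Quotient.mk_surjective y
    obtain ⟨t, ht, hu, htv⟩ := hs v
    obtain ⟨N, e, hNe⟩ := exists_pow_of_fin _ h2 ⟨t, ht⟩
    obtain ⟨g, hg⟩ := Ideal.mem_span_singleton'.1 hNe
    have hg' : (g : V) * algebraMap A V f = t ^ N - t ^ (N + 1) * e := by
      simpa using congrArg Subtype.val hg
    obtain ⟨u, rfl⟩ := hu
    refine ⟨e * ⟨u * v, htv⟩, ?_⟩
    refine Ideal.Quotient.eq.2 ?_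
    show (e : V) * (u * v) - v ∈ Ideal.span {algebraMap A V f}
    refine Ideal.mem_span_singleton'.2 ⟨- ((↑(u⁻¹) : V) ^ N * g * v), ?_⟩
    have hu1 : ((↑(u⁻¹) : V)) ^ N * (u : V) ^ N = 1 := by
      rw [← mul_pow]; simp
    linear_combination (-(↑(u⁻¹) : V) ^ N * v) * hg' + (- v + u * e * v) * hu1
end KLem2
end

noncomputable section
section Gam
variable {V : Type*} [CommRing V] [IsDomain V] [Algebra ℂ V]
open PowerSeries in
/-- Related elements. -/
def RelS (s v : V) (φ : PowerSeries ℂ) : Prop :=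
  ∀ k : ℕ, ∃ P : Polynomial ℂ, s ^ k ∣ v - Polynomial.aeval s P ∧
    (PowerSeries.X : PowerSeries ℂ) ^ k ∣ φ - (P : PowerSeries ℂ)

lemma RelS.add {s v w : V} {φ ψ : PowerSeries ℂ} (h : RelS s v φ) (h2 : RelS s w ψ) :
    RelS s (v + w) (φ + ψ) := fun k => by
  obtain ⟨P, a, b⟩ := h k
  obtain ⟨Q, c, d⟩ := h2 k
  refine ⟨P + Q, ?_, ?_⟩
  · convert dvd_add a c using 1; simp; ring
  · convert dvd_add b d using 1; simp; ring

lemma RelS.mul {s v w : V} {φ ψ : PowerSeries ℂ} (h : RelS s v φ) (h2 : RelS s w ψ) :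
    RelS s (v * w) (φ * ψ) := fun k => by
  obtain ⟨P, a, b⟩ := h k
  obtain ⟨Q, c, d⟩ := h2 k
  refine ⟨P * Q, ?_, ?_⟩
  · convert dvd_add (a.mul_right w) (c.mul_left (Polynomial.aeval s P)) using 1; simp; ring
  · convert dvd_add (b.mul_right ψ) (d.mul_left (P : PowerSeries ℂ)) using 1; simp; ring

lemma RelS.algMap (s : V) (c : ℂ) : RelS s (algebraMap ℂ V c) (algebraMap ℂ _ c) := fun k =>
  ⟨Polynomial.C c, by simp, by simp [PowerSeries.algebraMap_apply]⟩

lemma RelS.self (s : V) : RelS s s PowerSeries.X := fun k => ⟨Polynomial.X, by simp, by simp⟩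

lemma aeval_dvd (s : V) (hs0 : s ≠ 0) (hsu : ¬ IsUnit s) : ∀ (k : ℕ) (P : Polynomial ℂ),
    s ^ k ∣ Polynomial.aeval s P → Polynomial.X ^ k ∣ P
  | 0, P, _ => by simp
  | k + 1, P, h => by
    have e := Polynomial.divX_mul_X_add P
    have h0 : P.coeff 0 = 0 := by
      by_contra hc
      have e2 := congrArg (Polynomial.aeval s) e
      simp only [map_add, map_mul, Polynomial.aeval_X, Polynomial.aeval_C] at e2
      have : s ∣ algebraMap ℂ V (P.coeff 0) := by
        have h1 : s ∣ Polynomial.aeval s P := (dvd_pow_self s (Nat.succ_ne_zero k)).trans h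
        rw [← e2] at h1
        exact (dvd_add_right (Dvd.intro_left _ rfl)).1 h1
      exact hsu (isUnit_of_dvd_unit this ((isUnit_iff_ne_zero.2 hc).map (algebraMap ℂ V)))
    rw [h0, map_zero, add_zero] at e
    rw [← e, map_mul, Polynomial.aeval_X, pow_succ] at h
    have := aeval_dvd s hs0 hsu k _ (by
      exact (mul_dvd_mul_iff_right hs0).1 h)
    rw [← e, pow_succ]
    exact mul_dvd_mul_right this _

lemma RelS.unique {s v : V} (hs0 : s ≠ 0) (hsu : ¬ IsUnit s) {φ ψ : PowerSeries ℂ}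
    (h : RelS s v φ) (h2 : RelS s v ψ) : φ = ψ := by
  have key : ∀ k, (PowerSeries.X : PowerSeries ℂ) ^ k ∣ φ - ψ := fun k => by
    obtain ⟨P, a, b⟩ := h k
    obtain ⟨Q, c, d⟩ := h2 k
    have h3 : s ^ k ∣ Polynomial.aeval s (P - Q) := by
      convert dvd_sub c a using 1; simp
    have h4 := aeval_dvd s hs0 hsu k _ h3
    have h5 : (PowerSeries.X : PowerSeries ℂ) ^ k ∣ ((P - Q : Polynomial ℂ) : PowerSeries ℂ) := by
      have := map_dvd (Polynomial.coeToPowerSeries.ringHom (R := ℂ)) h4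
      simpa using this
    convert dvd_add (dvd_sub b d) h5 using 1
    push_cast; ring
  ext n
  have := (PowerSeries.X_pow_dvd_iff.1 (key (n + 1))) n (Nat.lt_succ_self n)
  rw [map_sub, sub_eq_zero] at this
  exact this

lemma RelS.exists (s : V) (hres : ∀ v : V, ∃ c : ℂ, s ∣ v - algebraMap ℂ V c) (v : V) :
    ∃ φ, RelS s v φ := by
  choose r nx hnx using hres
  refine ⟨PowerSeries.mk fun k => r (nx^[k] v), fun k => ?_⟩
  refine ⟨PowerSeries.trunc k (PowerSeries.mk fun k => r (nx^[k] v)), ?_, ?_⟩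
  · refine ⟨nx^[k] v, ?_⟩
    induction k with
    | zero => simp
    | succ k ih =>
      rw [PowerSeries.trunc_succ, Function.iterate_succ_apply', map_add, Polynomial.aeval_monomial]
      have h1 := hnx (nx^[k] v)
      simp only [PowerSeries.coeff_mk]
      linear_combination ih + s ^ k * h1
  · rw [PowerSeries.X_pow_dvd_iff]
    intro m hm
    simp [PowerSeries.coeff_trunc, hm]

lemma exists_gam (s : V) (hs0 : s ≠ 0) (hsu : ¬ IsUnit s)
    (hres : ∀ v : V, ∃ c : ℂ, s ∣ v - algebraMap ℂ V c) :
    ∃ γ : V →ₐ[ℂ] PowerSeries ℂ, γ s = PowerSeries.X := by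
  choose γ hγ using RelS.exists s hres
  have u : ∀ {v φ}, RelS s v φ → γ v = φ := fun h => RelS.unique hs0 hsu (hγ _) h
  refine ⟨{
    toFun := γ
    map_one' := ?_
    map_mul' := ?_
    map_zero' := ?_
    map_add' := ?_
    commutes' := ?_ }, ?_⟩
  · apply u; simpa using RelS.algMap s 1
  · intro x y; exact u ((hγ x).mul (hγ y))
  · apply u; simpa using RelS.algMap s 0
  · intro x y; exact u ((hγ x).add (hγ y))
  · intro c; exact u (RelS.algMap s c)
  · exact u (RelS.self s)

lemma exists_arc [ValuationRing V] (f : V) (hf0 : f ≠ 0) (hfu : ¬ IsUnit f)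
    (hfin : FiniteDimensional ℂ (V ⧸ Ideal.span {f})) :
    ∃ γ : V →ₐ[ℂ] PowerSeries ℂ, γ f ≠ 0 ∧ ∀ z, ¬ IsUnit z → PowerSeries.X ∣ γ z := by
  have hfm : f ∈ IsLocalRing.maximalIdeal V := hfu
  have hle : Ideal.span {f} ≤ IsLocalRing.maximalIdeal V := by
    rw [Ideal.span_singleton_le_iff_mem]; exact hfm
  have hNoeth : IsNoetherianRing (V ⧸ Ideal.span {f}) := by
    have : IsArtinianRing (V ⧸ Ideal.span {f}) := IsArtinianRing.of_finite ℂ _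
    infer_instance
  have hfg : (IsLocalRing.maximalIdeal V).FG := by
    obtain ⟨t, ht⟩ := (isNoetherianRing_iff_ideal_fg _).1 hNoeth
      ((IsLocalRing.maximalIdeal V).map (Ideal.Quotient.mk (Ideal.span {f})))
    classical
    choose l hl using Ideal.Quotient.mk_surjective (I := Ideal.span {f})
    refine ⟨insert f (t.image l), ?_⟩
    apply le_antisymm
    · rw [Submodule.span_le]
      intro x hx
      simp only [Finset.coe_insert, Finset.coe_image, Set.mem_insert_iff, Set.mem_image] at hx
      rcases hx with rfl | ⟨y, hy, rfl⟩
      · exact hfm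
      · have : y ∈ (IsLocalRing.maximalIdeal V).map (Ideal.Quotient.mk (Ideal.span {f})) := by
          rw [← ht]; exact Submodule.subset_span hy
        rw [← hl y] at this
        have := Ideal.mem_comap.2 this
        rw [Ideal.comap_map_of_surjective _ Ideal.Quotient.mk_surjective] at this
        rw [← RingHom.ker_eq_comap_bot, Ideal.mk_ker, sup_eq_left.2 hle] at this
        exact this
    · have : (IsLocalRing.maximalIdeal V) ≤ Ideal.span (insert f (l '' t)) := by
        have h2 : (IsLocalRing.maximalIdeal V).map (Ideal.Quotient.mk (Ideal.span {f})) ≤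
            (Ideal.span (insert f (l '' t))).map (Ideal.Quotient.mk (Ideal.span {f})) := by
          rw [← ht, Ideal.span_le]
          intro y hy
          rw [← hl y]
          exact Ideal.mem_map_of_mem _ (Ideal.subset_span
            (Set.mem_insert_of_mem _ (Set.mem_image_of_mem _ hy)))
        intro x hx
        have := Ideal.mem_comap.2 (h2 (Ideal.mem_map_of_mem _ hx))
        rw [Ideal.comap_map_of_surjective _ Ideal.Quotient.mk_surjective,
          ← RingHom.ker_eq_comap_bot, Ideal.mk_ker, sup_eq_left.2] at this
        · exact this
        · rw [Ideal.span_singleton_le_iff_mem]; exact Ideal.subset_span (Set.mem_insert _ _)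
      intro x hx
      have := this hx
      simpa using this
  obtain ⟨s, hs⟩ := (IsBezout.isPrincipal_of_FG _ hfg).principal
  rw [Ideal.submodule_span_eq] at hs
  have hdvd : ∀ z : V, ¬ IsUnit z → s ∣ z := fun z hz => by
    have : z ∈ IsLocalRing.maximalIdeal V := hz
    rw [hs] at this
    exact Ideal.mem_span_singleton.1 this
  have hsu : ¬ IsUnit s := by
    have : s ∈ IsLocalRing.maximalIdeal V := by rw [hs]; exact Ideal.mem_span_singleton_self s
    exact this
  have hs0 : s ≠ 0 := by
    rintro rfl
    exact hf0 (zero_dvd_iff.1 (hdvd f hfu))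
  have hres : ∀ v : V, ∃ c : ℂ, s ∣ v - algebraMap ℂ V c := by
    have hfd : FiniteDimensional ℂ (V ⧸ IsLocalRing.maximalIdeal V) :=
      fin_of_liftQ (A := V) (Ideal.span {f}) (Ideal.Quotient.mkₐ V (IsLocalRing.maximalIdeal V)).toLinearMap
        (fun x hx => Ideal.Quotient.eq_zero_iff_mem.2 (hle hx)) hfin (Ideal.Quotient.mkₐ_surjective V _)
    letI : Field (V ⧸ IsLocalRing.maximalIdeal V) := Ideal.Quotient.field _
    have hb := IsAlgClosed.algebraMap_bijective_of_isIntegral (k := ℂ) (K := V ⧸ IsLocalRing.maximalIdeal V)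
    intro v
    obtain ⟨c, hc⟩ := hb.2 (Ideal.Quotient.mk _ v)
    refine ⟨c, ?_⟩
    rw [← Ideal.mem_span_singleton, ← hs, ← Ideal.Quotient.mk_eq_mk_iff_sub_mem]
    exact hc.symm
  obtain ⟨γ, hγ⟩ := exists_gam s hs0 hsu hres
  refine ⟨γ, ?_, fun z hz => ?_⟩
  · obtain ⟨N, e, hNe⟩ := exists_pow_of_fin _ hfin s
    have hu : IsUnit (1 - s * e) := by
      by_contra h
      have h1 : (1 - s * e) ∈ IsLocalRing.maximalIdeal V := h
      have h2 : s * e ∈ IsLocalRing.maximalIdeal V := by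
        rw [hs]; exact Ideal.mul_mem_right _ _ (Ideal.mem_span_singleton_self s)
      have h3 := Ideal.add_mem _ h1 h2
      rw [sub_add_cancel] at h3
      exact (Ideal.ne_top_iff_one _).1 (IsLocalRing.maximalIdeal.isMaximal V).ne_top h3
    have h4 : f ∣ s ^ N * (1 - s * e) := by
      rw [← Ideal.mem_span_singleton]; convert hNe using 1; ring
    have h5 : f ∣ s ^ N := (hu.dvd_mul_right).1 h4
    have h6 := map_dvd γ h5
    rw [map_pow, hγ] at h6
    intro h0
    rw [h0, zero_dvd_iff] at h6
    exact pow_ne_zero _ PowerSeries.X_ne_zero h6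
  · have := map_dvd γ (hdvd z hz)
    rwa [hγ] at this
end Gam
end

noncomputable section
section ArcL
universe u
lemma arcV {A V : Type*} [CommRing A] [Algebra ℂ A] [CommRing V] [IsDomain V] [ValuationRing V]
    (φ : A →+* V) (f : A) (hfin : FiniteDimensional ℂ (A ⧸ Ideal.span {f}))
    (hf0 : φ f ≠ 0) (hfu : ¬ IsUnit (φ f))
    (hs : ∀ v : V, ∃ t, IsUnit t ∧ (∃ (c : ℕ) (a : A), φ f ^ c * t = φ a) ∧
      ∃ (c : ℕ) (a : A), φ f ^ c * (t * v) = φ a) :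
    ∃ γ : V →+* PowerSeries ℂ, (∀ c : ℂ, γ (φ (algebraMap ℂ A c)) = algebraMap ℂ _ c) ∧
      γ (φ f) ≠ 0 ∧ ∀ z, ¬ IsUnit z → PowerSeries.X ∣ γ z := by
  letI : Algebra A V := φ.toAlgebra
  letI : Algebra ℂ V := (φ.comp (algebraMap ℂ A)).toAlgebra
  haveI : IsScalarTower ℂ A V := IsScalarTower.of_algebraMap_eq fun _ => rfl
  have h1 : FiniteDimensional ℂ (V ⧸ Ideal.span {algebraMap A V f}) := by
    refine K2 f (fun v hv => ?_) hfin fun v => ?_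
    · rw [Algebra.smul_def] at hv
      exact (mul_eq_zero.1 hv).resolve_left hf0
    · obtain ⟨t, ht, ⟨c, a, h⟩, c', a', h'⟩ := hs v
      refine ⟨t, ⟨c, a, ?_⟩, ht, c', a', ?_⟩
      · rw [Algebra.smul_def, map_pow]; exact h
      · rw [Algebra.smul_def, map_pow]; exact h'
  obtain ⟨γ, h2, h3⟩ := exists_arc (V := V) (φ f) hf0 hfu h1
  exact ⟨γ.toRingHom, fun c => γ.commutes c, h2, h3⟩

lemma exists_field_loc {A : Type u} [CommRing A] (W : Submonoid A) (h0 : (0 : A) ∉ W) :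
    ∃ (K : Type u) (_ : Field K) (χ : A →+* K), (∀ w ∈ W, χ w ≠ 0) ∧
      ∀ x : K, ∃ a w, w ∈ W ∧ x * χ w = χ a := by
  haveI : Nontrivial (Localization W) := by
    rw [← not_subsingleton_iff_nontrivial, IsLocalization.subsingleton_iff (M := W)]
    exact h0
  obtain ⟨𝔐, h𝔐⟩ := Ideal.exists_maximal (Localization W)
  refine ⟨Localization W ⧸ 𝔐, Ideal.Quotient.field 𝔐,
    (Ideal.Quotient.mk 𝔐).comp (algebraMap A (Localization W)), fun w hw => ?_, fun x => ?_⟩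
  · letI := Ideal.Quotient.field 𝔐
    exact ((IsLocalization.map_units (Localization W) (⟨w, hw⟩ : W)).map
      (Ideal.Quotient.mk 𝔐)).ne_zero
  · obtain ⟨y, rfl⟩ := Ideal.Quotient.mk_surjective x
    obtain ⟨⟨a, w⟩, h⟩ := IsLocalization.surj W y
    refine ⟨a, w, w.2, ?_⟩
    have := congrArg (Ideal.Quotient.mk 𝔐) h
    rw [map_mul] at this
    exact this

theorem arc_lemma {A : Type*} [CommRing A] [IsLocalRing A] [Algebra ℂ A]
    (hres : ∀ a : A, ∃ c : ℂ, a - algebraMap ℂ A c ∈ IsLocalRing.maximalIdeal A)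
    (f : A) (hfm : f ∈ IsLocalRing.maximalIdeal A) (hf : ∀ a, f * a = 0 → a = 0)
    (hfin : FiniteDimensional ℂ (A ⧸ Ideal.span {f}))
    (p q : A) (c : ℕ) (hp : p ∣ f ^ c)
    (harc : ∀ γ : A →ₐ[ℂ] PowerSeries ℂ, γ f ≠ 0 → ¬ (PowerSeries.X * γ p ∣ γ q)) :
    ∃ d > 0, ∃ a : ℕ → A, p ^ d = ∑ i ∈ Finset.range d, a i * p ^ i * q ^ (d - i) := by
  let L := Localization.Away f
  have hinj : Function.Injective (algebraMap A L) := by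
    refine IsLocalization.injective L (M := Submonoid.powers f) ?_
    rintro _ ⟨k, rfl⟩
    refine pow_mem ?_ k
    exact mem_nonZeroDivisors_iff.2 ⟨fun a h => hf a h, fun a h => hf a (by rwa [mul_comm])⟩
  have hfL : IsUnit (algebraMap A L f) := IsLocalization.Away.algebraMap_isUnit f
  have hpL : IsUnit (algebraMap A L p) := by
    refine isUnit_of_dvd_unit (map_dvd (algebraMap A L) hp) ?_
    rw [map_pow]; exact hfL.pow c
  obtain ⟨pu, hpu⟩ := hpL
  let z : L := algebraMap A L q * ↑(pu⁻¹)
  have hzp : z * algebraMap A L p = algebraMap A L q := by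
    rw [← hpu]; simp [z]
  let A' := Algebra.adjoin A {z}
  have hz : z ∈ A' := Algebra.subset_adjoin rfl
  have hA' : ∀ a ∈ A', ∃ P : Polynomial A, Polynomial.aeval z P = a := fun a ha => by
    have : a ∈ Algebra.adjoin A {z} := ha
    rw [Algebra.adjoin_singleton_eq_range_aeval] at this
    exact this
  by_cases hzu : IsUnit (⟨z, hz⟩ : A')
  · obtain ⟨⟨y, hy⟩, hzy⟩ := isUnit_iff_exists_inv.1 hzu
    obtain ⟨P, rfl⟩ := hA' y hy
    have h1 : z * Polynomial.aeval z P = 1 := congrArg Subtype.val hzy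
    refine ⟨P.natDegree + 1, Nat.succ_pos _, fun j => P.coeff (P.natDegree - j), hinj ?_⟩
    rw [← Finset.sum_range_reflect]
    have h2 := congrArg (fun x => algebraMap A L p ^ (P.natDegree + 1) * x) h1
    simp only [mul_one] at h2
    rw [map_pow, ← h2, Polynomial.aeval_eq_sum_range, Finset.mul_sum, Finset.mul_sum, map_sum]
    refine Finset.sum_congr rfl fun i hi => ?_
    rw [Finset.mem_range] at hi
    have e1 : P.natDegree - (P.natDegree + 1 - 1 - i) = i := by omega
    have e2 : P.natDegree + 1 - (P.natDegree + 1 - 1 - i) = i + 1 := by omega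
    have e3 : P.natDegree + 1 = (P.natDegree - i) + (i + 1) := by omega
    have e4 : P.natDegree + 1 - 1 - i = P.natDegree - i := by omega
    beta_reduce
    rw [e1, e2, e4, e3, pow_add, map_mul, map_mul, map_pow, map_pow, ← hzp, mul_pow,
      Algebra.smul_def]
    ring
  exfalso
  obtain ⟨𝔫, h𝔫, hz𝔫⟩ := exists_max_ideal_of_mem_nonunits (mem_nonunits_iff.2 hzu)
  have hr1 : ∀ a' : A', ∃ a : A, a' - algebraMap A A' a ∈ 𝔫 := by
    rintro ⟨a', ha'⟩
    obtain ⟨P, rfl⟩ := hA' a' ha'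
    refine ⟨P.coeff 0, ?_⟩
    have e := congrArg (Polynomial.aeval (⟨z, hz⟩ : A')) (Polynomial.divX_mul_X_add P)
    have e' : (⟨Polynomial.aeval z P, ha'⟩ : A') = Polynomial.aeval (⟨z, hz⟩ : A') P := by
      apply Subtype.ext
      have := Polynomial.aeval_algHom_apply A'.val (⟨z, hz⟩ : A') P
      exact this
    rw [e', ← e]
    simp only [map_add, map_mul, Polynomial.aeval_X, Polynomial.aeval_C, add_sub_cancel_right]
    exact 𝔫.mul_mem_left _ hz𝔫
  have hr2 : ∀ a ∈ IsLocalRing.maximalIdeal A, algebraMap A A' a ∈ 𝔫 := by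
    intro a ha
    by_contra hna
    obtain ⟨b, i, hi, hbi⟩ := h𝔫.exists_inv hna
    obtain ⟨b0, hb0⟩ := hr1 b
    have h3 : algebraMap A A' (1 - b0 * a) ∈ 𝔫 := by
      have := 𝔫.add_mem hi (𝔫.mul_mem_right (algebraMap A A' a) hb0)
      convert this using 1
      rw [map_sub, map_one, map_mul]
      linear_combination -hbi
    have h4 : IsUnit (1 - b0 * a) := by
      by_contra h
      have h1 : (1 - b0 * a) ∈ IsLocalRing.maximalIdeal A := h
      have h3 := Ideal.add_mem _ h1 (Ideal.mul_mem_left _ b0 ha)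
      rw [sub_add_cancel] at h3
      exact (Ideal.ne_top_iff_one _).1 (IsLocalRing.maximalIdeal.isMaximal A).ne_top h3
    exact h𝔫.ne_top (Ideal.eq_top_of_isUnit_mem _ h3 (h4.map _))
  have hr3 : ∀ a' : A', ∃ c : ℂ, a' - algebraMap A A' (algebraMap ℂ A c) ∈ 𝔫 := fun a' => by
    obtain ⟨a, ha⟩ := hr1 a'
    obtain ⟨c, hc⟩ := hres a
    refine ⟨c, ?_⟩
    have := 𝔫.add_mem ha (hr2 _ hc)
    rw [map_sub] at this
    convert this using 1
    ring
  let f' : A' := algebraMap A A' f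
  have hf' : ∀ k : ℕ, ∀ a : A', a * f' ^ k = 0 → a = 0 := fun k a h => by
    have h1 : (a : L) * algebraMap A L f ^ k = 0 := by
      exact congrArg Subtype.val h
    exact Subtype.ext ((hfL.pow k).mul_left_eq_zero.1 h1)
  haveI : 𝔫.IsPrime := h𝔫.isPrime
  let W : Submonoid A' := 𝔫.primeCompl ⊔ Submonoid.powers f'
  have h0W : (0 : A') ∉ W := by
    intro h
    obtain ⟨t, ht, _, ⟨k, rfl⟩, htk⟩ := Submonoid.mem_sup.1 h
    exact ht (by rw [hf' k t htk]; exact 𝔫.zero_mem)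
  obtain ⟨KK, _, χ, hχW, hχs⟩ := exists_field_loc W h0W
  have hχt : ∀ t : A', t ∉ 𝔫 → χ t ≠ 0 := fun t ht =>
    hχW t ((le_sup_left : 𝔫.primeCompl ≤ W) ht)
  have hχf : χ f' ≠ 0 :=
    hχW f' ((le_sup_right : Submonoid.powers f' ≤ W) (Submonoid.mem_powers f'))
  have hsurj : ∀ x : KK, ∃ (k : ℕ) (t a : A'), t ∉ 𝔫 ∧ x * (χ t * χ f' ^ k) = χ a := by
    intro x
    obtain ⟨a, w, hw, h⟩ := hχs x
    obtain ⟨t, ht, _, ⟨k, rfl⟩, htk⟩ := Submonoid.mem_sup.1 hw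
    refine ⟨k, t, a, ht, ?_⟩
    rw [← map_pow, ← map_mul, htk]
    exact h
  let I : Ideal χ.range := 𝔫.map χ.rangeRestrict
  have hI : I ≠ ⊤ := by
    intro h
    have h1 : (1 : χ.range) ∈ I := by rw [h]; trivial
    obtain ⟨x, hx, hx1⟩ := (Ideal.mem_map_iff_of_surjective _ χ.rangeRestrict_surjective).1 h1
    have h2 : χ x = 1 := congrArg Subtype.val hx1
    refine hχt (1 - x) (fun h => ?_) (by rw [map_sub, map_one, h2, sub_self])
    have := 𝔫.add_mem h hx
    rw [sub_add_cancel] at this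
    exact (Ideal.ne_top_iff_one _).1 h𝔫.ne_top this
  obtain ⟨B, hB, hIB⟩ := Ideal.image_subset_nonunits_valuationSubring I hI
  have hχB : ∀ a, χ a ∈ B := fun a => hB ⟨a, rfl⟩
  let ψ : A' →+* B := χ.codRestrict B.toSubring hχB
  have hψ : ∀ a, ((ψ a : B) : KK) = χ a := fun a => rfl
  have hψn : ∀ a ∈ 𝔫, ¬ IsUnit (ψ a) := by
    intro a ha
    have h1 : χ a ∈ B.nonunits := hIB ⟨χ.rangeRestrict a, Ideal.mem_map_of_mem _ ha, rfl⟩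
    exact ValuationSubring.coe_mem_nonunits_iff.1 h1
  have hψu : ∀ t : A', t ∉ 𝔫 → IsUnit (ψ t) := by
    intro t ht
    obtain ⟨c, hc⟩ := hr3 t
    have hc0 : c ≠ 0 := by
      rintro rfl
      simp at hc; exact ht hc
    by_contra hu
    have h1 : ψ t ∈ IsLocalRing.maximalIdeal B := hu
    have h2 : ψ (t - algebraMap A A' (algebraMap ℂ A c)) ∈ IsLocalRing.maximalIdeal B := hψn _ hc
    have h3 := Ideal.sub_mem _ h1 h2
    rw [map_sub, sub_sub_cancel] at h3
    have h4 : IsUnit (ψ (algebraMap A A' (algebraMap ℂ A c))) :=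
      (((isUnit_iff_ne_zero.2 hc0).map (algebraMap ℂ A)).map (algebraMap A A')).map ψ
    exact h3 h4
  have hsat : ∀ a' : A', ∃ (k : ℕ) (a : A), f' ^ k * a' = algebraMap A A' a := by
    intro a'
    obtain ⟨⟨a, ⟨_, k, rfl⟩⟩, h⟩ := IsLocalization.surj (Submonoid.powers f) (a' : L)
    refine ⟨k, a, Subtype.ext ?_⟩
    rw [mul_comm]
    simp only [map_pow] at h
    exact h
  obtain ⟨γ, hγ1, hγ2, hγ3⟩ := arcV (ψ.comp (algebraMap A A')) f hfin
    (fun h => hχf (by rw [← hψ]; exact congrArg Subtype.val h))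
    (hψn _ (hr2 f hfm)) (fun v => by
      obtain ⟨k, t, a, ht, hta⟩ := hsurj v
      refine ⟨ψ t, hψu t ht, ?_, ?_⟩
      · obtain ⟨k', b, hb⟩ := hsat t
        refine ⟨k', b, ?_⟩
        rw [RingHom.comp_apply, RingHom.comp_apply, ← hb, map_mul, map_pow]
      · obtain ⟨k', b, hb⟩ := hsat a
        refine ⟨k' + k, b, ?_⟩
        rw [RingHom.comp_apply, RingHom.comp_apply, ← hb, map_mul, map_pow, pow_add, mul_assoc]
        congr 1
        apply Subtype.ext
        show χ f' ^ k * (χ t * (v : KK)) = χ a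
        rw [← hta]; ring)
  let Γ : A →ₐ[ℂ] PowerSeries ℂ :=
    { (γ.comp (ψ.comp (algebraMap A A'))) with commutes' := hγ1 }
  refine harc Γ hγ2 ?_
  have h1 : (⟨z, hz⟩ : A') * algebraMap A A' p = algebraMap A A' q := Subtype.ext hzp
  have h2 : Γ q = γ (ψ ⟨z, hz⟩) * Γ p := by
    show γ (ψ (algebraMap A A' q)) = γ (ψ ⟨z, hz⟩) * γ (ψ (algebraMap A A' p))
    rw [← h1, map_mul, map_mul]
  rw [h2]
  exact mul_dvd_mul_right (hγ3 _ (hψn _ hz𝔫)) _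
end ArcL
end

noncomputable section
section PowAssoc
lemma assoc_deriv (G : PowerSeries ℂ) (hG : G ≠ 0) (hX : PowerSeries.X ∣ G) :
    Associated (PowerSeries.X * PowerSeries.derivative ℂ G) G := by
  have hfin : FiniteMultiplicity (PowerSeries.X : PowerSeries ℂ) G :=
    FiniteMultiplicity.of_prime_left PowerSeries.X_prime hG
  obtain ⟨u, hu, hnd⟩ := hfin.exists_eq_pow_mul_and_not_dvd
  have hk : multiplicity (PowerSeries.X : PowerSeries ℂ) G ≠ 0 := by
    rwa [Ne, multiplicity_eq_zero, not_not]
  obtain ⟨k, hk⟩ := Nat.exists_eq_succ_of_ne_zero hk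
  rw [hk] at hu
  have hu0 : IsUnit u := by
    rw [PowerSeries.isUnit_iff_constantCoeff, isUnit_iff_ne_zero]
    rwa [PowerSeries.X_dvd_iff] at hnd
  have h1 : PowerSeries.X * PowerSeries.derivative ℂ G = PowerSeries.X ^ (k + 1) *
      (((k + 1 : ℕ) : PowerSeries ℂ) * u + PowerSeries.X * PowerSeries.derivative ℂ u) := by
    rw [hu, Derivation.leibniz, Derivation.leibniz_pow]
    simp [PowerSeries.derivative_X]
    ring
  have hu1 : IsUnit (((k + 1 : ℕ) : PowerSeries ℂ) * u +
      PowerSeries.X * PowerSeries.derivative ℂ u) := by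
    rw [PowerSeries.isUnit_iff_constantCoeff, isUnit_iff_ne_zero]
    rw [PowerSeries.isUnit_iff_constantCoeff, isUnit_iff_ne_zero] at hu0
    have : (k : ℂ) + 1 ≠ 0 := by exact_mod_cast Nat.succ_ne_zero k
    simp [hu0, this]
  rw [h1, hu]
  exact (associated_mul_unit_left _ _ hu1).trans (associated_mul_unit_right _ _ hu0)

lemma assoc_arc (F H U : PowerSeries ℂ) (K : ℕ) (hF : F ≠ 0) (hH : H ≠ 0)
    (hFX : PowerSeries.X ∣ F) (hHX : PowerSeries.X ∣ H)
    (h : F ^ K * PowerSeries.derivative ℂ H = - (U * PowerSeries.derivative ℂ F)) :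
    Associated (F * U) (F ^ K * H) := by
  have h1 := (assoc_deriv F hF hFX).mul_left U
  have h2 := (assoc_deriv H hH hHX).mul_left (F ^ K)
  have h3 : F ^ K * (PowerSeries.X * PowerSeries.derivative ℂ H) =
     - (U * (PowerSeries.X * PowerSeries.derivative ℂ F)) := by linear_combination PowerSeries.X * h
  rw [h3] at h2
  rw [mul_comm F U]
  exact h1.symm.trans ((Associated.refl _).neg_right.trans h2)
end PowAssoc

section IdxMain
variable {n : ℕ}
variable {O : Type*} [CommRing O] [Algebra ℂ O]

lemma pow_mem_of_fin [IsLocalRing O] (I : Ideal O) (hI : FiniteDimensional ℂ (O ⧸ I)) (t : O)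
    (ht : t ∈ IsLocalRing.maximalIdeal O) : ∃ N, t ^ N ∈ I := by
  obtain ⟨N, e, h⟩ := exists_pow_of_fin I hI t
  refine ⟨N, ?_⟩
  have hu : IsUnit (1 - t * e) := by
    have := Ideal.mul_mem_right e _ ht
    by_contra h'
    have h1 : (1 - t * e) ∈ IsLocalRing.maximalIdeal O := h'
    have h3 := Ideal.add_mem _ h1 this
    rw [sub_add_cancel] at h3
    exact (Ideal.ne_top_iff_one _).1 (IsLocalRing.maximalIdeal.isMaximal O).ne_top h3
  have h2 : t ^ N * (1 - t * e) ∈ I := by convert h using 1; ring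
  exact (Ideal.mul_unit_mem_iff_mem I hu).1 h2

lemma arc_X_dvd [IsLocalRing O] (γ : O →ₐ[ℂ] PowerSeries ℂ) (f : O)
    (hf : f ∈ IsLocalRing.maximalIdeal O) : PowerSeries.X ∣ γ f := by
  rw [PowerSeries.X_dvd_iff]
  by_contra h
  set c := PowerSeries.constantCoeff (γ f) with hc
  have hu : IsUnit (f - algebraMap ℂ O c) := by
    by_contra h'
    have h1 : f - algebraMap ℂ O c ∈ IsLocalRing.maximalIdeal O := h'
    have h3 := Ideal.sub_mem _ hf h1
    rw [sub_sub_cancel] at h3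
    exact h3 ((isUnit_iff_ne_zero.2 h).map (algebraMap ℂ O))
  have := hu.map γ
  rw [PowerSeries.isUnit_iff_constantCoeff, map_sub, AlgHom.commutes] at this
  simp [hc] at this

variable {N : Type*} [AddCommGroup N] [Module O N] [Module ℂ N] [IsScalarTower ℂ O N]

lemma ell_le [IsLocalRing O]
    (hres : ∀ a : O, ∃ c : ℂ, a - algebraMap ℂ O c ∈ IsLocalRing.maximalIdeal O)
    (f : O) (hfm : f ∈ IsLocalRing.maximalIdeal O) (hf : ∀ x : N, f • x = 0 → x = 0)
    (I : Ideal O) (hI : ∀ r ∈ I, ∃ b, r - b * f ∈ Module.annihilator O N)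
    (hIfin : FiniteDimensional ℂ (O ⧸ I)) (p q : O) (c : ℕ)
    (p' : O) (hp : p * p' - f ^ c ∈ Module.annihilator O N)
    (hp0 : ∀ x : N, p • x = 0 → x = 0) (hq0 : ∀ x : N, q • x = 0 → x = 0)
    (hfin : idx (scl q (⊤ : Submodule O N)) ≠ ⊤)
    (harc : ∀ γ : O →ₐ[ℂ] PowerSeries ℂ, (∀ a ∈ Module.annihilator O N, γ a = 0) → γ f ≠ 0 →
      ¬ (PowerSeries.X * γ p ∣ γ q)) :
    idx (scl q (⊤ : Submodule O N)) ≤ idx (scl p (⊤ : Submodule O N)) := by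
  rcases subsingleton_or_nontrivial N with hN | hN
  · rw [Subsingleton.elim (scl q (⊤ : Submodule O N)) (scl p ⊤)]
  set 𝔞 := Module.annihilator O N with h𝔞
  have hmem : ∀ a, a ∈ 𝔞 ↔ ∀ x : N, a • x = 0 := fun a => Module.mem_annihilator
  have hne : 𝔞 ≠ ⊤ := by
    intro h
    obtain ⟨x, hx⟩ := exists_ne (0 : N)
    apply hx
    have : (1 : O) ∈ 𝔞 := by rw [h]; trivial
    simpa using (hmem 1).1 this x
  haveI : Nontrivial (O ⧸ 𝔞) := Ideal.Quotient.nontrivial_iff.2 hne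
  haveI : IsLocalRing (O ⧸ 𝔞) := IsLocalRing.of_surjective' (Ideal.Quotient.mk 𝔞)
    Ideal.Quotient.mk_surjective
  have hm : ∀ a ∈ IsLocalRing.maximalIdeal O, Ideal.Quotient.mk 𝔞 a ∈
      IsLocalRing.maximalIdeal (O ⧸ 𝔞) := by
    intro a ha h
    obtain ⟨y, hy⟩ := isUnit_iff_exists_inv.1 h
    obtain ⟨y, rfl⟩ := Ideal.Quotient.mk_surjective y
    rw [← map_mul, ← map_one (Ideal.Quotient.mk 𝔞), Ideal.Quotient.eq] at hy
    have h1 := Ideal.sub_mem _ (Ideal.mul_mem_right y _ ha) (IsLocalRing.le_maximalIdeal hne hy)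
    rw [sub_sub_cancel] at h1
    exact (Ideal.ne_top_iff_one _).1 (IsLocalRing.maximalIdeal.isMaximal O).ne_top h1
  obtain ⟨d, hd, a, ha⟩ := arc_lemma (A := O ⧸ 𝔞) (fun a => by
      obtain ⟨a, rfl⟩ := Ideal.Quotient.mk_surjective a
      obtain ⟨c, hc⟩ := hres a
      exact ⟨c, hm _ hc⟩) (Ideal.Quotient.mk 𝔞 f) (hm f hfm) (by
      intro a h
      obtain ⟨a, rfl⟩ := Ideal.Quotient.mk_surjective a
      rw [← map_mul, Ideal.Quotient.eq_zero_iff_mem, hmem] at h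
      rw [Ideal.Quotient.eq_zero_iff_mem, hmem]
      intro x
      exact hf _ (by rw [← mul_smul]; exact h x)) (by
      let g : (O ⧸ I) →ₐ[ℂ] ((O ⧸ 𝔞) ⧸ Ideal.span {Ideal.Quotient.mk 𝔞 f}) :=
        Ideal.Quotient.liftₐ I ((Ideal.Quotient.mkₐ ℂ _).comp (Ideal.Quotient.mkₐ ℂ 𝔞)) (by
          intro r hr
          obtain ⟨b, hb⟩ := hI r hr
          have h1 : Ideal.Quotient.mk 𝔞 r = Ideal.Quotient.mk 𝔞 b * Ideal.Quotient.mk 𝔞 f := by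
            rw [← map_mul]; exact Ideal.Quotient.eq.2 hb
          show Ideal.Quotient.mk (Ideal.span {Ideal.Quotient.mk 𝔞 f}) (Ideal.Quotient.mk 𝔞 r) = 0
          rw [Ideal.Quotient.eq_zero_iff_mem, h1]
          exact Ideal.mul_mem_left _ _ (Ideal.mem_span_singleton_self _))
      refine Module.Finite.of_surjective g.toLinearMap ?_
      intro y
      obtain ⟨y, rfl⟩ := Ideal.Quotient.mk_surjective y
      obtain ⟨y, rfl⟩ := Ideal.Quotient.mk_surjective y
      exact ⟨Ideal.Quotient.mk I y, rfl⟩)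
    (Ideal.Quotient.mk 𝔞 p) (Ideal.Quotient.mk 𝔞 q) c
    ⟨Ideal.Quotient.mk 𝔞 p', by
      rw [← map_mul, ← map_pow]; exact (Ideal.Quotient.eq.2 hp).symm⟩ (by
      intro γ hγ
      refine harc (γ.comp (Ideal.Quotient.mkₐ ℂ 𝔞)) (fun a ha => ?_) hγ
      show γ (Ideal.Quotient.mk 𝔞 a) = 0
      rw [Ideal.Quotient.eq_zero_iff_mem.2 ha, map_zero])
  choose a' ha' using fun i => Ideal.Quotient.mk_surjective (a i)
  refine idx_le_of_integral p q hp0 hq0 hfin d hd a' fun x => ?_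
  have : p ^ d - (∑ i ∈ Finset.range d, a' i * p ^ i * q ^ (d - i)) ∈ 𝔞 := by
    rw [← Ideal.Quotient.eq]
    simp only [map_pow, map_sum, map_mul, ha', ha]
  have := (hmem _).1 this x
  rwa [sub_smul, sub_eq_zero] at this

theorem idx_main [IsLocalRing O]
    (hres : ∀ a : O, ∃ c : ℂ, a - algebraMap ℂ O c ∈ IsLocalRing.maximalIdeal O)
    (v w : Fin n → O) (f h : O) (hfm : f ∈ IsLocalRing.maximalIdeal O)
    (hhm : h ∈ IsLocalRing.maximalIdeal O)
    (e1 e2 : N) (hgen : Submodule.span O {e1, e2} = ⊤)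
    (hrel : ∀ c : Fin n → O, (∑ i, c i * v i) • e1 + (∑ i, c i * w i) • e2 = 0)
    (hJ : ∀ r ∈ Jm v w, ∀ x : N, r • x = 0)
    (hf : ∀ x : N, f • x = 0 → x = 0)
    (hJf : FiniteDimensional ℂ (O ⧸ (Jm v w ⊔ Ideal.span {f})))
    (hJh : FiniteDimensional ℂ (O ⧸ (Jm v w ⊔ Ideal.span {h})))
    (hv : FiniteDimensional ℂ (O ⧸ Ideal.span (Set.range v)))
    (hw : FiniteDimensional ℂ (O ⧸ Ideal.span (Set.range w)))
    (harc : ∀ γ : O →ₐ[ℂ] PowerSeries ℂ, ∃ ξ : Fin n → PowerSeries ℂ,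
      PowerSeries.derivative ℂ (γ f) = ∑ i, γ (v i) * ξ i ∧
      PowerSeries.derivative ℂ (γ h) = ∑ i, γ (w i) * ξ i) :
    idx (Submodule.span O {f • e1}) = idx (Submodule.span O {h • e2}) := by
  have hann : ∀ a : O, a • e1 = 0 → a • e2 = 0 → a ∈ Module.annihilator O N := by
    intro a h1 h2
    rw [Module.mem_annihilator]
    intro x
    have hx : x ∈ Submodule.span O {e1, e2} := by rw [hgen]; trivial
    obtain ⟨b, c, rfl⟩ := Submodule.mem_span_pair.1 hx
    rw [smul_add, smul_comm a b, smul_comm a c, h1, h2, smul_zero, smul_zero, add_zero]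
  have hmem : ∀ a, a ∈ Module.annihilator O N ↔ ∀ x : N, a • x = 0 :=
    fun a => Module.mem_annihilator
  have hfp : ∀ k : ℕ, ∀ x : N, f ^ k • x = 0 → x = 0 := by
    intro k
    induction k with
    | zero => intro x hx; simpa using hx
    | succ k ih => intro x hx; rw [pow_succ, mul_smul] at hx; exact hf _ (ih _ hx)
  have hspan : ∀ (I : Ideal O) (g : O), ∀ r ∈ Jm v w ⊔ Ideal.span {g},
      ∃ b, r - b * g ∈ Module.annihilator O N := by
    intro _ g r hr
    obtain ⟨j, hj, s, hs, rfl⟩ := Submodule.mem_sup.1 hr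
    obtain ⟨b, rfl⟩ := Ideal.mem_span_singleton'.1 hs
    exact ⟨b, by rw [add_sub_cancel_right, hmem]; exact hJ j hj⟩
  obtain ⟨K, hK⟩ := pow_mem_of_fin _ hv f hfm
  obtain ⟨K', hK'⟩ := pow_mem_of_fin _ hw f hfm
  obtain ⟨K1, hK1⟩ := pow_mem_of_fin _ hJh f hfm
  obtain ⟨b, hb⟩ := hspan ⊤ h _ hK1
  obtain ⟨c, hc⟩ := (Ideal.mem_span_range_iff_exists_fun).1 hK
  obtain ⟨c', hc'⟩ := (Ideal.mem_span_range_iff_exists_fun).1 hK'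
  obtain ⟨u0, hu0⟩ : ∃ u0, f ^ K • e1 = u0 • e2 := by
    refine ⟨- ∑ i, c i * w i, ?_⟩
    have := hrel c
    rw [hc] at this
    rw [neg_smul]; exact eq_neg_of_add_eq_zero_left this
  obtain ⟨u1, hu1⟩ : ∃ u1, f ^ K' • e2 = u1 • e1 := by
    refine ⟨- ∑ i, c' i * v i, ?_⟩
    have := hrel c'
    rw [hc'] at this
    rw [neg_smul]; exact eq_neg_of_add_eq_zero_right this
  have huu : u0 * u1 - f ^ (K + K') ∈ Module.annihilator O N := by
    apply hann
    · rw [sub_smul, mul_smul, ← hu1, smul_comm, ← hu0, ← mul_smul, ← pow_add, add_comm K', sub_self]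
    · rw [sub_smul, mul_comm, mul_smul, ← hu0, smul_comm, ← hu1, ← mul_smul, ← pow_add, sub_self]
  have hvw : ∀ i, f ^ K * w i + u0 * v i ∈ Module.annihilator O N := by
    intro i
    have h1 := hrel (Pi.single i 1)
    simp only [Pi.single_apply, ite_mul, one_mul, zero_mul, Finset.sum_ite_eq', Finset.mem_univ,
      if_true] at h1
    have h2 : (f ^ K * w i + u0 * v i) • e2 = 0 := by
      have := congrArg (fun x => f ^ K • x) h1
      simp only [smul_add, smul_zero] at this
      rw [smul_comm, hu0, ← mul_smul, ← mul_smul] at this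
      rw [add_smul, add_comm, mul_comm u0]; exact this
    refine hann _ (hfp K _ ?_) h2
    rw [smul_comm, hu0, smul_comm, h2, smul_zero]
  have hbh : ∀ x : N, b • h • x = f ^ K1 • x := fun x => by
    have := (hmem _).1 hb x
    rw [sub_smul, sub_eq_zero, mul_smul] at this
    exact this.symm
  have huu' : ∀ x : N, u1 • u0 • x = f ^ (K + K') • x := fun x => by
    have := (hmem _).1 huu x
    rw [sub_smul, sub_eq_zero, mul_comm, mul_smul] at this
    exact this
  have hh : ∀ x : N, h • x = 0 → x = 0 := fun x hx =>
    hfp K1 x (by rw [← hbh, hx, smul_zero])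
  have hu0z : ∀ x : N, u0 • x = 0 → x = 0 := fun x hx =>
    hfp (K + K') x (by rw [← huu', hx, smul_zero])
  set p := f * u0 with hp
  set q := f ^ K * h with hq
  have hp0 : ∀ x : N, p • x = 0 → x = 0 := fun x hx => hu0z x (hf _ (by rwa [hp, mul_smul] at hx))
  have hq0 : ∀ x : N, q • x = 0 → x = 0 := fun x hx => hh x (hfp K _ (by rwa [hq, mul_smul] at hx))
  have hpp : p * u1 - f ^ (K + K' + 1) ∈ Module.annihilator O N := by
    have := Ideal.mul_mem_left _ f huu
    convert this using 1; rw [hp]; ring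
  have hqq : q * b - f ^ (K + K1) ∈ Module.annihilator O N := by
    have := Ideal.mul_mem_left _ (-f ^ K) hb
    convert this using 1; rw [hq]; ring
  have hlf : idx (scl f (⊤ : Submodule O N)) ≠ ⊤ := by
    refine idx_fg_ne_top _ ((idx_ne_top_iff _).2 hJf) ?_ _ ?_
    · rw [← hgen]; exact Submodule.fg_span (by simp)
    · intro r hr m
      obtain ⟨b, hb⟩ := hspan ⊤ f r hr
      have := (hmem _).1 hb m
      rw [sub_smul, sub_eq_zero, mul_comm, mul_smul] at this
      rw [this]
      exact mem_scl.2 ⟨_, trivial, rfl⟩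
  have hlfk : ∀ k : ℕ, idx (scl (f ^ k) (⊤ : Submodule O N)) ≠ ⊤ := by
    intro k
    rw [idx_scl_pow f hf, idx_top_eq, add_zero]
    exact WithTop.mul_ne_top (ENat.natCast_ne_top k) hlf
  have hdiv : ∀ (a a' : O) (k : ℕ), a * a' - f ^ k ∈ Module.annihilator O N →
      idx (scl a (⊤ : Submodule O N)) ≠ ⊤ := by
    intro a a' k hk
    refine ne_top_of_le_ne_top (hlfk k) (idx_mono ?_)
    intro x hx
    obtain ⟨y, -, rfl⟩ := mem_scl.1 hx
    refine mem_scl.2 ⟨a' • y, trivial, ?_⟩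
    have := (hmem _).1 hk y
    rwa [sub_smul, sub_eq_zero, mul_smul] at this
  have hassoc : ∀ γ : O →ₐ[ℂ] PowerSeries ℂ, (∀ a ∈ Module.annihilator O N, γ a = 0) →
      γ f ≠ 0 → Associated (γ p) (γ q) ∧ γ p ≠ 0 := by
    intro γ hγ hγf
    have hγh : γ h ≠ 0 := by
      intro h0
      have := hγ _ hb
      rw [map_sub, map_mul, h0, mul_zero, sub_zero, map_pow] at this
      exact hγf (eq_zero_of_pow_eq_zero this)
    have hγu : γ u0 ≠ 0 := by
      intro h0
      have := hγ _ huu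
      rw [map_sub, map_mul, h0, zero_mul, zero_sub, neg_eq_zero, map_pow] at this
      exact hγf (eq_zero_of_pow_eq_zero this)
    obtain ⟨ξ, h1, h2⟩ := harc γ
    refine ⟨?_, by rw [hp, map_mul]; exact mul_ne_zero hγf hγu⟩
    rw [hp, hq, map_mul, map_mul, map_pow]
    refine assoc_arc _ _ _ _ hγf hγh (arc_X_dvd γ f hfm) (arc_X_dvd γ h hhm) ?_
    rw [h1, h2, Finset.mul_sum, Finset.mul_sum, ← Finset.sum_neg_distrib]
    refine Finset.sum_congr rfl fun i _ => ?_
    have := hγ _ (hvw i)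
    rw [map_add, map_mul, map_mul, map_pow] at this
    linear_combination ξ i * this
  have hcontra : ∀ a b : PowerSeries ℂ, Associated a b → a ≠ 0 → ¬ (PowerSeries.X * a ∣ b) := by
    intro a b hab ha hd
    have h1 := hd.trans hab.symm.dvd
    have h2 : PowerSeries.X * a ∣ 1 * a := by rwa [one_mul]
    have h3 := (mul_dvd_mul_iff_right ha).1 h2
    exact PowerSeries.X_prime.not_isUnit (isUnit_of_dvd_one h3)
  have hpq : idx (scl p (⊤ : Submodule O N)) = idx (scl q (⊤ : Submodule O N)) := by
    apply le_antisymm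
    · refine ell_le hres f hfm hf _ (hspan ⊤ f) hJf q p _ b hqq hq0 hp0 (hdiv _ _ _ hpp) ?_
      intro γ h1 h2
      obtain ⟨h3, h4⟩ := hassoc γ h1 h2
      exact hcontra _ _ h3.symm (h3.ne_zero_iff.1 h4)
    · refine ell_le hres f hfm hf _ (hspan ⊤ f) hJf p q _ u1 hpp hp0 hq0 (hdiv _ _ _ hqq) ?_
      intro γ h1 h2
      obtain ⟨h3, h4⟩ := hassoc γ h1 h2
      exact hcontra _ _ h3 h4
  have hsp : ∀ (a : O) (x : N), scl a (Submodule.span O {x}) = Submodule.span O {a • x} := by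
    intro a x
    unfold scl
    rw [Submodule.map_span, Set.image_singleton]; rfl
  have hA := idx_scl (f ^ K) (hfp K) (Submodule.span O {f • e1})
  have hB := idx_scl (f ^ K) (hfp K) (Submodule.span O {h • e2})
  rw [hsp, smul_comm, hu0, ← mul_smul, ← hsp, idx_scl _ hp0] at hA
  rw [hsp, ← mul_smul, ← hsp, idx_scl _ hq0, ← hpq, hA] at hB
  exact WithTop.add_left_cancel (hlfk K) hB
end IdxMain
end

noncomputable section
section AlgMain
variable {n : ℕ}
variable {O : Type*} [CommRing O] [Algebra ℂ O]

lemma idx_le_sup_list {M : Type*} [AddCommGroup M] [Module O M] [Module ℂ M] [IsScalarTower ℂ O M]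
    (I : Ideal O) (W : Submodule O M) (s : Finset M) (hW : ∀ r ∈ I, ∀ m ∈ s, r • m ∈ W) :
    idx W ≤ idx (W ⊔ Submodule.span O (s : Set M)) + s.card * idx I := by
  classical
  induction s using Finset.induction_on generalizing W with
  | empty => simp
  | insert a s ha ih =>
    have h1 := idx_sup_span W a
    have h2 : idx (W.comap (LinearMap.toSpanSingleton O M a) : Ideal O) ≤ idx I := by
      apply idx_mono
      intro r hr
      exact hW r hr a (Finset.mem_insert_self _ _)
    have h3 := ih (W ⊔ Submodule.span O {a}) (fun r hr m hm =>
      Submodule.mem_sup_left (hW r hr m (Finset.mem_insert_of_mem hm)))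
    have h4 : W ⊔ Submodule.span O {a} ⊔ Submodule.span O (s : Set M) =
        W ⊔ Submodule.span O ((insert a s : Finset M) : Set M) := by
      rw [Finset.coe_insert, Submodule.span_insert, sup_assoc]
    rw [h4] at h3
    rw [h1, Finset.card_insert_of_notMem ha]
    push_cast
    rw [add_mul, one_mul, ← add_assoc]
    push_cast at h3
    exact add_le_add h3 h2

lemma fin_Jm (v w : Fin n → O) (f : O) (BY : Ideal O) 
    (hB : ∀ a ∈ BY, ∃ δ : Fin n → O, a = ∑ i, δ i * w i ∧ ∑ i, δ i * v i ∈ Ideal.span {f})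
    (hBY : FiniteDimensional ℂ (O ⧸ BY))
    (hv : FiniteDimensional ℂ (O ⧸ Ideal.span (Set.range v))) :
    FiniteDimensional ℂ (O ⧸ (Jm v w ⊔ Ideal.span {f})) := by
  classical
  rw [← idx_ne_top_iff] at hBY hv ⊢
  have := idx_le_sup_list BY (Jm v w ⊔ Ideal.span {f}) (Finset.univ.image v) (by
    intro r hr m hm
    obtain ⟨i, -, rfl⟩ := Finset.mem_image.1 hm
    obtain ⟨δ, rfl, h2⟩ := hB r hr
    have h3 : (∑ j, δ j * w j) • v i = (∑ j, δ j * (v i * w j - v j * w i)) +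
        w i * ∑ j, δ j * v j := by
      rw [smul_eq_mul, Finset.sum_mul, Finset.mul_sum, ← Finset.sum_add_distrib]
      refine Finset.sum_congr rfl fun j _ => ?_
      ring
    rw [h3]
    refine Submodule.add_mem_sup (Ideal.sum_mem _ fun j _ => Ideal.mul_mem_left _ _ ?_)
      (Ideal.mul_mem_left _ _ h2)
    exact Ideal.subset_span ⟨(i, j), rfl⟩)
  refine ne_top_of_le_ne_top ?_ this
  have h5 : idx (Jm v w ⊔ Ideal.span {f} ⊔
      Submodule.span O ((Finset.univ.image v : Finset O) : Set O)) ≠ ⊤ := by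
    refine ne_top_of_le_ne_top hv (idx_mono ?_)
    refine le_trans ?_ le_sup_right
    simp [Ideal.span]
  exact WithTop.add_ne_top.2 ⟨h5, WithTop.mul_ne_top (ENat.natCast_ne_top _) hBY⟩

lemma fin_Jm' (v w : Fin n → O) : Jm v w = Jm w v := by
  apply le_antisymm
  all_goals
    unfold Jm
    rw [Ideal.span_le]
    rintro _ ⟨⟨i, j⟩, rfl⟩
    apply Ideal.subset_span
    exact ⟨(j, i), by ring⟩

theorem alg_main [IsLocalRing O]
    (hres : ∀ a : O, ∃ c : ℂ, a - algebraMap ℂ O c ∈ IsLocalRing.maximalIdeal O)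
    (v w : Fin n → O) (f h : O) (hfm : f ∈ IsLocalRing.maximalIdeal O)
    (hhm : h ∈ IsLocalRing.maximalIdeal O) (BX BY : Ideal O)
    (hX : ∀ a, a ∈ BX ↔ ∃ δ : Fin n → O, ∑ i, δ i * v i = a ∧ ∑ i, δ i * w i ∈ Ideal.span {h})
    (hY : ∀ a, a ∈ BY ↔ ∃ δ : Fin n → O, ∑ i, δ i * w i = a ∧ ∑ i, δ i * v i ∈ Ideal.span {f})
    (hBX : FiniteDimensional ℂ (O ⧸ BX)) (hBY : FiniteDimensional ℂ (O ⧸ BY))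
    (hv : FiniteDimensional ℂ (O ⧸ Ideal.span (Set.range v)))
    (hw : FiniteDimensional ℂ (O ⧸ Ideal.span (Set.range w)))
    (hNZ : FiniteDimensional ℂ (O ⧸ (Jm v w ⊔ Ideal.span {f})) → 
      ∀ (δ : Fin n → O) (a b : O), f * a = ∑ i, δ i * v i → f * b = ∑ i, δ i * w i → 
        ∃ ε : Fin n → O, a = ∑ i, ε i * v i ∧ b = ∑ i, ε i * w i)
    (harc : ∀ γ : O →ₐ[ℂ] PowerSeries ℂ, ∃ ξ : Fin n → PowerSeries ℂ,
      PowerSeries.derivative ℂ (γ f) = ∑ i, γ (v i) * ξ i ∧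
      PowerSeries.derivative ℂ (γ h) = ∑ i, γ (w i) * ξ i) :
    (Module.finrank ℂ (O ⧸ BX) : ℤ) - Module.finrank ℂ (O ⧸ (BX + Ideal.span {f})) =
    (Module.finrank ℂ (O ⧸ BY) : ℤ) - Module.finrank ℂ (O ⧸ (BY + Ideal.span {h})) := by
  have hJf : FiniteDimensional ℂ (O ⧸ (Jm v w ⊔ Ideal.span {f})) :=
    fin_Jm v w f BY (fun a ha => by
      obtain ⟨δ, h1, h2⟩ := (hY a).1 ha
      exact ⟨δ, h1.symm, h2⟩) hBY hv
  have hJh : FiniteDimensional ℂ (O ⧸ (Jm v w ⊔ Ideal.span {h})) := by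
    rw [fin_Jm' v w]
    exact fin_Jm w v h BX (fun a ha => by
      obtain ⟨δ, h1, h2⟩ := (hX a).1 ha
      exact ⟨δ, h1.symm, h2⟩) hBX hw
  have hFX : FiniteDimensional ℂ (O ⧸ (BX + Ideal.span {f})) := by
    rw [← idx_ne_top_iff] at hBX ⊢
    exact ne_top_of_le_ne_top hBX (idx_mono le_sup_left)
  have hFY : FiniteDimensional ℂ (O ⧸ (BY + Ideal.span {h})) := by
    rw [← idx_ne_top_iff] at hBY ⊢
    exact ne_top_of_le_ne_top hBY (idx_mono le_sup_left)
  let Φ : (Fin n → O) →ₗ[O] O × O :=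
    { toFun := fun δ => (∑ i, δ i * v i, ∑ i, δ i * w i)
      map_add' := fun a b => by simp [add_mul, Finset.sum_add_distrib]
      map_smul' := fun c a => by simp [Finset.mul_sum, mul_assoc] }
  let M0 : Submodule O (O × O) := LinearMap.range Φ
  have hM0 : ∀ x, x ∈ M0 ↔ ∃ δ : Fin n → O, ∑ i, δ i * v i = x.1 ∧ ∑ i, δ i * w i = x.2 := by
    intro x
    constructor
    · rintro ⟨δ, rfl⟩; exact ⟨δ, rfl, rfl⟩
    · rintro ⟨δ, h1, h2⟩; exact ⟨δ, Prod.ext h1 h2⟩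
  let e1 : (O × O) ⧸ M0 := M0.mkQ (1, 0)
  let e2 : (O × O) ⧸ M0 := M0.mkQ (0, 1)
  have hab : ∀ a b : O, a • e1 + b • e2 = M0.mkQ (a, b) := by
    intro a b
    rw [← map_smul, ← map_smul, ← map_add]; simp
  have h0 : ∀ a b : O, a • e1 + b • e2 = 0 ↔
      ∃ δ : Fin n → O, ∑ i, δ i * v i = a ∧ ∑ i, δ i * w i = b := by
    intro a b
    rw [hab, Submodule.mkQ_apply, Submodule.Quotient.mk_eq_zero, hM0]
  have hex : ∀ x : (O × O) ⧸ M0, ∃ a b : O, a • e1 + b • e2 = x := by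
    intro x
    obtain ⟨⟨a, b⟩, rfl⟩ := Submodule.mkQ_surjective _ x
    exact ⟨a, b, hab a b⟩
  have hrel : ∀ c : Fin n → O, (∑ i, c i * v i) • e1 + (∑ i, c i * w i) • e2 = 0 :=
    fun c => (h0 _ _).2 ⟨c, rfl, rfl⟩
  have hgen : Submodule.span O {e1, e2} = ⊤ := by
    rw [eq_top_iff]
    intro x _
    exact Submodule.mem_span_pair.2 (hex x)
  have hJ : ∀ r ∈ Jm v w, ∀ x : (O × O) ⧸ M0, r • x = 0 := by
    have : Jm v w ≤ Module.annihilator O ((O × O) ⧸ M0) := by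
      unfold Jm
      rw [Ideal.span_le]
      rintro _ ⟨⟨i, j⟩, rfl⟩
      rw [SetLike.mem_coe, Module.mem_annihilator]
      intro x
      obtain ⟨a, b, rfl⟩ := hex x
      rw [smul_add, ← mul_smul, ← mul_smul, h0]
      refine ⟨fun k => a * ((if k = i then w j else 0) - (if k = j then w i else 0)) +
        b * ((if k = j then v i else 0) - (if k = i then v j else 0)), ?_, ?_⟩
      all_goals
        simp only [add_mul, mul_assoc, sub_mul, Finset.sum_add_distrib, ← Finset.mul_sum,
          Finset.sum_sub_distrib, Pi.single_apply, ite_mul, zero_mul, Finset.sum_ite_eq',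
          Finset.mem_univ, if_true]
        ring
    intro r hr x
    exact Module.mem_annihilator.1 (this hr) x
  have hf : ∀ x : (O × O) ⧸ M0, f • x = 0 → x = 0 := by
    intro x hx
    obtain ⟨a, b, rfl⟩ := hex x
    rw [smul_add, ← mul_smul, ← mul_smul, h0] at hx
    obtain ⟨δ, h1, h2⟩ := hx
    obtain ⟨ε, h3, h4⟩ := hNZ hJf δ a b h1.symm h2.symm
    exact (h0 a b).2 ⟨ε, h3.symm, h4.symm⟩
  have key := idx_main hres v w f h hfm hhm e1 e2 hgen hrel hJ hf hJf hJh hv hw harc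
  set U := Submodule.span O {h • e2} with hU
  set V := Submodule.span O {f • e1} with hV
  have hsub : ∀ a b : O, a • e1 = b • e2 ↔
      ∃ δ : Fin n → O, ∑ i, δ i * v i = a ∧ ∑ i, δ i * w i = -b := by
    intro a b
    rw [← h0, neg_smul, ← sub_eq_add_neg, sub_eq_zero]
  have hsub' : ∀ a b : O, b • e2 = a • e1 ↔
      ∃ δ : Fin n → O, ∑ i, δ i * w i = b ∧ ∑ i, δ i * v i = -a := by
    intro a b
    rw [← sub_eq_zero, sub_eq_add_neg, ← neg_smul, add_comm, h0]
    simp only [and_comm]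
  have hcX : (U.comap (LinearMap.toSpanSingleton O _ e1) : Ideal O) = BX := by
    ext a
    rw [hX, Submodule.mem_comap, LinearMap.toSpanSingleton_apply, hU, Submodule.mem_span_singleton]
    constructor
    · rintro ⟨b, hb⟩
      rw [← mul_smul, eq_comm, hsub] at hb
      obtain ⟨δ, h1, h2⟩ := hb
      exact ⟨δ, h1, Ideal.mem_span_singleton'.2 ⟨-b, by rw [h2]; ring⟩⟩
    · rintro ⟨δ, h1, h2⟩
      obtain ⟨b, hb⟩ := Ideal.mem_span_singleton'.1 h2
      refine ⟨-b, ?_⟩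
      rw [← mul_smul, eq_comm, hsub]
      exact ⟨δ, h1, by rw [← hb]; ring⟩
  have hcY : (V.comap (LinearMap.toSpanSingleton O _ e2) : Ideal O) = BY := by
    ext a
    rw [hY, Submodule.mem_comap, LinearMap.toSpanSingleton_apply, hV, Submodule.mem_span_singleton]
    constructor
    · rintro ⟨b, hb⟩
      rw [← mul_smul, eq_comm, hsub'] at hb
      obtain ⟨δ, h1, h2⟩ := hb
      exact ⟨δ, h1, Ideal.mem_span_singleton'.2 ⟨-b, by rw [h2]; ring⟩⟩
    · rintro ⟨δ, h1, h2⟩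
      obtain ⟨b, hb⟩ := Ideal.mem_span_singleton'.1 h2
      refine ⟨-b, ?_⟩
      rw [← mul_smul, eq_comm, hsub']
      exact ⟨δ, h1, by rw [← hb]; ring⟩
  have hgenl : ∀ (U : Submodule O ((O × O) ⧸ M0)) (e : (O × O) ⧸ M0) (g : O) (B : Ideal O),
      (U.comap (LinearMap.toSpanSingleton O _ e) : Ideal O) = B →
      ((U ⊔ Submodule.span O {g • e}).comap (LinearMap.toSpanSingleton O _ e) : Ideal O) =
        B + Ideal.span {g} := by
    intro U e g B hB
    ext a
    rw [Submodule.mem_comap, LinearMap.toSpanSingleton_apply]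
    constructor
    · intro h
      obtain ⟨y, hy, z, hz, hyz⟩ := Submodule.mem_sup.1 h
      obtain ⟨b, rfl⟩ := Submodule.mem_span_singleton.1 hz
      have : a = (a - b * g) + b * g := by ring
      rw [this]
      refine Submodule.add_mem_sup ?_ (Ideal.mem_span_singleton'.2 ⟨b, rfl⟩)
      rw [← hB, Submodule.mem_comap, LinearMap.toSpanSingleton_apply, sub_smul, ← hyz, mul_smul,
        add_sub_cancel_right]
      exact hy
    · intro h
      obtain ⟨y, hy, z, hz, rfl⟩ := Submodule.mem_sup.1 h
      obtain ⟨b, rfl⟩ := Ideal.mem_span_singleton'.1 hz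
      rw [add_smul, mul_smul]
      refine Submodule.add_mem_sup ?_ (Submodule.mem_span_singleton.2 ⟨b, rfl⟩)
      rw [← hB] at hy
      exact hy
  have hsup : ∀ (U : Submodule O ((O × O) ⧸ M0)) (e : (O × O) ⧸ M0) (g : O),
      U ⊔ Submodule.span O {g • e} ⊔ Submodule.span O {e} = U ⊔ Submodule.span O {e} := by
    intro U e g
    rw [sup_assoc]
    congr 1
    rw [sup_eq_right, Submodule.span_le, Set.singleton_subset_iff]
    exact Submodule.smul_mem _ _ (Submodule.mem_span_singleton_self e)
  have hfg : (⊤ : Submodule O ((O × O) ⧸ M0)).FG := by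
    rw [← hgen]; exact Submodule.fg_span (by simp)
  have hs : idx (U ⊔ Submodule.span O {e1}) ≠ ⊤ := by
    refine idx_fg_ne_top _ ((idx_ne_top_iff _).2 hw) hfg _ ?_
    intro r hr m
    obtain ⟨a, b, rfl⟩ := hex m
    obtain ⟨c, rfl⟩ := Ideal.mem_span_range_iff_exists_fun.1 hr
    refine Submodule.mem_sup_right (Submodule.mem_span_singleton.2
      ⟨(∑ i, c i * w i) * a - b * ∑ i, c i * v i, ?_⟩)
    · have := congrArg (fun x => b • x) (hrel c)
      simp only [smul_add, smul_zero, ← mul_smul] at this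
      rw [smul_add, ← mul_smul, ← mul_smul, sub_smul, sub_eq_iff_eq_add, add_assoc,
        mul_comm _ b, add_comm _ ((b * ∑ i, c i * v i) • e1), this, add_zero]
  have ht : idx (V ⊔ Submodule.span O {e2}) ≠ ⊤ := by
    refine idx_fg_ne_top _ ((idx_ne_top_iff _).2 hv) hfg _ ?_
    intro r hr m
    obtain ⟨a, b, rfl⟩ := hex m
    obtain ⟨c, rfl⟩ := Ideal.mem_span_range_iff_exists_fun.1 hr
    refine Submodule.mem_sup_right (Submodule.mem_span_singleton.2
      ⟨(∑ i, c i * v i) * b - a * ∑ i, c i * w i, ?_⟩)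
    · have := congrArg (fun x => a • x) (hrel c)
      simp only [smul_add, smul_zero, ← mul_smul] at this
      rw [smul_add, ← mul_smul, ← mul_smul, sub_smul, sub_eq_iff_eq_add, add_right_comm,
        mul_comm _ a, this, zero_add]
  have q1 := idx_sup_span U e1
  have q2 := idx_sup_span (U ⊔ V) e1
  have q3 := idx_sup_span V e2
  have q4 := idx_sup_span (V ⊔ U) e2
  rw [hgenl U e1 f BX hcX, hsup, idx_eq_finrank _ hFX] at q2
  rw [hgenl V e2 h BY hcY, hsup, idx_eq_finrank _ hFY] at q4
  rw [hcX, idx_eq_finrank _ hBX] at q1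
  rw [hcY, idx_eq_finrank _ hBY] at q3
  rw [sup_comm V U, q2] at q4
  rw [key, q1] at q3
  obtain ⟨s, hs⟩ := ENat.ne_top_iff_exists.1 hs
  obtain ⟨t, ht⟩ := ENat.ne_top_iff_exists.1 ht
  rw [← hs, ← ht] at q3 q4
  norm_cast at q3 q4
  omega
end AlgMain
end

noncomputable section
section Nem
open scoped ENNReal NNReal Topology
variable {E : Type*} [NormedAddCommGroup E] [NormedSpace ℂ E]

/-- Pointwise application of a multilinear map to continuous functions. -/
def nemMap (K : Type) [TopologicalSpace K] [CompactSpace K] (k : ℕ)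
    (m : ContinuousMultilinearMap ℂ (fun _ : Fin k => E) ℂ) :
    ContinuousMultilinearMap ℂ (fun _ : Fin k => C(K, E)) C(K, ℂ) :=
  MultilinearMap.mkContinuous
    { toFun := fun u => ⟨fun t => m fun i => u i t, by fun_prop⟩
      map_update_add' := by
        intro _ u i a b
        ext t
        have : ∀ c : C(K, E), (fun j => (Function.update u i c) j t) =
            Function.update (fun j => u j t) i (c t) := by
          intro c
          funext j
          by_cases h : j = i
          · subst h; simp
          · simp [h]
        simp [this]
      map_update_smul' := by
        intro _ u i a b
        ext t
        have : ∀ c : C(K, E), (fun j => (Function.update u i c) j t) =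
            Function.update (fun j => u j t) i (c t) := by
          intro c
          funext j
          by_cases h : j = i
          · subst h; simp
          · simp [h]
        simp [this] } ‖m‖ (by
    intro u
    refine (ContinuousMap.norm_le _ (by positivity)).2 fun t => ?_
    refine (m.le_opNorm _).trans ?_
    gcongr with i
    exact (u i).norm_coe_le_norm t)

lemma nemMap_apply (K : Type) [TopologicalSpace K] [CompactSpace K] (k : ℕ)
    (m : ContinuousMultilinearMap ℂ (fun _ : Fin k => E) ℂ) (u : Fin k → C(K, E)) (t : K) :
    nemMap K k m u t = m fun i => u i t := rfl

lemma nemMap_norm (K : Type) [TopologicalSpace K] [CompactSpace K] (k : ℕ)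
    (m : ContinuousMultilinearMap ℂ (fun _ : Fin k => E) ℂ) : ‖nemMap K k m‖ ≤ ‖m‖ :=
  MultilinearMap.mkContinuous_norm_le _ (norm_nonneg _) _

lemma family_analytic (g : E → ℂ) (y : E) (hg : AnalyticAt ℂ g y) : ∃ ρ > (0 : ℝ),
    ∀ (K : Type) [TopologicalSpace K] [CompactSpace K] (κ : C(K, E)), (∀ t, ‖κ t‖ < ρ) →
    ∃ W : E → C(K, ℂ), AnalyticAt ℂ W y ∧ ∀ᶠ x in 𝓝 y, ∀ t, W x t = g (x + κ t) := by
  obtain ⟨p, R, hp⟩ := hg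
  obtain ⟨ρ, hρ0, hρR⟩ := ENNReal.lt_iff_exists_nnreal_btwn.1 hp.r_pos
  have hρ0 : 0 < ρ := by exact_mod_cast hρ0
  refine ⟨ρ, by exact_mod_cast hρ0, fun K _ _ κ hκ => ?_⟩
  let P : FormalMultilinearSeries ℂ C(K, E) C(K, ℂ) := fun k => nemMap K k (p k)
  have hPr : (ρ : ℝ≥0∞) ≤ P.radius := by
    obtain ⟨C, -, hC⟩ := p.norm_mul_pow_le_of_lt_radius (hρR.trans_le hp.r_le)
    refine P.le_radius_of_bound C fun k => le_trans ?_ (hC k)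
    gcongr
    exact nemMap_norm K k (p k)
  have hP := P.hasFPowerSeriesOnBall (lt_of_lt_of_le (by exact_mod_cast hρ0) hPr)
  have hκ' : ‖κ‖ < ρ := (ContinuousMap.norm_lt_iff κ (by exact_mod_cast hρ0)).2 hκ
  let Ψ : E → C(K, E) := fun x => ContinuousMap.const K (x - y) + κ
  have hΨ : AnalyticAt ℂ Ψ y := by
    have h1 : AnalyticAt ℂ (fun x : E => ContinuousLinearMap.const ℂ K (x - y)) y := by
      refine AnalyticAt.fun_comp (ContinuousLinearMap.analyticAt _ _) ?_
      fun_prop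
    exact h1.add analyticAt_const
  have hΨy : Ψ y = κ := by ext t; simp [Ψ]
  have hmem : ∀ u : C(K, E), ‖u‖ < ρ → u ∈ Metric.eball (0 : C(K, E)) P.radius := by
    intro u hu
    refine Metric.eball_subset_eball hPr ?_
    rw [mem_eball_zero_iff]
    exact_mod_cast hu
  refine ⟨fun x => P.sum (Ψ x), ?_, ?_⟩
  · have h2 : AnalyticAt ℂ P.sum (Ψ y) := by
      rw [hΨy]
      exact hP.analyticAt_of_mem (hmem κ hκ')
    exact h2.comp hΨ
  · have h3 : ∀ᶠ x in 𝓝 y, ‖Ψ x‖ < ρ := by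
      refine hΨ.continuousAt.norm.eventually_lt continuousAt_const ?_
      rw [hΨy]; exact hκ'
    filter_upwards [h3] with x hx t
    have h4 := hP.hasSum (hmem _ hx)
    rw [zero_add] at h4
    have h5 := h4.mapL (ContinuousMap.evalCLM ℂ t)
    have h6 := hp.hasSum (y := Ψ x t) (by
      rw [mem_eball_zero_iff]
      refine lt_trans ?_ hρR
      have := ((Ψ x).norm_coe_le_norm t).trans_lt hx
      exact_mod_cast this)
    have h7 := h5.unique h6
    have h8 : y + Ψ x t = x + κ t := by simp [Ψ]; abel
    rw [h8] at h7
    exact h7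
end Nem
end

noncomputable section
section DivCore
open scoped ENNReal NNReal Topology
open Metric
variable {E : Type*} [NormedAddCommGroup E] [NormedSpace ℂ E]

/-- Averaging over a circle. -/
def avgL (r : ℝ) (hr : 0 ≤ r) : C(sphere (0 : ℂ) r, ℂ) →L[ℂ] ℂ :=
  LinearMap.mkContinuous
    { toFun := fun w => (2 * Real.pi)⁻¹ • ∫ θ in (0 : ℝ)..2 * Real.pi,
        w ⟨circleMap 0 r θ, circleMap_mem_sphere 0 hr θ⟩
      map_add' := by
        intro a b
        rw [← smul_add, ← intervalIntegral.integral_add]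
        · rfl
        all_goals
          apply Continuous.intervalIntegrable
          exact (map_continuous _).comp (by fun_prop)
      map_smul' := by
        intro a b
        have e : (∫ θ in (0 : ℝ)..2 * Real.pi,
            (a • b) ⟨circleMap 0 r θ, circleMap_mem_sphere 0 hr θ⟩) = a • ∫ θ in (0 : ℝ)..2 * Real.pi,
            b ⟨circleMap 0 r θ, circleMap_mem_sphere 0 hr θ⟩ := by
          rw [← intervalIntegral.integral_smul]; rfl
        rw [RingHom.id_apply, e, smul_comm] } 1 (by
    intro w
    have := intervalIntegral.norm_integral_le_of_norm_le_const (a := 0) (b := 2 * Real.pi)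
      (f := fun θ => w ⟨circleMap 0 r θ, circleMap_mem_sphere 0 hr θ⟩) (C := ‖w‖)
      (fun θ _ => w.norm_coe_le_norm _)
    have hpi := Real.pi_pos
    rw [sub_zero, abs_of_pos (by positivity)] at this
    simp only [LinearMap.coe_mk, AddHom.coe_mk, norm_smul, one_mul]
    rw [Real.norm_of_nonneg (by positivity), inv_mul_le_iff₀ (by positivity)]
    exact this.trans_eq (mul_comm _ _))

lemma avgL_apply (r : ℝ) (hr : 0 ≤ r) (w : C(sphere (0 : ℂ) r, ℂ)) (F : ℂ → ℂ)
    (h : ∀ t : sphere (0 : ℂ) r, w t = F t) : avgL r hr w = Real.circleAverage F 0 r := by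
  rw [Real.circleAverage_def]
  show (2 * Real.pi)⁻¹ • (∫ θ in (0 : ℝ)..2 * Real.pi,
        w ⟨circleMap 0 r θ, circleMap_mem_sphere 0 hr θ⟩) = _
  simp only [h]

lemma glue (r : ℝ) (hr : 0 < r) (a b : ℂ → ℂ) (hb : AnalyticOnNhd ℂ b (closedBall 0 r))
    (hb0 : ∀ ζ ∈ sphere (0 : ℂ) r, b ζ ≠ 0)
    (hloc : ∀ ζ ∈ closedBall (0 : ℂ) r, ∃ G : ℂ → ℂ, AnalyticAt ℂ G ζ ∧
      ∀ᶠ ζ' in 𝓝 ζ, a ζ' = G ζ' * b ζ') :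
    a 0 = Real.circleAverage (fun ζ => a ζ * (b ζ)⁻¹) 0 r * b 0 := by
  classical
  choose! G hG hGe using hloc
  have hne : ∀ ζ ∈ closedBall (0 : ℂ) r, ∀ᶠ ζ' in 𝓝[≠] ζ, b ζ' ≠ 0 := by
    intro ζ hζ
    refine (hb ζ hζ).eventually_eq_zero_or_eventually_ne_zero.resolve_left fun h => ?_
    have := hb.eqOn_zero_of_preconnected_of_eventuallyEq_zero
      (convex_closedBall (0 : ℂ) r).isPreconnected hζ h
    have hr' : (r : ℂ) ∈ sphere (0 : ℂ) r := by simp [abs_of_pos hr]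
    exact hb0 _ hr' (this (sphere_subset_closedBall hr'))
  let G0 : ℂ → ℂ := fun ζ => if b ζ = 0 then G ζ ζ else a ζ * (b ζ)⁻¹
  have hG0 : ∀ ζ ∈ closedBall (0 : ℂ) r, G0 =ᶠ[𝓝 ζ] G ζ := by
    intro ζ hζ
    have h1 := hne ζ hζ
    rw [eventually_nhdsWithin_iff] at h1
    filter_upwards [h1, hGe ζ hζ] with x hx1 hx2
    by_cases hx : b x = 0
    · have : x = ζ := by
        by_contra h; exact hx1 h hx
      subst this; simp [G0, hx]
    · simp [G0, hx, hx2]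
  have hd : ∀ ζ ∈ closedBall (0 : ℂ) r, DifferentiableAt ℂ G0 ζ := fun ζ hζ =>
    ((hG ζ hζ).congr (hG0 ζ hζ).symm).differentiableAt
  have h2 : Real.circleAverage G0 0 r = G0 0 := by
    apply DiffContOnCl.circleAverage
    rw [abs_of_pos hr]
    refine DiffContOnCl.mk_ball (fun x hx => (hd x (ball_subset_closedBall hx)).differentiableWithinAt)
      (fun x hx => (hd x hx).continuousAt.continuousWithinAt)
  have h3 : Real.circleAverage (fun ζ => a ζ * (b ζ)⁻¹) 0 r = Real.circleAverage G0 0 r := by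
    apply Real.circleAverage_congr_sphere
    intro ζ hζ
    rw [abs_of_pos hr] at hζ
    simp [G0, hb0 ζ hζ]
  rw [h3, h2]
  have h00 : (0 : ℂ) ∈ closedBall (0 : ℂ) r := by simp [hr.le]
  have := (hG0 0 h00).eq_of_nhds
  rw [this]
  exact (hGe 0 h00).self_of_nhds

lemma div_core (g h : E → ℂ) (y c : E) (hg : AnalyticAt ℂ g y) (hh : AnalyticAt ℂ h y) :
    ∃ ρ > (0 : ℝ), ∀ r > (0 : ℝ), r * ‖c‖ < ρ → (∀ ζ ∈ sphere (0 : ℂ) r, h (y + ζ • c) ≠ 0) →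
    ∃ q : E → ℂ, AnalyticAt ℂ q y ∧ ∀ᶠ x in 𝓝 y,
      ((∀ ζ ∈ closedBall (0 : ℂ) r, ∃ G : ℂ → ℂ, AnalyticAt ℂ G ζ ∧
        ∀ᶠ ζ' in 𝓝 ζ, g (x + ζ' • c) = G ζ' * h (x + ζ' • c)) → g x = q x * h x) := by
  obtain ⟨ρ1, hρ1, H1⟩ := family_analytic g y hg
  obtain ⟨ρ2, hρ2, H2⟩ := family_analytic h y hh
  obtain ⟨ε, hε, hεa⟩ := Metric.eventually_nhds_iff.1 hh.eventually_analyticAt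
  refine ⟨min (min ρ1 ρ2) (ε / 2), by positivity, fun r hr hrc hne => ?_⟩
  rw [lt_min_iff, lt_min_iff] at hrc
  obtain ⟨⟨hc1, hc2⟩, hc3⟩ := hrc
  let κ : C(sphere (0 : ℂ) r, E) := ⟨fun t => (t : ℂ) • c, by fun_prop⟩
  have hκ : ∀ t, ‖κ t‖ = r * ‖c‖ := by
    intro t
    show ‖(t : ℂ) • c‖ = _
    rw [norm_smul, mem_sphere_zero_iff_norm.1 t.2]
  obtain ⟨Wg, hWg, hWge⟩ := H1 _ κ (fun t => by rw [hκ]; exact hc1)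
  obtain ⟨Wh, hWh, hWhe⟩ := H2 _ κ (fun t => by rw [hκ]; exact hc2)
  have hu : IsUnit (Wh y) := by
    rw [ContinuousMap.isUnit_iff_forall_ne_zero]
    intro t
    rw [hWhe.self_of_nhds t]
    exact hne t t.2
  have hinv : AnalyticAt ℂ (fun x => Ring.inverse (Wh x)) y := by
    obtain ⟨U, hU⟩ := hu
    have := analyticAt_inverse (𝕜 := ℂ) U
    rw [hU] at this
    exact this.comp hWh
  refine ⟨fun x => avgL r hr.le (Wg x * Ring.inverse (Wh x)), ?_, ?_⟩
  · exact ((avgL r hr.le).analyticAt _).comp (hWg.mul hinv)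
  · have hue : ∀ᶠ x in 𝓝 y, IsUnit (Wh x) :=
      hWh.continuousAt.eventually (Units.isOpen.mem_nhds hu)
    filter_upwards [hWge, hWhe, hue, Metric.ball_mem_nhds y (half_pos hε)] with x h1 h2 h3 h4 hloc
    have h5 : ∀ t : sphere (0 : ℂ) r, h (x + (t : ℂ) • c) ≠ 0 := by
      intro t
      have := (ContinuousMap.isUnit_iff_forall_ne_zero _).1 h3 t
      rwa [h2] at this
    have h6 : ∀ t : sphere (0 : ℂ) r, (Wg x * Ring.inverse (Wh x)) t =
        (fun ζ : ℂ => g (x + ζ • c) * (h (x + ζ • c))⁻¹) t := by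
      intro t
      have e := congrArg (fun w : C(sphere (0 : ℂ) r, ℂ) => w t) (Ring.mul_inverse_cancel _ h3)
      simp only [ContinuousMap.mul_apply, ContinuousMap.one_apply, h2] at e
      have e' : Ring.inverse (Wh x) t = (h (x + (t : ℂ) • c))⁻¹ := eq_inv_of_mul_eq_one_right e
      rw [ContinuousMap.mul_apply, h1, e']
      rfl
    rw [avgL_apply r hr.le _ (fun ζ : ℂ => g (x + ζ • c) * (h (x + ζ • c))⁻¹) h6]
    have := glue r hr (fun ζ => g (x + ζ • c)) (fun ζ => h (x + ζ • c)) ?_ ?_ hloc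
    · simpa using this
    · intro ζ hζ
      have h7 : AnalyticAt ℂ h (x + ζ • c) := by
        apply hεa
        rw [mem_closedBall_zero_iff] at hζ
        rw [mem_ball] at h4
        calc dist (x + ζ • c) y ≤ dist (x + ζ • c) x + dist x y := dist_triangle _ _ _
          _ < ε / 2 + ε / 2 := by
            refine add_lt_add ?_ h4
            rw [dist_self_add_left, norm_smul]
            exact (mul_le_mul_of_nonneg_right hζ (norm_nonneg c)).trans_lt hc3
          _ = ε := by ring
      have h8 : AnalyticAt ℂ (fun ζ : ℂ => x + ζ • c) ζ := by fun_prop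
      exact AnalyticAt.comp (g := h) (f := fun ζ : ℂ => x + ζ • c) h7 h8
    · intro ζ hζ; exact h5 ⟨ζ, hζ⟩
end DivCore
end

noncomputable section
section Stage1
open scoped ENNReal NNReal Topology
open Metric
variable {E : Type*} [NormedAddCommGroup E] [NormedSpace ℂ E]

lemma dslope_an (a : ℂ → ℂ) (ζ : ℂ) (ha : AnalyticAt ℂ a ζ) : AnalyticAt ℂ (dslope a ζ) ζ := by
  obtain ⟨p, hp⟩ := ha
  exact hp.has_fpower_series_dslope_fslope.analyticAt

lemma loc1 (a b : ℂ → ℂ) (ζ : ℂ) (ha : AnalyticAt ℂ a ζ) (hb : AnalyticAt ℂ b ζ)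
    (hb' : b ζ = 0 → deriv b ζ ≠ 0) (hab : b ζ = 0 → a ζ = 0) :
    ∃ G : ℂ → ℂ, AnalyticAt ℂ G ζ ∧ ∀ᶠ z in 𝓝 ζ, a z = G z * b z := by
  by_cases h : b ζ = 0
  · have hda := dslope_an a ζ ha
    have hdb := dslope_an b ζ hb
    have hne : dslope b ζ ζ ≠ 0 := by rw [dslope_same]; exact hb' h
    refine ⟨fun z => dslope a ζ z * (dslope b ζ z)⁻¹, hda.mul (hdb.inv hne), ?_⟩
    filter_upwards [hdb.continuousAt.eventually_ne hne] with z hz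
    have e1 := sub_smul_dslope a ζ z
    have e2 := sub_smul_dslope b ζ z
    rw [hab h, sub_zero, smul_eq_mul] at e1
    rw [h, sub_zero, smul_eq_mul] at e2
    rw [← e1, ← e2]
    field_simp
  · refine ⟨fun z => a z * (b z)⁻¹, ha.mul (hb.inv h), ?_⟩
    filter_upwards [hb.continuousAt.eventually_ne h] with z hz
    field_simp

lemma line_an (g : E → ℂ) (x c : E) (ζ : ℂ) (hg : AnalyticAt ℂ g (x + ζ • c)) :
    AnalyticAt ℂ (fun ζ : ℂ => g (x + ζ • c)) ζ := by
  have h8 : AnalyticAt ℂ (fun ζ : ℂ => x + ζ • c) ζ := by fun_prop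
  exact AnalyticAt.comp (g := g) (f := fun ζ : ℂ => x + ζ • c) hg h8

lemma line_deriv (g : E → ℂ) (x c : E) (ζ : ℂ) (hg : AnalyticAt ℂ g (x + ζ • c)) :
    deriv (fun ζ : ℂ => g (x + ζ • c)) ζ = fderiv ℂ g (x + ζ • c) c := by
  have h8 : HasDerivAt (fun ζ : ℂ => x + ζ • c) c ζ := by
    simpa using ((hasDerivAt_id ζ).smul_const c).const_add x
  have := hg.differentiableAt.hasFDerivAt.comp_hasDerivAt ζ h8
  exact this.deriv

/-- Statement about points near `y` transferred to line pieces near `y`. -/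
lemma ev_line (P : E → Prop) (y c : E) (hP : ∀ᶠ x in 𝓝 y, P x) :
    ∃ ρ > (0 : ℝ), ∀ r > (0 : ℝ), r * ‖c‖ < ρ → ∀ᶠ x in 𝓝 y, ∀ ζ ∈ closedBall (0 : ℂ) r,
      P (x + ζ • c) := by
  obtain ⟨ε, hε, hεa⟩ := Metric.eventually_nhds_iff.1 hP
  refine ⟨ε / 2, by positivity, fun r hr hrc => ?_⟩
  filter_upwards [Metric.ball_mem_nhds y (half_pos hε)] with x h4 ζ hζ
  apply hεa
  rw [mem_closedBall_zero_iff] at hζ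
  rw [mem_ball] at h4
  calc dist (x + ζ • c) y ≤ dist (x + ζ • c) x + dist x y := dist_triangle _ _ _
    _ < ε / 2 + ε / 2 := by
      refine add_lt_add ?_ h4
      rw [dist_self_add_left, norm_smul]
      exact (mul_le_mul_of_nonneg_right hζ (norm_nonneg c)).trans_lt hrc
    _ = ε := by ring

/-- small radius avoiding zeros -/
lemma exists_r (b : ℂ → ℂ) (ρ C : ℝ) (hC : 0 ≤ C) (hρ : 0 < ρ) (hb : ∀ᶠ ζ in 𝓝[≠] (0 : ℂ), b ζ ≠ 0) :
    ∃ r > (0 : ℝ), r * C < ρ ∧ ∀ ζ ∈ sphere (0 : ℂ) r, b ζ ≠ 0 := by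
  rw [eventually_nhdsWithin_iff] at hb
  obtain ⟨ε, hε, hεa⟩ := Metric.eventually_nhds_iff.1 hb
  refine ⟨min (ε / 2) (ρ / (2 * (C + 1))), by positivity, ?_, ?_⟩
  · calc _ ≤ ρ / (2 * (C + 1)) * C := by gcongr; exact min_le_right _ _
      _ < ρ := by rw [div_mul_eq_mul_div, div_lt_iff₀ (by positivity)]; nlinarith
  · intro ζ hζ
    rw [mem_sphere_zero_iff_norm] at hζ
    have hp : 0 < ‖ζ‖ := by rw [hζ]; positivity
    apply hεa
    · rw [dist_zero_right, hζ]
      exact (min_le_left _ _).trans_lt (by linarith)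
    · simpa using hp

lemma stage1 (g h : E → ℂ) (y v : E) (hg : AnalyticAt ℂ g y) (hh : AnalyticAt ℂ h y)
    (hv : fderiv ℂ h y v ≠ 0) (hz : ∀ᶠ x in 𝓝 y, h x = 0 → g x = 0) :
    ∃ q : E → ℂ, AnalyticAt ℂ q y ∧ ∀ᶠ x in 𝓝 y, g x = q x * h x := by
  obtain ⟨ρ1, hρ1, H1⟩ := div_core g h y v hg hh
  have hdv : ∀ᶠ x in 𝓝 y, fderiv ℂ h x v ≠ 0 := by
    have : ContinuousAt (fun x => fderiv ℂ h x v) y :=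
      (hh.fderiv.continuousAt).clm_apply continuousAt_const
    exact this.eventually_ne hv
  obtain ⟨ρ2, hρ2, H2⟩ := ev_line _ y v
    (hz.and (hdv.and (hg.eventually_analyticAt.and hh.eventually_analyticAt)))
  have hb : ∀ᶠ ζ in 𝓝[≠] (0 : ℂ), h (y + ζ • v) ≠ 0 := by
    have h0 : AnalyticAt ℂ (fun ζ : ℂ => h (y + ζ • v)) 0 := line_an h y v 0 (by simpa using hh)
    refine h0.eventually_eq_zero_or_eventually_ne_zero.resolve_left fun he => ?_
    have h1 := line_deriv h y v 0 (by simpa using hh)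
    have h2 : deriv (fun ζ : ℂ => h (y + ζ • v)) 0 = 0 := by
      rw [Filter.EventuallyEq.deriv_eq (f := fun _ => (0 : ℂ)) he]; simp
    rw [h2] at h1
    simp at h1
    exact hv h1.symm
  obtain ⟨r, hr, hrc, hne⟩ := exists_r _ (min ρ1 ρ2) ‖v‖ (norm_nonneg _) (lt_min hρ1 hρ2) hb
  obtain ⟨q, hq, hqe⟩ := H1 r hr (hrc.trans_le (min_le_left _ _)) hne
  refine ⟨q, hq, ?_⟩
  filter_upwards [hqe, H2 r hr (hrc.trans_le (min_le_right _ _))] with x h1 h2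
  apply h1
  intro ζ hζ
  obtain ⟨h3, h4, h5, h6⟩ := h2 ζ hζ
  refine loc1 _ _ ζ (line_an g x v ζ h5) (line_an h x v ζ h6) (fun _ => ?_) h3
  rw [line_deriv h x v ζ h6]
  exact h4

/-- Division by a hypersurface with isolated singularity. -/
lemma stage2 (g h : E → ℂ) (c : E) (hg : AnalyticAt ℂ g 0) (hh : AnalyticAt ℂ h 0)
    (hb : ∀ᶠ ζ in 𝓝[≠] (0 : ℂ), h (ζ • c) ≠ 0)
    (hc : Dense {x : E | ∀ ζ : ℂ, x + ζ • c ≠ 0})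
    (hs : ∀ᶠ x in 𝓝 (0 : E), x ≠ 0 → h x = 0 → fderiv ℂ h x ≠ 0)
    (hz : ∀ᶠ x in 𝓝 (0 : E), h x = 0 → g x = 0) :
    ∃ q : E → ℂ, AnalyticAt ℂ q 0 ∧ ∀ᶠ x in 𝓝 (0 : E), g x = q x * h x := by
  obtain ⟨ρ1, hρ1, H1⟩ := div_core g h 0 c hg hh
  obtain ⟨ρ2, hρ2, H2⟩ := ev_line _ 0 c
    (hz.eventually_nhds.and (hs.and (hg.eventually_analyticAt.and hh.eventually_analyticAt)))
  obtain ⟨r, hr, hrc, hne⟩ := exists_r _ (min ρ1 ρ2) ‖c‖ (norm_nonneg _) (lt_min hρ1 hρ2) hb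
  obtain ⟨q, hq, hqe⟩ := H1 r hr (hrc.trans_le (min_le_left _ _)) (by simpa using hne)
  refine ⟨q, hq, ?_⟩
  have key : ∀ᶠ x in 𝓝 (0 : E), x ∈ {x : E | ∀ ζ : ℂ, x + ζ • c ≠ 0} → g x = q x * h x := by
    filter_upwards [hqe, H2 r hr (hrc.trans_le (min_le_right _ _))] with x h1 h2 hx
    apply h1
    intro ζ hζ
    obtain ⟨h3, h4, h5, h6⟩ := h2 ζ hζ
    by_cases hb0 : h (x + ζ • c) = 0
    · have h7 := h4 (hx ζ) hb0
      obtain ⟨v, hv⟩ : ∃ v, fderiv ℂ h (x + ζ • c) v ≠ 0 := by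
        by_contra! hcon
        exact h7 (ContinuousLinearMap.ext hcon)
      obtain ⟨q', hq', hqe'⟩ := stage1 g h _ v h5 h6 hv h3
      refine ⟨fun ζ => q' (x + ζ • c), line_an q' x c ζ hq', ?_⟩
      have hcont : ContinuousAt (fun ζ : ℂ => x + ζ • c) ζ := by fun_prop
      exact hcont.eventually hqe'
    · exact loc1 _ _ ζ (line_an g x c ζ h5) (line_an h x c ζ h6) (fun h => absurd h hb0)
        (fun h => absurd h hb0)
  have hd : ∀ᶠ x in 𝓝 (0 : E), ContinuousAt (fun x => g x - q x * h x) x := by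
    filter_upwards [hg.eventually_analyticAt, hh.eventually_analyticAt, hq.eventually_analyticAt]
      with x h1 h2 h3
    exact h1.continuousAt.sub (h3.continuousAt.mul h2.continuousAt)
  filter_upwards [hd, key.eventually_nhds] with x hx1 hx2
  by_contra hne'
  have h9 : ∀ᶠ z in 𝓝 x, g z - q z * h z ≠ 0 := hx1.eventually_ne (sub_ne_zero.2 hne')
  have := (mem_closure_iff_frequently.1 (hc x))
  obtain ⟨z, hz1, hz2, hz3⟩ := (this.and_eventually (h9.and hx2)).exists
  exact hz2 (sub_eq_zero.2 (hz3 hz1))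
end Stage1
end

noncomputable section
section OnBasic
variable {n : ℕ}

lemma On.rep_mk (F : (Fin n → ℂ) → ℂ) (hF : AnalyticAt ℂ F 0) : On.rep (mkOn F hF) =ᶠ[𝓝 0] F :=
  Filter.Germ.coe_eq.1 (On.rep_spec (mkOn F hF))

lemma mkOn_rep (g : On n) : mkOn (On.rep g) (On.rep_analyticAt g) = g :=
  Subtype.ext (On.rep_spec g)

lemma On.ext_rep {g g' : On n} (h : On.rep g =ᶠ[𝓝 0] On.rep g') : g = g' := by
  apply Subtype.ext
  rw [← On.rep_spec g, ← On.rep_spec g']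
  exact Filter.Germ.coe_eq.2 h

lemma mkOn_congr {F G : (Fin n → ℂ) → ℂ} (hF : AnalyticAt ℂ F 0) (hG : AnalyticAt ℂ G 0)
    (h : F =ᶠ[𝓝 0] G) : mkOn F hF = mkOn G hG :=
  Subtype.ext (Filter.Germ.coe_eq.2 h)

lemma On.eq_mk {g : On n} {G : (Fin n → ℂ) → ℂ} (hG : AnalyticAt ℂ G 0)
    (h : On.rep g =ᶠ[𝓝 0] G) : g = mkOn G hG := by
  rw [← mkOn_rep g]; exact mkOn_congr _ _ h

lemma On.rep_add (a b : On n) : On.rep (a + b) =ᶠ[𝓝 0] fun x => On.rep a x + On.rep b x := by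
  have : a + b = mkOn (fun x => On.rep a x + On.rep b x)
      ((On.rep_analyticAt a).add (On.rep_analyticAt b)) := by
    conv_lhs => rw [← mkOn_rep a, ← mkOn_rep b]
    rfl
  rw [this]; exact On.rep_mk _ _

lemma On.rep_mul (a b : On n) : On.rep (a * b) =ᶠ[𝓝 0] fun x => On.rep a x * On.rep b x := by
  have : a * b = mkOn (fun x => On.rep a x * On.rep b x)
      ((On.rep_analyticAt a).mul (On.rep_analyticAt b)) := by
    conv_lhs => rw [← mkOn_rep a, ← mkOn_rep b]
    rfl
  rw [this]; exact On.rep_mk _ _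

lemma On.rep_algebraMap (c : ℂ) : On.rep (algebraMap ℂ (On n) c) =ᶠ[𝓝 0] fun _ => c :=
  On.rep_mk (fun _ => c) analyticAt_const

lemma On.rep_zero : On.rep (0 : On n) =ᶠ[𝓝 0] fun _ => 0 := by
  simpa using On.rep_algebraMap (n := n) 0

lemma On.rep_one : On.rep (1 : On n) =ᶠ[𝓝 0] fun _ => 1 := by
  simpa using On.rep_algebraMap (n := n) 1

/-- evaluation at the origin -/
def evH (n : ℕ) : On n →+* ℂ where
  toFun g := On.rep g 0
  map_one' := On.rep_one.eq_of_nhds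
  map_mul' a b := (On.rep_mul a b).eq_of_nhds
  map_zero' := On.rep_zero.eq_of_nhds
  map_add' a b := (On.rep_add a b).eq_of_nhds

lemma evH_algebraMap (c : ℂ) : evH n (algebraMap ℂ (On n) c) = c :=
  (On.rep_algebraMap (n := n) c).eq_of_nhds

lemma evH_mk (F : (Fin n → ℂ) → ℂ) (hF : AnalyticAt ℂ F 0) : evH n (mkOn F hF) = F 0 :=
  (On.rep_mk F hF).eq_of_nhds

lemma On.isUnit_of (g : On n) (hg : evH n g ≠ 0) : IsUnit g := by
  have h0 : On.rep g 0 ≠ 0 := hg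
  refine IsUnit.of_mul_eq_one (mkOn (fun x => (On.rep g x)⁻¹) ((On.rep_analyticAt g).inv h0)) ?_
  apply On.ext_rep
  filter_upwards [On.rep_mul g (mkOn (fun x => (On.rep g x)⁻¹) ((On.rep_analyticAt g).inv h0)),
    On.rep_one (n := n), On.rep_mk (fun x => (On.rep g x)⁻¹) ((On.rep_analyticAt g).inv h0),
    (On.rep_analyticAt g).continuousAt.eventually_ne h0] with x h1 h2 h3 h4
  rw [h1, h2, h3]
  exact mul_inv_cancel₀ h4

lemma On.isUnit_iff (g : On n) : IsUnit g ↔ evH n g ≠ 0 :=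
  ⟨fun h => (h.map (evH n)).ne_zero, On.isUnit_of g⟩

instance On.nontriv : Nontrivial (On n) := (evH n).domain_nontrivial

instance On.localRing : IsLocalRing (On n) := by
  apply IsLocalRing.of_nonunits_add
  intro a b ha hb
  rw [mem_nonunits_iff, On.isUnit_iff, not_not] at *
  rw [map_add, ha, hb, add_zero]

lemma On.mem_max (g : On n) : g ∈ IsLocalRing.maximalIdeal (On n) ↔ evH n g = 0 := by
  rw [IsLocalRing.mem_maximalIdeal, mem_nonunits_iff, On.isUnit_iff, not_not]

lemma On.hres (a : On n) : ∃ c : ℂ, a - algebraMap ℂ (On n) c ∈ IsLocalRing.maximalIdeal (On n) :=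
  ⟨evH n a, by rw [On.mem_max, map_sub, evH_algebraMap, sub_self]⟩

lemma On.rep_pd (i : Fin n) (g : On n) :
    On.rep (pd i g) =ᶠ[𝓝 0] fun x => fderiv ℂ (On.rep g) x (Pi.single i 1) :=
  On.rep_mk _ _

lemma On.rep_pd_of (i : Fin n) (g : On n) (G : (Fin n → ℂ) → ℂ) (h : On.rep g =ᶠ[𝓝 0] G) :
    On.rep (pd i g) =ᶠ[𝓝 0] fun x => fderiv ℂ G x (Pi.single i 1) := by
  filter_upwards [On.rep_pd i g, h.fderiv (𝕜 := ℂ)] with x h1 h2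
  rw [h1, h2]

lemma pd_add (i : Fin n) (a b : On n) : pd i (a + b) = pd i a + pd i b := by
  apply On.ext_rep
  filter_upwards [On.rep_pd_of i _ _ (On.rep_add a b), On.rep_add (pd i a) (pd i b), On.rep_pd i a,
    On.rep_pd i b, (On.rep_analyticAt a).eventually_analyticAt,
    (On.rep_analyticAt b).eventually_analyticAt] with x h1 h2 h3 h4 h5 h6
  rw [h1, h2, h3, h4, fderiv_fun_add h5.differentiableAt h6.differentiableAt]
  rfl

lemma pd_mul (i : Fin n) (a b : On n) : pd i (a * b) = a * pd i b + b * pd i a := by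
  apply On.ext_rep
  filter_upwards [On.rep_pd_of i _ _ (On.rep_mul a b), On.rep_add (a * pd i b) (b * pd i a),
    On.rep_mul a (pd i b), On.rep_mul b (pd i a), On.rep_pd i a,
    On.rep_pd i b, (On.rep_analyticAt a).eventually_analyticAt,
    (On.rep_analyticAt b).eventually_analyticAt] with x h1 h2 h2' h2'' h3 h4 h5 h6
  rw [h1, h2, h2', h2'', h3, h4, fderiv_fun_mul h5.differentiableAt h6.differentiableAt]
  rfl

lemma pd_algebraMap (i : Fin n) (c : ℂ) : pd i (algebraMap ℂ (On n) c) = 0 := by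
  apply On.ext_rep
  filter_upwards [On.rep_pd_of i _ _ (On.rep_algebraMap c), On.rep_zero (n := n)] with x h1 h2
  rw [h1, h2]; simp

lemma pd_coord (i j : Fin n) : pd i (coordG j) = if j = i then 1 else 0 := by
  have h : On.rep (coordG j) =ᶠ[𝓝 0] fun x : Fin n → ℂ => x j := On.rep_mk _ _
  apply On.ext_rep
  have e : ∀ x : Fin n → ℂ, fderiv ℂ (fun x : Fin n → ℂ => x j) x (Pi.single i 1)
      = if j = i then 1 else 0 := by
    intro x
    have := (ContinuousLinearMap.proj (R := ℂ) (φ := fun _ : Fin n => ℂ) j).hasFDerivAt (x := x)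
    rw [HasFDerivAt.fderiv (f := fun x : Fin n → ℂ => x j) this]
    simp [Pi.single_apply]
  filter_upwards [On.rep_pd_of i _ _ h, On.rep_zero (n := n), On.rep_one (n := n)] with x h1 h2 h3
  rw [h1, e]
  split_ifs <;> simp [h2, h3]

lemma mem_IX (X : Set (Fin n → ℂ)) (g : On n) :
    g ∈ IX n X ↔ ∀ᶠ x in 𝓝 (0 : Fin n → ℂ), x ∈ X → On.rep g x = 0 := by
  conv_lhs => rw [← mkOn_rep g]
  rw [IX, RingHom.mem_ker, ← eventually_nhdsWithin_iff]
  exact Filter.Germ.coe_eq (f := On.rep g) (g := fun _ => (0:ℂ))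

lemma applyVF_mul (δ : Fin n → On n) (a b : On n) :
    applyVF δ (a * b) = a * applyVF δ b + b * applyVF δ a := by
  simp only [applyVF, pd_mul, Finset.mul_sum, ← Finset.sum_add_distrib]
  refine Finset.sum_congr rfl fun i _ => ?_
  ring

end OnBasic
end

noncomputable section
section OnDom
variable {n : ℕ}

lemma an_ball {E : Type*} [NormedAddCommGroup E] [NormedSpace ℂ E] (g : E → ℂ)
    (hg : AnalyticAt ℂ g 0) (hne : ¬ ∀ᶠ x in 𝓝 (0 : E), g x = 0) (P : E → Prop)
    (hP : ∀ᶠ x in 𝓝 (0 : E), P x) :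
    ∃ ε > (0 : ℝ), (∀ x ∈ Metric.ball (0 : E) ε, AnalyticAt ℂ g x ∧ P x) ∧
      ∃ z ∈ Metric.ball (0 : E) ε, g z ≠ 0 := by
  obtain ⟨ε, hε, h⟩ := Metric.eventually_nhds_iff_ball.1 (hg.eventually_analyticAt.and hP)
  refine ⟨ε, hε, h, ?_⟩
  by_contra! hcon
  exact hne (Filter.mem_of_superset (Metric.ball_mem_nhds _ hε) hcon)

lemma exists_dir {E : Type*} [NormedAddCommGroup E] [NormedSpace ℂ E] (g : E → ℂ)
    (hg : AnalyticAt ℂ g 0) (hne : ¬ ∀ᶠ x in 𝓝 (0 : E), g x = 0) :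
    ∃ c : E, ∀ᶠ ζ in 𝓝[≠] (0 : ℂ), g (ζ • c) ≠ 0 := by
  obtain ⟨ε, hε, h, z, hz, hgz⟩ := an_ball g hg hne (fun _ => True) (by simp)
  refine ⟨z, ?_⟩
  have h0 : AnalyticAt ℂ (fun ζ : ℂ => g (ζ • z)) 0 := by
    have := line_an g 0 z 0 (by simpa using hg)
    simpa using this
  refine h0.eventually_eq_zero_or_eventually_ne_zero.resolve_left fun he => ?_
  have han : AnalyticOnNhd ℂ (fun ζ : ℂ => g (ζ • z)) (Metric.closedBall 0 1) := by
    intro ζ hζ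
    have := line_an g 0 z ζ (by
      rw [zero_add]
      refine (h _ ?_).1
      rw [mem_closedBall_zero_iff] at hζ
      rw [mem_ball_zero_iff] at hz ⊢
      rw [norm_smul]
      nlinarith [norm_nonneg z])
    simpa using this
  have := han.eqOn_zero_of_preconnected_of_eventuallyEq_zero
      (convex_closedBall (0 : ℂ) 1).isPreconnected (by simp) he
  have h1 := this (x := 1) (by simp)
  simp at h1
  exact hgz h1

instance On.noZD : NoZeroDivisors (On n) where
  eq_zero_or_eq_zero_of_mul_eq_zero := by
    intro a b hab
    have h0 : ∀ᶠ x in 𝓝 (0 : Fin n → ℂ), On.rep a x * On.rep b x = 0 := by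
      filter_upwards [On.rep_mul a b, On.rep_zero (n := n)] with x h1 h2
      rw [← h1, hab, h2]
    by_cases ha : ∀ᶠ x in 𝓝 (0 : Fin n → ℂ), On.rep a x = 0
    · left
      apply On.ext_rep
      filter_upwards [ha, On.rep_zero (n := n)] with x h1 h2
      rw [h1, h2]
    · right
      obtain ⟨ε, hε, h, z, hz, hgz⟩ := an_ball _ (On.rep_analyticAt a) ha _
        (h0.and (On.rep_analyticAt b).eventually_analyticAt)
      have h1 : On.rep b =ᶠ[𝓝 z] 0 := by
        filter_upwards [Metric.isOpen_ball.mem_nhds hz,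
          (h z hz).1.continuousAt.eventually_ne hgz] with x h2 h3
        exact (mul_eq_zero.1 (h x h2).2.1).resolve_left h3
      have h2 := AnalyticOnNhd.eqOn_zero_of_preconnected_of_eventuallyEq_zero
        (fun x hx => (h x hx).2.2) (convex_ball (0 : Fin n → ℂ) ε).isPreconnected hz h1
      apply On.ext_rep
      filter_upwards [Metric.ball_mem_nhds _ hε, On.rep_zero (n := n)] with x h3 h4
      rw [h2 h3, h4]; rfl

instance On.dom : IsDomain (On n) := NoZeroDivisors.to_isDomain _

lemma rep_comp_an (A : (Fin n → ℂ) →L[ℂ] (Fin n → ℂ)) (g : On n) :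
    AnalyticAt ℂ (fun x => On.rep g (A x)) 0 := by
  have h := On.rep_analyticAt g
  rw [← map_zero A] at h
  exact AnalyticAt.comp (g := On.rep g) (f := A) h (A.analyticAt 0)

lemma ev_comp (A : (Fin n → ℂ) →L[ℂ] (Fin n → ℂ)) {P : (Fin n → ℂ) → Prop}
    (h : ∀ᶠ x in 𝓝 0, P x) : ∀ᶠ x in 𝓝 0, P (A x) := by
  have := A.continuous.tendsto 0
  rw [map_zero] at this
  exact this.eventually h

/-- pull back by a linear map -/
def pullL (A : (Fin n → ℂ) →L[ℂ] (Fin n → ℂ)) : On n →+* On n where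
  toFun g := mkOn (fun x => On.rep g (A x)) (rep_comp_an A g)
  map_one' := by
    apply On.ext_rep
    filter_upwards [On.rep_mk _ (rep_comp_an A (1 : On n)), ev_comp A (On.rep_one (n := n)),
      On.rep_one (n := n)] with x h1 h2 h3
    rw [h1, h2, h3]
  map_zero' := by
    apply On.ext_rep
    filter_upwards [On.rep_mk _ (rep_comp_an A (0 : On n)), ev_comp A (On.rep_zero (n := n)),
      On.rep_zero (n := n)] with x h1 h2 h3
    rw [h1, h2, h3]
  map_mul' a b := by
    apply On.ext_rep
    filter_upwards [On.rep_mk _ (rep_comp_an A (a * b)), ev_comp A (On.rep_mul a b),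
      On.rep_mul (mkOn _ (rep_comp_an A a)) (mkOn _ (rep_comp_an A b)),
      On.rep_mk _ (rep_comp_an A a), On.rep_mk _ (rep_comp_an A b)] with x h1 h2 h3 h4 h5
    rw [h1, h2, h3, h4, h5]
  map_add' a b := by
    apply On.ext_rep
    filter_upwards [On.rep_mk _ (rep_comp_an A (a + b)), ev_comp A (On.rep_add a b),
      On.rep_add (mkOn _ (rep_comp_an A a)) (mkOn _ (rep_comp_an A b)),
      On.rep_mk _ (rep_comp_an A a), On.rep_mk _ (rep_comp_an A b)] with x h1 h2 h3 h4 h5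
    rw [h1, h2, h3, h4, h5]

lemma rep_pullL (A : (Fin n → ℂ) →L[ℂ] (Fin n → ℂ)) (g : On n) :
    On.rep (pullL A g) =ᶠ[𝓝 0] fun x => On.rep g (A x) := On.rep_mk _ (rep_comp_an A g)

lemma mem_ker_pullL (A : (Fin n → ℂ) →L[ℂ] (Fin n → ℂ)) (g : On n) :
    g ∈ RingHom.ker (pullL A) ↔ ∀ᶠ x in 𝓝 0, On.rep g (A x) = 0 := by
  rw [RingHom.mem_ker]
  constructor
  · intro h
    filter_upwards [rep_pullL A g, On.rep_zero (n := n)] with x h1 h2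
    rw [← h1, h, h2]
  · intro h
    apply On.ext_rep
    filter_upwards [rep_pullL A g, On.rep_zero (n := n), h] with x h1 h2 h3
    rw [h1, h2, h3]

/-- the germ of a linear functional -/
def linG (ℓ : (Fin n → ℂ) →L[ℂ] ℂ) : On n := mkOn ℓ (ℓ.analyticAt 0)

lemma rep_linG (ℓ : (Fin n → ℂ) →L[ℂ] ℂ) : On.rep (linG ℓ) =ᶠ[𝓝 0] ℓ := On.rep_mk _ _

lemma linG_coord (i : Fin n) : linG (ContinuousLinearMap.proj i) = coordG i := rfl

lemma ev_lin_zero (ℓ : (Fin n → ℂ) →L[ℂ] ℂ) (h : ∀ᶠ x in 𝓝 0, ℓ x = 0) : ℓ = 0 := by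
  have h1 : HasFDerivAt ℓ ℓ (0 : Fin n → ℂ) := ℓ.hasFDerivAt
  have h2 : HasFDerivAt ℓ (0 : (Fin n → ℂ) →L[ℂ] ℂ) (0 : Fin n → ℂ) :=
    (hasFDerivAt_const (0 : ℂ) (0 : Fin n → ℂ)).congr_of_eventuallyEq h
  exact h1.unique h2

lemma lin_div (g : On n) (ℓ : (Fin n → ℂ) →L[ℂ] ℂ) (hℓ : ℓ ≠ 0)
    (h : ∀ᶠ x in 𝓝 0, ℓ x = 0 → On.rep g x = 0) : g ∈ Ideal.span {linG ℓ} := by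
  obtain ⟨v, hv⟩ : ∃ v, ℓ v ≠ 0 := by
    by_contra! hc; exact hℓ (ContinuousLinearMap.ext hc)
  obtain ⟨q, hq, hqe⟩ := stage1 (On.rep g) ℓ 0 v (On.rep_analyticAt g) (ℓ.analyticAt 0)
    (by rw [ℓ.fderiv]; exact hv) h
  rw [Ideal.mem_span_singleton']
  refine ⟨mkOn q hq, ?_⟩
  apply On.ext_rep
  filter_upwards [On.rep_mul (mkOn q hq) (linG ℓ), On.rep_mk q hq, rep_linG ℓ, hqe]
    with x h1 h2 h3 h4
  rw [h1, h2, h3, h4]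

lemma chain_step (P Q : (Fin n → ℂ) →L[ℂ] (Fin n → ℂ)) (y : (Fin n → ℂ) →L[ℂ] ℂ)
    (hPP : ∀ x, P (P x) = P x) (hPQ : ∀ x, P (Q x) = Q x) (hy : ∀ x, y x = 0 → P x = Q x)
    (hyQ : ∀ x, y (Q x) = 0) (hy0 : y ≠ 0) :
    RingHom.ker (pullL Q) = RingHom.ker (pullL P) ⊔ Ideal.span {linG y} := by
  apply le_antisymm
  · intro g hg
    rw [mem_ker_pullL] at hg
    have e : g = (g - pullL P g) + pullL P g := by ring
    rw [e]
    refine Ideal.add_mem _ (Ideal.mem_sup_left ?_) (Ideal.mem_sup_right ?_)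
    · rw [RingHom.mem_ker, map_sub, sub_eq_zero]
      apply On.ext_rep
      filter_upwards [rep_pullL P g, rep_pullL P (pullL P g), ev_comp P (rep_pullL P g)]
        with x h1 h2 h3
      rw [h2, h1, h3, hPP]
    · apply lin_div _ _ hy0
      filter_upwards [rep_pullL P g, hg] with x h1 h2 h3
      rw [h1, hy x h3, h2]
  · rw [sup_le_iff, Ideal.span_le, Set.singleton_subset_iff]
    constructor
    · intro g hg
      rw [mem_ker_pullL] at hg ⊢
      filter_upwards [ev_comp Q hg] with x hx
      rwa [hPQ] at hx
    · rw [SetLike.mem_coe, mem_ker_pullL]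
      filter_upwards [ev_comp Q (rep_linG y)] with x hx
      rw [hx, hyQ]

/-- kill the first `i` coordinates (with respect to `L`) -/
def cutP (L : (Fin n → ℂ) ≃L[ℂ] (Fin n → ℂ)) (i : ℕ) : (Fin n → ℂ) →L[ℂ] (Fin n → ℂ) :=
  (L : (Fin n → ℂ) →L[ℂ] (Fin n → ℂ)).comp
    ((ContinuousLinearMap.pi fun j : Fin n => if (j : ℕ) < i then 0 else
      ContinuousLinearMap.proj (R := ℂ) (φ := fun _ : Fin n => ℂ) j).comp
      (L.symm : (Fin n → ℂ) →L[ℂ] (Fin n → ℂ)))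

lemma cutP_apply (L : (Fin n → ℂ) ≃L[ℂ] (Fin n → ℂ)) (i : ℕ) (x : Fin n → ℂ) :
    L.symm (cutP L i x) = fun j : Fin n => if (j : ℕ) < i then 0 else L.symm x j := by
  simp only [cutP, ContinuousLinearMap.comp_apply, ContinuousLinearEquiv.coe_coe,
    ContinuousLinearEquiv.symm_apply_apply]
  funext j
  rw [ContinuousLinearMap.pi_apply]
  split_ifs <;> rfl

/-- the coordinate functionals -/
def yL (L : (Fin n → ℂ) ≃L[ℂ] (Fin n → ℂ)) (i : Fin n) : (Fin n → ℂ) →L[ℂ] ℂ :=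
  (ContinuousLinearMap.proj (R := ℂ) (φ := fun _ : Fin n => ℂ) i).comp
    (L.symm : (Fin n → ℂ) →L[ℂ] (Fin n → ℂ))

lemma yL_apply (L : (Fin n → ℂ) ≃L[ℂ] (Fin n → ℂ)) (i : Fin n) (x : Fin n → ℂ) :
    yL L i x = L.symm x i := rfl

lemma yL_ne (L : (Fin n → ℂ) ≃L[ℂ] (Fin n → ℂ)) (i : Fin n) : yL L i ≠ 0 := by
  intro h
  have := congrArg (fun ℓ => ℓ (L (Pi.single i 1))) h
  simp [yL_apply] at this

lemma chain_cut (L : (Fin n → ℂ) ≃L[ℂ] (Fin n → ℂ)) (i : Fin n) :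
    RingHom.ker (pullL (cutP L (i + 1))) = RingHom.ker (pullL (cutP L i)) ⊔
      Ideal.span {linG (yL L i)} := by
  apply chain_step
  · intro x
    apply L.symm.injective
    simp only [cutP_apply]
    funext j; split_ifs <;> rfl
  · intro x
    apply L.symm.injective
    simp only [cutP_apply]
    funext j; split_ifs <;> first | rfl | omega
  · intro x hx
    apply L.symm.injective
    simp only [cutP_apply]
    funext j
    by_cases hj : j = i
    · subst hj; rw [yL_apply] at hx; simp [hx]
    · have : (j : ℕ) ≠ i := fun h => hj (Fin.ext h)
      split_ifs <;> first | rfl | omega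
  · intro x
    rw [yL_apply, cutP_apply]; simp
  · exact yL_ne L i

lemma cut_zero (L : (Fin n → ℂ) ≃L[ℂ] (Fin n → ℂ)) : RingHom.ker (pullL (cutP L 0)) = ⊥ := by
  rw [eq_bot_iff]
  intro g hg
  rw [mem_ker_pullL] at hg
  rw [Ideal.mem_bot]
  apply On.ext_rep
  filter_upwards [hg, On.rep_zero (n := n)] with x h1 h2
  rw [h2, ← h1]
  congr 1
  apply L.symm.injective
  simp [cutP_apply]

lemma yL_notMem (L : (Fin n → ℂ) ≃L[ℂ] (Fin n → ℂ)) (i : Fin n) :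
    linG (yL L i) ∉ RingHom.ker (pullL (cutP L i)) := by
  rw [mem_ker_pullL]
  intro h
  apply yL_ne L i
  apply ev_lin_zero
  filter_upwards [h, ev_comp (cutP L i) (rep_linG (yL L i))] with x h1 h2
  rw [h1, yL_apply, cutP_apply] at h2
  simpa [yL_apply] using h2.symm

lemma evH_linG (ℓ : (Fin n → ℂ) →L[ℂ] ℂ) : evH n (linG ℓ) = 0 := by
  rw [linG, evH_mk, map_zero]

/-- Hadamard: the maximal ideal is generated by the coordinates. -/
lemma max_le_span (g : On n) (hg : evH n g = 0) :
    g ∈ Ideal.span (Set.range fun i : Fin n => (coordG i : On n)) := by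
  have key : ∀ k ≤ n, RingHom.ker (pullL (cutP (ContinuousLinearEquiv.refl ℂ (Fin n → ℂ)) k)) ≤
      Ideal.span (Set.range fun i : Fin n => (coordG i : On n)) := by
    intro k
    induction k with
    | zero => intro _; rw [cut_zero]; exact bot_le
    | succ k ih =>
      intro hk
      have := chain_cut (ContinuousLinearEquiv.refl ℂ (Fin n → ℂ)) ⟨k, hk⟩
      simp only at this
      rw [this, sup_le_iff]
      refine ⟨ih (by omega), ?_⟩
      rw [Ideal.span_le, Set.singleton_subset_iff]
      exact Ideal.subset_span ⟨⟨k, hk⟩, rfl⟩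
  apply key n le_rfl
  rw [mem_ker_pullL]
  refine Filter.Eventually.of_forall fun x => ?_
  have : cutP (ContinuousLinearEquiv.refl ℂ (Fin n → ℂ)) n x = 0 := by
    apply (ContinuousLinearEquiv.refl ℂ (Fin n → ℂ)).symm.injective
    rw [cutP_apply]; funext j; simp
  rw [this]; exact hg
end OnDom
end

noncomputable section
section Fin1
variable {n : ℕ}

lemma coordG_mem_max (i : Fin n) : (coordG i : On n) ∈ IsLocalRing.maximalIdeal (On n) := by
  rw [On.mem_max, ← linG_coord, evH_linG]

lemma linG_ne (ℓ : (Fin n → ℂ) →L[ℂ] ℂ) (h : ℓ ≠ 0) : linG ℓ ≠ 0 := by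
  intro h0
  apply h
  apply ev_lin_zero
  filter_upwards [rep_linG ℓ, On.rep_zero (n := n)] with x h1 h2
  rw [← h1, h0, h2]

lemma coordG_ne (i : Fin n) : (coordG i : On n) ≠ 0 := by
  rw [← linG_coord]
  apply linG_ne
  intro h
  have := congrArg (fun ℓ => ℓ (Pi.single i 1)) h
  simp at this

lemma harc_one (γ : On n →ₐ[ℂ] PowerSeries ℂ) (g : On n) :
    PowerSeries.derivative ℂ (γ g) =
      ∑ i, γ (pd i g) * PowerSeries.derivative ℂ (γ (coordG i)) := by
  set D : On n → PowerSeries ℂ := fun g => PowerSeries.derivative ℂ (γ g) -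
      ∑ i, γ (pd i g) * PowerSeries.derivative ℂ (γ (coordG i)) with hD
  have hadd : ∀ a b, D (a + b) = D a + D b := by
    intro a b
    simp only [hD, map_add, pd_add, add_mul, Finset.sum_add_distrib]; ring
  have hmul : ∀ a b, D (a * b) = γ a * D b + γ b * D a := by
    intro a b
    simp only [hD, map_add, map_mul, pd_mul, add_mul, Finset.sum_add_distrib, Derivation.leibniz,
      smul_eq_mul, mul_sub, Finset.mul_sum, mul_assoc]; ring
  have hc : ∀ c, D (algebraMap ℂ (On n) c) = 0 := by
    intro c
    simp only [hD, pd_algebraMap, map_zero, zero_mul, Finset.sum_const_zero, sub_zero,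
      AlgHom.commutes, Derivation.map_algebraMap]
  have hx : ∀ j, D (coordG j) = 0 := by
    intro j
    simp only [hD, pd_coord]
    simp [apply_ite γ]
  have key : ∀ j : ℕ, ∀ g, (PowerSeries.X : PowerSeries ℂ) ^ j ∣ D g := by
    intro j
    induction j with
    | zero => intro g; simp
    | succ j ih =>
      intro g
      have h1 := max_le_span (g - algebraMap ℂ (On n) (evH n g)) (by
        rw [map_sub, evH_algebraMap, sub_self])
      have h2 : ∀ g' ∈ Ideal.span (Set.range fun i : Fin n => (coordG i : On n)),
          (PowerSeries.X : PowerSeries ℂ) ^ (j + 1) ∣ D g' := by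
        intro g' hg'
        refine Submodule.span_induction ?_ ?_ ?_ ?_ hg'
        · rintro _ ⟨i, rfl⟩; rw [hx]; exact dvd_zero _
        · have := hc 0
          rw [map_zero] at this; rw [this]; exact dvd_zero _
        · intro a b _ _ ha hb
          rw [hadd]; exact dvd_add ha hb
        · intro a b hb hb2
          rw [smul_eq_mul, hmul]
          refine dvd_add (hb2.mul_left _) ?_
          rw [pow_succ']
          refine mul_dvd_mul (arc_X_dvd γ b ?_) (ih a)
          have : Ideal.span (Set.range fun i : Fin n => (coordG i : On n)) ≤
              IsLocalRing.maximalIdeal (On n) := by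
            rw [Ideal.span_le]; rintro _ ⟨i, rfl⟩; exact coordG_mem_max i
          exact this hb
      have h3 := h2 _ h1
      have h4 : D g = D (g - algebraMap ℂ (On n) (evH n g)) := by
        conv_lhs => rw [show g = (g - algebraMap ℂ (On n) (evH n g)) +
          algebraMap ℂ (On n) (evH n g) by ring]
        rw [hadd, hc, add_zero]
      rwa [h4]
  have h0 : D g = 0 := by
    ext m
    exact PowerSeries.X_pow_dvd_iff.1 (key (m + 1) g) m (by omega)
  exact sub_eq_zero.1 h0

lemma not_ev_zero (f : On n) (hf : f ≠ 0) : ¬ ∀ᶠ x in 𝓝 (0 : Fin n → ℂ), On.rep f x = 0 := by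
  intro h
  apply hf
  apply On.ext_rep
  filter_upwards [h, On.rep_zero (n := n)] with x h1 h2
  rw [h1, h2]

lemma ne_zero_of_jac (i : Fin n) (f : On n) (hf : FiniteDimensional ℂ (On n ⧸ Jac n f)) :
    f ≠ 0 := by
  rintro rfl
  obtain ⟨k, hk⟩ := pow_mem_of_fin _ hf _ (coordG_mem_max i)
  have : Jac n (0 : On n) = ⊥ := by
    rw [Jac, Ideal.span_eq_bot]
    rintro _ ⟨j, rfl⟩
    have := pd_algebraMap j 0
    rwa [map_zero] at this
  rw [this, Ideal.mem_bot] at hk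
  exact coordG_ne i (IsReduced.eq_zero _ ⟨k, hk⟩)
end Fin1
end

noncomputable section
section Fin2

lemma hNZ_On {m : ℕ} (f : On (m + 2)) (v w : Fin (m + 2) → On (m + 2)) (hf0 : f ≠ 0)
    (hfm : evH _ f = 0)
    (hfin : FiniteDimensional ℂ (On (m + 2) ⧸ (Jm v w ⊔ Ideal.span {f})))
    (δ : Fin (m + 2) → On (m + 2)) (a b : On (m + 2)) (ha : f * a = ∑ i, δ i * v i)
    (hb : f * b = ∑ i, δ i * w i) :
    ∃ ε : Fin (m + 2) → On (m + 2), a = ∑ i, ε i * v i ∧ b = ∑ i, ε i * w i := by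
  obtain ⟨c, hc⟩ := exists_dir (On.rep f) (On.rep_analyticAt f) (not_ev_zero f hf0)
  have hc0 : c ≠ 0 := by
    rintro rfl
    obtain ⟨ζ, hζ⟩ := hc.exists
    rw [smul_zero] at hζ
    exact hζ hfm
  have he : (Pi.single (Fin.last (m + 1)) 1 : Fin (m + 2) → ℂ) ≠ 0 := by simp
  obtain ⟨L, hL⟩ := SeparatingDual.exists_continuousLinearEquiv_apply_eq (R := ℂ) he hc0
  refine NZ_lemma v w f (fun g hg => (mul_eq_zero.1 hg).resolve_left hf0) m ?_ le_rfl δ a b ha hb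
  refine Dp_of_primes _ f (m + 1) (fun i => RingHom.ker (pullL (cutP L i)))
    (fun i => linG (yL L (Fin.ofNat (m + 2) i))) (cut_zero L) ?_ ?_ ?_ ?_ ?_
  · intro i hi
    have := chain_cut L (Fin.ofNat (m + 2) i)
    have e : ((Fin.ofNat (m + 2) i : Fin (m + 2)) : ℕ) = i := by
      simp [Fin.ofNat]; omega
    rw [e] at this
    exact this
  · intro i _
    exact RingHom.ker_isPrime _
  · intro i hi
    have := yL_notMem L (Fin.ofNat (m + 2) i)
    have e : ((Fin.ofNat (m + 2) i : Fin (m + 2)) : ℕ) = i := by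
      simp [Fin.ofNat]; omega
    rw [e] at this
    exact this
  · show f ∉ RingHom.ker (pullL (cutP L (m + 1)))
    rw [mem_ker_pullL]
    intro h
    have ht : Tendsto (fun ζ : ℂ => ζ • c) (𝓝[≠] 0) (𝓝 0) := by
      have : Continuous (fun ζ : ℂ => ζ • c) := by fun_prop
      have h2 := this.tendsto 0
      rw [zero_smul] at h2
      exact h2.mono_left nhdsWithin_le_nhds
    obtain ⟨ζ, h1, h2⟩ := (hc.and (ht.eventually h)).exists
    apply h1
    rw [← h2]
    congr 1
    apply L.symm.injective
    rw [cutP_apply, ← hL, map_smul, L.symm_apply_apply]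
    funext j
    by_cases hj : (j : ℕ) < m + 1
    · have : j ≠ Fin.last (m + 1) := by rintro rfl; simp at hj
      simp [hj, this]
    · simp [hj]
  · intro i _
    apply pow_mem_of_fin _ hfin
    rw [On.mem_max, evH_linG]

lemma fderiv_ne_of_jac {n : ℕ} (h : On n) (hJ : FiniteDimensional ℂ (On n ⧸ Jac n h)) :
    ∀ᶠ x in 𝓝 (0 : Fin n → ℂ), x ≠ 0 → fderiv ℂ (On.rep h) x ≠ 0 := by
  have h1 : ∀ i : Fin n, ∀ᶠ x in 𝓝 (0 : Fin n → ℂ), fderiv ℂ (On.rep h) x = 0 → x i = 0 := by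
    intro i
    obtain ⟨k, hk⟩ := pow_mem_of_fin _ hJ _ (coordG_mem_max i)
    have h2 : ∀ g ∈ Jac n h, ∀ᶠ x in 𝓝 (0 : Fin n → ℂ),
        fderiv ℂ (On.rep h) x = 0 → On.rep g x = 0 := by
      intro g hg
      refine Submodule.span_induction ?_ ?_ ?_ ?_ hg
      · rintro _ ⟨j, rfl⟩
        filter_upwards [On.rep_pd j h] with x hx h0
        rw [hx, h0]; rfl
      · filter_upwards [On.rep_zero (n := n)] with x hx _ using hx
      · intro a b _ _ ha hb
        filter_upwards [On.rep_add a b, ha, hb] with x hx h1 h2 h0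
        rw [hx, h1 h0, h2 h0, add_zero]
      · intro a b _ hb
        filter_upwards [On.rep_mul a b, hb] with x hx h1 h0
        rw [smul_eq_mul, hx, h1 h0, mul_zero]
    have h3 : ∀ k : ℕ, On.rep ((coordG i : On n) ^ k) =ᶠ[𝓝 0] fun x => x i ^ k := by
      intro k
      induction k with
      | zero =>
        filter_upwards [On.rep_one (n := n)] with x hx
        rw [pow_zero, pow_zero, hx]
      | succ k ih =>
        filter_upwards [ih, On.rep_mul ((coordG i : On n) ^ k) (coordG i),
          rep_linG (n := n) (ContinuousLinearMap.proj i)] with x h1 h2 h3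
        rw [pow_succ, h2, h1, pow_succ]
        rw [linG_coord] at h3
        rw [h3]; rfl
    filter_upwards [h2 _ hk, h3 k] with x h4 h5 h6
    have := h4 h6
    rw [h5] at this
    exact eq_zero_of_pow_eq_zero this
  filter_upwards [Filter.eventually_all.2 h1] with x hx hne h0
  exact hne (funext fun i => hx i h0)

lemma dense_line {n : ℕ} (hn : 2 ≤ n) (c : Fin n → ℂ) :
    Dense {x : Fin n → ℂ | ∀ ζ : ℂ, x + ζ • c ≠ 0} := by
  have h1 : interior ((Submodule.span ℂ {c} : Submodule ℂ (Fin n → ℂ)) : Set (Fin n → ℂ)) = ∅ := by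
    by_contra h
    have := Submodule.eq_top_of_nonempty_interior' _ (Set.nonempty_iff_ne_empty.2 h)
    have h2 := finrank_span_le_card (R := ℂ) ({c} : Set (Fin n → ℂ))
    rw [this, finrank_top] at h2
    simp at h2
    omega
  rw [interior_eq_empty_iff_dense_compl] at h1
  refine h1.mono ?_
  intro x hx ζ h0
  apply hx
  rw [SetLike.mem_coe, Submodule.mem_span_singleton]
  refine ⟨-ζ, ?_⟩
  rw [neg_smul]
  exact (eq_neg_of_add_eq_zero_left h0).symm

lemma IX_eq {n : ℕ} (hn : 2 ≤ n) (H : (Fin n → ℂ) → ℂ) (hH : AnalyticAt ℂ H 0)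
    (hJ : FiniteDimensional ℂ (On n ⧸ Jac n (mkOn H hH))) :
    IX n (H ⁻¹' {0}) = Ideal.span {mkOn H hH} := by
  set h := mkOn H hH with hh
  have hrep : On.rep h =ᶠ[𝓝 0] H := On.rep_mk H hH
  ext g
  rw [mem_IX]
  constructor
  · intro hg
    obtain ⟨c, hc⟩ := exists_dir (On.rep h) (On.rep_analyticAt h)
      (not_ev_zero h (ne_zero_of_jac ⟨0, by omega⟩ h hJ))
    obtain ⟨q, hq, hqe⟩ := stage2 (On.rep g) (On.rep h) c (On.rep_analyticAt g)
      (On.rep_analyticAt h) hc (dense_line hn c)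
      ((fderiv_ne_of_jac h hJ).mono fun x hx h1 _ => hx h1) (by
        filter_upwards [hg, hrep] with x h1 h2 h3
        apply h1
        show H x = 0
        rw [← h2, h3])
    rw [Ideal.mem_span_singleton']
    refine ⟨mkOn q hq, ?_⟩
    apply On.ext_rep
    filter_upwards [On.rep_mul (mkOn q hq) h, On.rep_mk q hq, hqe] with x h1 h2 h4
    rw [h1, h2, h4]
  · rw [Ideal.mem_span_singleton']
    rintro ⟨a, rfl⟩
    filter_upwards [On.rep_mul a h, hrep] with x h1 h2 h3
    have h3' : H x = 0 := h3
    rw [h1, h2, h3', mul_zero]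

lemma mem_BR {n : ℕ} (X : Set (Fin n → ℂ)) (h f : On n) (hX : IX n X = Ideal.span {h}) (a : On n) :
    a ∈ BRIdeal n X f ↔ ∃ δ : Fin n → On n, ∑ i, δ i * pd i f = a ∧
      ∑ i, δ i * pd i h ∈ Ideal.span {h} := by
  have hT : ∀ δ : Fin n → On n, δ ∈ ThetaX n X ↔ ∑ i, δ i * pd i h ∈ Ideal.span {h} := by
    intro δ
    constructor
    · intro hδ
      have := hδ h (by rw [hX]; exact Ideal.mem_span_singleton_self h)
      rwa [hX] at this
    · intro hδ g hg
      rw [hX] at hg ⊢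
      obtain ⟨b, rfl⟩ := Ideal.mem_span_singleton'.1 hg
      rw [applyVF_mul]
      exact Ideal.add_mem _ (Ideal.mul_mem_left _ _ hδ)
        (Ideal.mul_mem_right _ _ (Ideal.mem_span_singleton_self h))
  constructor
  · rintro ⟨δ, h1, h2⟩
    exact ⟨δ, h2, (hT δ).1 h1⟩
  · rintro ⟨δ, h1, h2⟩
    exact ⟨δ, (hT δ).2 h2, h1⟩

/-- dimension zero -/
lemma low0 (X : Set (Fin 0 → ℂ)) (f : On 0) (hf : evH 0 f = 0) : f ∈ BRIdeal 0 X f := by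
  have : f = 0 := by
    apply On.ext_rep
    filter_upwards [On.rep_zero (n := 0)] with x hx
    rw [hx, Subsingleton.elim x 0]
    exact hf
  have h0 : (0 : On 0) ∈ BRIdeal 0 X f := Ideal.zero_mem _
  rwa [← this] at h0

/-- dimension one -/
lemma low1 (H : (Fin 1 → ℂ) → ℂ) (hH : AnalyticAt ℂ H 0) (hH0 : H 0 = 0)
    (hJh : FiniteDimensional ℂ (On 1 ⧸ Jac 1 (mkOn H hH)))
    (f : On 1) (hf : evH 1 f = 0) (hJ : FiniteDimensional ℂ (On 1 ⧸ Jac 1 f)) :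
    f ∈ BRIdeal 1 (H ⁻¹' {0}) f := by
  set x : On 1 := coordG 0 with hx
  have hmax : ∀ g : On 1, evH 1 g = 0 → x ∣ g := by
    intro g hg
    have := max_le_span g hg
    rw [show (Set.range fun i : Fin 1 => (coordG i : On 1)) = {x} by
      rw [Set.range_unique]; rfl] at this
    exact Ideal.mem_span_singleton.1 this
  have hx0 : evH 1 x = 0 := (On.mem_max _).1 (coordG_mem_max 0)
  have hdvd : ∀ g : On 1, x ∣ g ↔ evH 1 g = 0 := by
    intro g
    refine ⟨?_, hmax g⟩
    rintro ⟨b, rfl⟩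
    rw [map_mul, hx0, zero_mul]
  have hxne : x ≠ 0 := coordG_ne 0
  have hxp : Prime x := by
    refine ⟨hxne, ?_, ?_⟩
    · rw [On.isUnit_iff, not_not]; exact hx0
    · intro a b
      rw [hdvd, hdvd, hdvd, map_mul, mul_eq_zero]; exact id
  obtain ⟨N, hN⟩ := pow_mem_of_fin _ hJ _ (coordG_mem_max (0 : Fin 1))
  rw [Jac, show (Set.range fun i : Fin 1 => pd i f) = {pd 0 f} by
      rw [Set.range_unique]; rfl, Ideal.mem_span_singleton] at hN
  obtain ⟨k, -, hk⟩ := (dvd_prime_pow hxp N).1 hN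
  have key : ∀ j ≤ k, x ^ (j + 1) ∣ f := by
    intro j
    induction j with
    | zero => intro _; simpa using hmax f hf
    | succ j ih =>
      intro hj
      obtain ⟨g, hg⟩ := ih (by omega)
      have h1 : x ^ (j + 1) ∣ pd 0 f := (pow_dvd_pow x hj).trans hk.symm.dvd
      have h2 : ∀ m : ℕ, pd 0 (x ^ (m + 1)) = algebraMap ℂ (On 1) (m + 1) * x ^ m := by
        intro m
        induction m with
        | zero => simp [hx, pd_coord]
        | succ m ihm =>
          rw [pow_succ, pd_mul, ihm, hx, pd_coord]
          simp only [if_true, map_add, map_natCast, map_one]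
          push_cast
          ring
      rw [hg, pd_mul, h2] at h1
      have h3 : x ^ (j + 1) ∣ g * (algebraMap ℂ (On 1) (j + 1) * x ^ j) := by
        have := dvd_sub h1 (dvd_mul_right (x ^ (j + 1)) (pd 0 g))
        simpa using this
      rw [show g * (algebraMap ℂ (On 1) (j + 1) * x ^ j) =
        x ^ j * (g * algebraMap ℂ (On 1) (j + 1)) by ring, pow_succ,
        mul_dvd_mul_iff_left (pow_ne_zero _ hxne), hdvd, map_mul, evH_algebraMap] at h3
      have h4 : evH 1 g = 0 := (mul_eq_zero.1 h3).resolve_right (Nat.cast_add_one_ne_zero j)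
      obtain ⟨b, rfl⟩ := hmax g h4
      exact ⟨b, by rw [hg]; ring⟩
  obtain ⟨c, hc⟩ := key k le_rfl
  obtain ⟨w, hw⟩ := hk.dvd
  refine ⟨fun _ => x * (c * w), ?_, ?_⟩
  · intro g _
    rw [mem_IX]
    set h := mkOn H hH
    have hrep : On.rep h =ᶠ[𝓝 0] H := On.rep_mk H hH
    obtain ⟨d, hd⟩ := exists_dir H hH (fun h0 => not_ev_zero h (ne_zero_of_jac 0 h hJh) (by
      filter_upwards [hrep, h0] with y h1 h2
      rw [h1, h2]))
    have hd0 : d 0 ≠ 0 := by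
      intro h0
      have : d = 0 := by funext i; rw [Subsingleton.elim i 0, h0]; rfl
      obtain ⟨ζ, hζ⟩ := hd.exists
      rw [this, smul_zero] at hζ
      exact hζ hH0
    rw [eventually_nhdsWithin_iff] at hd
    have ht : Tendsto (fun y : Fin 1 → ℂ => y 0 / d 0) (𝓝 0) (𝓝 0) := by
      have : Continuous (fun y : Fin 1 → ℂ => y 0 / d 0) := by fun_prop
      simpa using this.tendsto 0
    filter_upwards [ht.eventually hd] with y hy hyH
    have e : (y 0 / d 0) • d = y := by
      funext i
      rw [Subsingleton.elim i 0]
      simp [hd0]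
    rw [e] at hy
    have hy0 : y 0 / d 0 = 0 := by
      by_contra hne
      exact hy hne hyH
    have : y = 0 := by rw [← e, hy0, zero_smul]
    rw [this]
    show evH 1 _ = 0
    simp [applyVF, hx0]
  · show applyVF _ f = f
    simp only [applyVF, Finset.univ_unique, Finset.sum_singleton]
    show x * (c * w) * pd 0 f = f
    conv_rhs => rw [hc, pow_succ, hw]
    ring
end Fin2
end

noncomputable section
section Final
lemma low_sub {n : ℕ} (X : Set (Fin n → ℂ)) (f : On n) (hf : f ∈ BRIdeal n X f) :
    (muX n X f : ℤ) - tauX n X f = 0 := by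
  have : BRIdeal n X f + Ideal.span {f} = BRIdeal n X f := by
    rw [Submodule.add_eq_sup, sup_eq_left, Ideal.span_le, Set.singleton_subset_iff]
    exact hf
  rw [muX, tauX, this, sub_self]
end Final
theorem main_final (n : ℕ)
    (F : (Fin n → ℂ) → ℂ) (hF : AnalyticAt ℂ F 0) (hF0 : F 0 = 0)
    (H : (Fin n → ℂ) → ℂ) (hH : AnalyticAt ℂ H 0) (hH0 : H 0 = 0)
    (hFiso : FiniteDimensional ℂ (On n ⧸ Jac n (mkOn F hF)))
    (hHiso : FiniteDimensional ℂ (On n ⧸ Jac n (mkOn H hH)))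
    (hfinX : FiniteDimensional ℂ (On n ⧸ BRIdeal n (H ⁻¹' {0}) (mkOn F hF)))
    (hfinY : FiniteDimensional ℂ (On n ⧸ BRIdeal n (F ⁻¹' {0}) (mkOn H hH))) :
    (muX n (H ⁻¹' {0}) (mkOn F hF) : ℤ) - tauX n (H ⁻¹' {0}) (mkOn F hF) =
      (muX n (F ⁻¹' {0}) (mkOn H hH) : ℤ) - tauX n (F ⁻¹' {0}) (mkOn H hH) := by
  have hf0 : evH n (mkOn F hF) = 0 := by rw [evH_mk, hF0]
  have hh0 : evH n (mkOn H hH) = 0 := by rw [evH_mk, hH0]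
  match n with
  | 0 => rw [low_sub _ _ (low0 _ _ hf0), low_sub _ _ (low0 _ _ hh0)]
  | 1 => rw [low_sub _ _ (low1 H hH hH0 hHiso _ hf0 hFiso),
            low_sub _ _ (low1 F hF hF0 hFiso _ hh0 hHiso)]
  | m + 2 =>
    exact alg_main On.hres (fun i => pd i (mkOn F hF)) (fun i => pd i (mkOn H hH)) (mkOn F hF)
      (mkOn H hH) ((On.mem_max _).2 hf0) ((On.mem_max _).2 hh0) _ _
      (mem_BR _ _ _ (IX_eq (by omega) H hH hHiso)) (mem_BR _ _ _ (IX_eq (by omega) F hF hFiso))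
      hfinX hfinY hFiso hHiso
      (fun hfin => hNZ_On _ _ _ (ne_zero_of_jac 0 _ hFiso) hf0 hfin)
      (fun γ => ⟨fun i => PowerSeries.derivative ℂ (γ (coordG i)), harc_one γ _, harc_one γ _⟩)
end

/-- Formula (10) of Proposition 2.5: `μ_X(f) − τ_X(f) = μ_Y(h) − τ_Y(h)` for a pair of
isolated hypersurface singularities `X = h⁻¹(0)`, `Y = f⁻¹(0)`. -/
theorem muX_sub_tauX_symm (n : ℕ)
    (F : (Fin n → ℂ) → ℂ) (hF : AnalyticAt ℂ F 0) (hF0 : F 0 = 0)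
    (H : (Fin n → ℂ) → ℂ) (hH : AnalyticAt ℂ H 0) (hH0 : H 0 = 0)
    (hFsing : mkOn F hF ∈ (mId n) ^ 2) (hHsing : mkOn H hH ∈ (mId n) ^ 2)
    (hFiso : FiniteDimensional ℂ (On n ⧸ Jac n (mkOn F hF)))
    (hHiso : FiniteDimensional ℂ (On n ⧸ Jac n (mkOn H hH)))
    (hfinX : FiniteDimensional ℂ (On n ⧸ BRIdeal n (H ⁻¹' {0}) (mkOn F hF)))
    (hfinY : FiniteDimensional ℂ (On n ⧸ BRIdeal n (F ⁻¹' {0}) (mkOn H hH))) :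
    (muX n (H ⁻¹' {0}) (mkOn F hF) : ℤ) - tauX n (H ⁻¹' {0}) (mkOn F hF) =
      (muX n (F ⁻¹' {0}) (mkOn H hH) : ℤ) - tauX n (F ⁻¹' {0}) (mkOn H hH) := by
  exact main_final n F hF hF0 H hH hH0 hFiso hHiso hfinX hfinY

end
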